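/- For every integer N ≥ 0, every pair of reals 1 < a < b, and every tuple (c_0, …, c_{N−1}) of positive integers, the limit as R → ∞ of μ1{ α ∈ (0,1) irrational : a < q_{n_R(α)}(α)/R < b and a_{n_R(α)−k}(α) = c_k for all 0 ≤ k < N } exists; moreover, there is a probability measure P_N on (1,∞) × ℕ₊^N such that P_N((a,b) × {(c_0,…,c_{N−1})}) equals this limit for all such a, b, c. -/

import Mathlib

open MeasureTheory Filter Set Topology

noncomputable section

/-- The Gauss map `x ↦ {1/x}`. -/
def gaussMap (x : ℝ) : ℝ := Int.fract (1 / x)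

/-- The `n`-th partial quotient (1-indexed) of the continued fraction expansion of `α`:
`pq α n = ⌊1 / 𝒢^{n-1} α⌋`. -/
def pq (α : ℝ) (n : ℕ) : ℕ := ⌊1 / gaussMap^[n - 1] α⌋₊

/-- Denominators of the convergents attached to a (1-indexed) sequence of partial quotients:
`q 0 = 1`, `q 1 = b 1`, `q (n+2) = b (n+2) * q (n+1) + q n`. -/
def qden (b : ℕ → ℕ) : ℕ → ℕ
  | 0 => 1
  | 1 => b 1
  | n + 2 => b (n + 2) * qden b (n + 1) + qden b n

/-- Numerators of the convergents attached to a (1-indexed) sequence of partial quotients: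
`p 0 = 0`, `p 1 = 1`, `p (n+2) = b (n+2) * p (n+1) + p n`. -/
def pnum (b : ℕ → ℕ) : ℕ → ℕ
  | 0 => 0
  | 1 => 1
  | n + 2 => b (n + 2) * pnum b (n + 1) + pnum b n

/-- `n_R(α)`: the first index `n` with `q_n(α) > R`. -/
def nIndex (α : ℝ) (R : ℝ) : ℕ := sInf {n : ℕ | R < (qden (pq α) n : ℝ)}

/-- The Gauss measure on `(0,1)`, with density `1 / (ln 2 · (1 + x))`. -/
def gaussMeasure : Measure ℝ :=
  (volume.restrict (Ioo (0 : ℝ) 1)).withDensity fun x =>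
    ENNReal.ofReal (1 / (Real.log 2 * (1 + x)))

/-- The domain `D = ((0,1) ∖ ℚ) × ((0,1) ∖ ℚ)` of the natural extension of the Gauss map. -/
def Dset : Set (ℝ × ℝ) :=
  {p | p.1 ∈ Ioo (0 : ℝ) 1 ∧ Irrational p.1 ∧ p.2 ∈ Ioo (0 : ℝ) 1 ∧ Irrational p.2}

/-- The invariant measure `μ₂` on `D`, with density `1 / (ln 2 · (1 + x y)²)`. -/
def mu2 : Measure (ℝ × ℝ) :=
  (volume.restrict Dset).withDensity fun p =>
    ENNReal.ofReal (1 / (Real.log 2 * (1 + p.1 * p.2) ^ 2))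

/-- The roof function `φ(x, y) = ln (⌊1/y⌋ + x)`. -/
def roof (p : ℝ × ℝ) : ℝ := Real.log ((⌊1 / p.2⌋ : ℝ) + p.1)

/-- The natural extension of the Gauss map,
`Ĝ(x, y) = (1 / (⌊1/y⌋ + x), 1/y − ⌊1/y⌋)`. -/
def GhatMap (p : ℝ × ℝ) : ℝ × ℝ := (1 / ((⌊1 / p.2⌋ : ℝ) + p.1), Int.fract (1 / p.2))

/-- Birkhoff sums `S_r φ(p) = ∑_{i<r} φ(Ĝ^i p)` of the roof function under `Ĝ`. -/
def birk (p : ℝ × ℝ) (r : ℕ) : ℝ := ∑ i ∈ Finset.range r, roof (GhatMap^[i] p)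

/-- `r(p, T)`: the first `r` with `S_r φ(p) > T`. -/
def rTime (p : ℝ × ℝ) (T : ℝ) : ℕ := sInf {r : ℕ | T < birk p r}

/-- Value of a finite continued fraction `[b₁, b₂, …, bₘ] = 1/(b₁ + 1/(b₂ + ⋯ + 1/bₘ))`,
entries given as a list. -/
def cfList : List ℝ → ℝ
  | [] => 0
  | b :: t => 1 / (b + cfList t)

/-- The `m`-th truncation `[b 1, b 2, …, b m]` of an infinite continued fraction. -/
def cfTrunc (b : ℕ → ℝ) (m : ℕ) : ℝ := cfList ((List.range m).map fun i => b (i + 1))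

/-- Value of the infinite continued fraction `[b 1, b 2, …]`, i.e. the limit of its finite
truncations. -/
def cfVal (b : ℕ → ℝ) : ℝ := limUnder atTop fun m => cfTrunc b m

/-- The finite continued fraction on the reversed word,
`cfRev b k = [b k; b (k-1), …, b 1] = b k + 1/(b (k-1) + ⋯ + 1/(b 1))`. -/
def cfRev (b : ℕ → ℝ) (k : ℕ) : ℝ :=
  b k + cfList ((List.range (k - 1)).map fun i => b (k - 1 - i))

/-- For a bi-infinite sequence `a : ℤ → ℕ` of partial quotients,
`fn a n = ln q_n − ∑_{k=1}^n ln [a_k; a_{k-1}, a_{k-2}, …]`. -/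
def fn (a : ℤ → ℕ) (n : ℕ) : ℝ :=
  Real.log (qden (fun k => a (k : ℤ)) n : ℝ) -
    ∑ k ∈ Finset.Icc 1 n,
      Real.log ((a (k : ℤ) : ℝ) + cfVal fun j => (a ((k : ℤ) - (j : ℤ)) : ℝ))

/-- The bi-sided cylinder of length `n` in `D` prescribing the sequence coordinates
`a_k = b k` for `−n ≤ k ≤ n` (where `a_k`, `k ≥ 1`, are the partial quotients of the second
coordinate and `a_{−j}`, `j ≥ 0`, are the partial quotients of the first coordinate). -/
def cylinder (n : ℕ) (b : ℤ → ℕ) : Set (ℝ × ℝ) :=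
  {p ∈ Dset | (∀ k : ℕ, 1 ≤ k → k ≤ n → pq p.2 k = b (k : ℤ)) ∧
    ∀ j : ℕ, j ≤ n → pq p.1 (j + 1) = b (-(j : ℤ))}

/-- The phase space of the special flow over `Ĝ` with roof function `φ`. -/
def DPhi : Set ((ℝ × ℝ) × ℝ) := {q | q.1 ∈ Dset ∧ 0 ≤ q.2 ∧ q.2 < roof q.1}

/-- The invariant probability measure `μ₃` of the special flow. -/
def mu3 : Measure ((ℝ × ℝ) × ℝ) :=
  (ENNReal.ofReal (∫ p, roof p ∂mu2))⁻¹ • ((mu2.prod volume).restrict DPhi)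

/-- The special flow `Φ_t` (for `t ≥ 0`) built over `Ĝ` with roof function `φ`:
`Φ_t(p, s) = (Ĝ^{r-1} p, s + t − S_{r-1} φ(p))` where `r = r(p, s + t)`. -/
def flowMap (t : ℝ) (q : (ℝ × ℝ) × ℝ) : (ℝ × ℝ) × ℝ :=
  (GhatMap^[rTime q.1 (q.2 + t) - 1] q.1,
    q.2 + t - birk q.1 (rTime q.1 (q.2 + t) - 1))

end


lemma pow4_le_two (e : ℕ) : (e + 1) ^ 4 ≤ 41 * 2 ^ e := by
  induction e using Nat.strong_induction_on with
  | _ e ih =>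
    rcases lt_or_ge e 7 with h | h
    · interval_cases e <;> norm_num
    · obtain ⟨k, rfl⟩ : ∃ k, e = k + 7 := ⟨e - 7, by omega⟩
      have h1 := ih (k + 6) (by omega)
      have h2 : (k + 7 + 1) ^ 4 ≤ 2 * (k + 6 + 1) ^ 4 := by
        ring_nf; nlinarith [sq_nonneg k, Nat.zero_le (k^3), Nat.zero_le (k^4)]
      calc (k + 7 + 1) ^ 4 ≤ 2 * (k + 6 + 1) ^ 4 := h2
        _ ≤ 2 * (41 * 2 ^ (k + 6)) := by omega
        _ = 41 * 2 ^ (k + 7) := by ring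

lemma divisor_bound (q : ℕ) (hq : q ≠ 0) : q.divisors.card ^ 4 ≤ 41 ^ 16 * q := by
  have h1 : ∀ p ∈ q.primeFactors, (q.factorization p + 1) ^ 4 ≤
      (if p < 16 then 41 else 1) * p ^ (q.factorization p) := by
    intro p hp
    have hp2 := (Nat.prime_of_mem_primeFactors hp).two_le
    split_ifs with h
    · exact (pow4_le_two _).trans (Nat.mul_le_mul_left _ (Nat.pow_le_pow_left hp2 _))
    · have : q.factorization p + 1 ≤ 2 ^ (q.factorization p) := Nat.lt_two_pow_self
      calc _ ≤ (2 ^ (q.factorization p)) ^ 4 := Nat.pow_le_pow_left this 4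
        _ = 16 ^ (q.factorization p) := by rw [← pow_mul, mul_comm, pow_mul]; norm_num
        _ ≤ _ := by rw [one_mul]; exact Nat.pow_le_pow_left (by omega) _
  rw [Nat.card_divisors hq, ← Finset.prod_pow]
  refine (Finset.prod_le_prod' h1).trans ?_
  rw [Finset.prod_mul_distrib]
  have h2 : ∏ p ∈ q.primeFactors, p ^ (q.factorization p) = q := Nat.prod_factorization_pow_eq_self hq
  rw [h2]
  refine Nat.mul_le_mul_right _ ?_
  rw [Finset.prod_ite, Finset.prod_const, Finset.prod_const, one_pow, mul_one]
  refine Nat.pow_le_pow_right (by norm_num) ?_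
  calc _ ≤ (Finset.range 16).card := Finset.card_le_card (by intro x; simp)
    _ = 16 := by simp

/-- residues having a large gcd with `q`. -/
def bigG (q : ℕ) : Finset ℕ := (Finset.range q).filter fun s => q ≤ (Nat.gcd q s) ^ 3

lemma bigG_bound (q : ℕ) (hq : q ≠ 0) : ((bigG q).card : ℝ) ^ 12 ≤ (41 ^ 16) ^ 3 * (q : ℝ) ^ 11 := by
  have h1 : bigG q ⊆ (q.divisors.filter fun d => q ≤ d ^ 3).biUnion
      fun d => (Finset.range (q / d)).image fun j => d * j := by
    intro s hs
    simp only [bigG, Finset.mem_filter, Finset.mem_range] at hs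
    simp only [Finset.mem_biUnion, Finset.mem_filter, Nat.mem_divisors, Finset.mem_image, Finset.mem_range]
    refine ⟨Nat.gcd q s, ⟨⟨Nat.gcd_dvd_left _ _, hq⟩, hs.2⟩, s / Nat.gcd q s, ?_, 
      Nat.mul_div_cancel' (Nat.gcd_dvd_right _ _)⟩
    exact Nat.div_lt_div_of_lt_of_dvd (Nat.gcd_dvd_left _ _) hs.1
  have h2 : ((bigG q).card : ℝ) ≤ (q.divisors.card : ℝ) * (q : ℝ) ^ ((2:ℝ)/3) := by
    have h3 : (bigG q).card ≤ ∑ d ∈ (q.divisors.filter fun d => q ≤ d ^ 3), q / d := by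
      refine (Finset.card_le_card h1).trans (Finset.card_biUnion_le.trans ?_)
      refine Finset.sum_le_sum fun d _ => ?_
      exact Finset.card_image_le.trans (by simp)
    have h4 : ∀ d ∈ (q.divisors.filter fun d => q ≤ d ^ 3), ((q / d : ℕ) : ℝ) ≤ (q : ℝ) ^ ((2:ℝ)/3) := by
      intro d hd
      simp only [Finset.mem_filter, Nat.mem_divisors] at hd
      have hd0 : 0 < d := Nat.pos_of_dvd_of_pos hd.1.1 (Nat.pos_of_ne_zero hq)
      have h5 : ((q / d : ℕ) : ℝ) ^ 3 ≤ (q : ℝ) ^ 2 := by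
        have : (q / d) ^ 3 ≤ q ^ 2 := by
          obtain ⟨k, hk⟩ := hd.1.1
          have hk' : q / d = k := by rw [hk]; exact Nat.mul_div_cancel_left k hd0
          rw [hk']
          have : k ≤ d ^ 2 := by
            have := hd.2
            rw [hk] at this
            have : d * k ≤ d * d ^ 2 := by nlinarith
            exact Nat.le_of_mul_le_mul_left this hd0
          calc k ^ 3 = k ^ 2 * k := by ring
            _ ≤ k ^ 2 * d ^ 2 := Nat.mul_le_mul_left _ this
            _ = q ^ 2 := by rw [hk]; ring
        exact_mod_cast this
      have h6 : (((q / d : ℕ) : ℝ) ^ 3) ^ ((1:ℝ)/3) ≤ ((q : ℝ) ^ 2) ^ ((1:ℝ)/3) := by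
        gcongr
      rw [← Real.rpow_natCast, ← Real.rpow_natCast, ← Real.rpow_mul (by positivity), ← Real.rpow_mul (by positivity)] at h6
      norm_num at h6
      exact h6
    calc ((bigG q).card : ℝ) ≤ ∑ d ∈ (q.divisors.filter fun d => q ≤ d ^ 3), ((q / d : ℕ) : ℝ) := by exact_mod_cast h3
      _ ≤ ∑ d ∈ (q.divisors.filter fun d => q ≤ d ^ 3), (q : ℝ) ^ ((2:ℝ)/3) := Finset.sum_le_sum h4
      _ ≤ _ := by
        rw [Finset.sum_const, nsmul_eq_mul]
        gcongr
        exact Finset.filter_subset _ _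
  have h7 : ((q.divisors.card : ℝ)) ^ 4 ≤ 41 ^ 16 * q := by exact_mod_cast divisor_bound q hq
  calc ((bigG q).card : ℝ) ^ 12 ≤ ((q.divisors.card : ℝ) * (q : ℝ) ^ ((2:ℝ)/3)) ^ 12 := by gcongr
    _ = (((q.divisors.card : ℝ)) ^ 4) ^ 3 * (q : ℝ) ^ 8 := by
      rw [mul_pow, ← pow_mul]
      congr 1
      rw [← Real.rpow_natCast, ← Real.rpow_mul (by positivity), ← Real.rpow_natCast]
      norm_num
    _ ≤ (41 ^ 16 * q) ^ 3 * (q : ℝ) ^ 8 := by gcongr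
    _ = _ := by ring

lemma zmod_prod_zero {q : ℕ} [NeZero q] (u v w : ZMod q) (h : u * v * w = 0) :
    u.val ∈ bigG q ∨ v.val ∈ bigG q ∨ w.val ∈ bigG q := by
  have h1 : q ∣ u.val * v.val * w.val := by
    rw [← ZMod.natCast_eq_zero_iff]
    push_cast
    simpa using h
  have h2 : q ∣ Nat.gcd q u.val * Nat.gcd q v.val * Nat.gcd q w.val := by
    have h3 := Nat.gcd_mul_right_dvd_mul_gcd q (u.val * v.val) w.val
    have h4 := Nat.gcd_mul_right_dvd_mul_gcd q (u.val) v.val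
    rw [Nat.gcd_eq_left h1] at h3
    exact h3.trans (Nat.mul_dvd_mul_right h4 _)
  have hq : 0 < q := Nat.pos_of_ne_zero (NeZero.ne q)
  have h5 := Nat.le_of_dvd (by
    have := Nat.gcd_pos_of_pos_left u.val hq
    have := Nat.gcd_pos_of_pos_left v.val hq
    have := Nat.gcd_pos_of_pos_left w.val hq
    positivity) h2
  simp only [bigG, Finset.mem_filter, Finset.mem_range, ZMod.val_lt, true_and]
  by_contra! hc
  obtain ⟨a1, a2, a3⟩ := hc
  generalize Nat.gcd q u.val = x at *
  generalize Nat.gcd q v.val = y at *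
  generalize Nat.gcd q w.val = z at *
  have : (x * y * z) ^ 3 < q ^ 3 := by
    calc (x*y*z)^3 = x^3 * y^3 * z^3 := by ring
      _ < q * q * q := by
        apply Nat.mul_lt_mul'' _ a3
        exact Nat.mul_lt_mul'' a1 a2
      _ = q ^ 3 := by ring
  have := lt_of_pow_lt_pow_left₀ 3 (by omega) this
  omega


/-- Kloosterman sums. -/
noncomputable def Klo (q : ℕ) [NeZero q] (h k : ZMod q) : ℂ :=
  ∑ x : (ZMod q)ˣ, ZMod.stdAddChar (h * (x : ZMod q) + k * ((x⁻¹ : (ZMod q)ˣ) : ZMod q))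

lemma Klo_scale (q : ℕ) [NeZero q] (h k : ZMod q) (t : (ZMod q)ˣ) :
    Klo q (h * t) (k * ((t⁻¹ : (ZMod q)ˣ) : ZMod q)) = Klo q h k := by
  unfold Klo
  refine Fintype.sum_equiv (Equiv.mulLeft t) _ _ fun x => ?_
  simp only [Equiv.coe_mulLeft, mul_inv, Units.val_mul]
  congr 1; ring

/-- quadruples in the fourth moment -/
def quad (q : ℕ) [NeZero q] : Finset ((ZMod q)ˣ × (ZMod q)ˣ × (ZMod q)ˣ × (ZMod q)ˣ) :=
  Finset.univ.filter fun p => (p.1 : ZMod q) + p.2.1 = p.2.2.1 + p.2.2.2 ∧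
    ((p.1⁻¹ : (ZMod q)ˣ) : ZMod q) + (p.2.1⁻¹ : (ZMod q)ˣ) = (p.2.2.1⁻¹ : (ZMod q)ˣ) + (p.2.2.2⁻¹ : (ZMod q)ˣ)

lemma fourth_moment (q : ℕ) [NeZero q] :
    ∑ h : ZMod q, ∑ k : ZMod q, ‖Klo q h k‖ ^ 4 = (q : ℝ) ^ 2 * (quad q).card := by
  have hprim := ZMod.isPrimitive_stdAddChar q
  have key : ∀ h k : ZMod q, ((‖Klo q h k‖ ^ 4 : ℝ) : ℂ) =
      ∑ p : (ZMod q)ˣ × (ZMod q)ˣ × (ZMod q)ˣ × (ZMod q)ˣ,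
        ZMod.stdAddChar (h * ((p.1 : ZMod q) + (p.2.1 : ZMod q) - (p.2.2.1 : ZMod q) - (p.2.2.2 : ZMod q))) *
        ZMod.stdAddChar (k * (((p.1⁻¹ : (ZMod q)ˣ) : ZMod q) + ((p.2.1⁻¹ : (ZMod q)ˣ) : ZMod q) -
          ((p.2.2.1⁻¹ : (ZMod q)ˣ) : ZMod q) - ((p.2.2.2⁻¹ : (ZMod q)ˣ) : ZMod q))) := by
    intro h k
    have h1 : ((‖Klo q h k‖ ^ 4 : ℝ) : ℂ) = Klo q h k * (Klo q h k * (star (Klo q h k) * star (Klo q h k))) := by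
      have := Complex.mul_conj' (Klo q h k)
      push_cast
      calc ((‖Klo q h k‖ : ℂ)) ^ 4 = (((‖Klo q h k‖ : ℂ)) ^ 2) * (((‖Klo q h k‖ : ℂ)) ^ 2) := by ring
        _ = _ := by rw [← this, ← starRingEnd_apply]; ring
    have h2 : star (Klo q h k) = ∑ x : (ZMod q)ˣ,
        ZMod.stdAddChar (-(h * (x : ZMod q) + k * ((x⁻¹ : (ZMod q)ˣ) : ZMod q))) := by
      unfold Klo
      rw [star_sum]
      refine Finset.sum_congr rfl fun x _ => ?_
      rw [AddChar.map_neg_eq_conj]; rfl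
    rw [h1, h2]
    unfold Klo
    simp only [Fintype.sum_prod_type]
    rw [Finset.sum_mul]
    refine Finset.sum_congr rfl fun x _ => ?_
    rw [Finset.sum_mul, Finset.mul_sum]
    refine Finset.sum_congr rfl fun y _ => ?_
    rw [Finset.sum_mul, Finset.mul_sum, Finset.mul_sum]
    refine Finset.sum_congr rfl fun z _ => ?_
    rw [Finset.mul_sum, Finset.mul_sum, Finset.mul_sum]
    refine Finset.sum_congr rfl fun w _ => ?_
    simp only [← AddChar.map_add_eq_mul]
    congr 1; ring
  have h3 : ((∑ h : ZMod q, ∑ k : ZMod q, ‖Klo q h k‖ ^ 4 : ℝ) : ℂ) = ((q : ℝ) ^ 2 * (quad q).card : ℝ) := by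
    rw [Complex.ofReal_sum]
    simp_rw [Complex.ofReal_sum, key]
    calc _ = ∑ p : (ZMod q)ˣ × (ZMod q)ˣ × (ZMod q)ˣ × (ZMod q)ˣ,
        (∑ h : ZMod q, ZMod.stdAddChar (h * ((p.1 : ZMod q) + (p.2.1 : ZMod q) - (p.2.2.1 : ZMod q) - (p.2.2.2 : ZMod q)))) *
        (∑ k : ZMod q, ZMod.stdAddChar (k * (((p.1⁻¹ : (ZMod q)ˣ) : ZMod q) + ((p.2.1⁻¹ : (ZMod q)ˣ) : ZMod q) -
          ((p.2.2.1⁻¹ : (ZMod q)ˣ) : ZMod q) - ((p.2.2.2⁻¹ : (ZMod q)ˣ) : ZMod q)))) := by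
          simp_rw [Finset.sum_mul_sum]
          rw [Finset.sum_comm]
          simp_rw [Finset.sum_comm (s := (Finset.univ : Finset (ZMod q))) (t := (Finset.univ : Finset ((ZMod q)ˣ × (ZMod q)ˣ × (ZMod q)ˣ × (ZMod q)ˣ)))]
          refine Finset.sum_congr rfl fun p _ => ?_
          rw [Finset.sum_comm]
      _ = ∑ p : (ZMod q)ˣ × (ZMod q)ˣ × (ZMod q)ˣ × (ZMod q)ˣ, if p ∈ quad q then (q : ℂ) ^ 2 else 0 := by
          refine Finset.sum_congr rfl fun p _ => ?_
          rw [AddChar.sum_mulShift _ hprim, AddChar.sum_mulShift _ hprim]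
          simp only [quad, Finset.mem_filter, Finset.mem_univ, true_and, ZMod.card, sub_sub, sub_eq_zero]
          split_ifs with a b c d e <;> simp_all <;> ring
      _ = _ := by
          rw [← Finset.sum_filter, Finset.sum_const]
          simp [mul_comm]
  exact_mod_cast h3

lemma quad_card (q : ℕ) [NeZero q] : (quad q).card ≤ q.totient * (3 * (q * (bigG q).card)) := by
  classical
  let T : Finset ((ZMod q)ˣ × ZMod q × ZMod q) := Finset.univ.filter fun p =>
    ((p.1 : ZMod q) + p.2.1) * (p.2.2 - p.1) * (p.2.1 - p.2.2) = 0
  have h1 : (quad q).card ≤ T.card := by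
    refine Finset.card_le_card_of_injOn (fun p => (p.1, (p.2.1 : ZMod q), (p.2.2.1 : ZMod q))) ?_ ?_
    · rintro ⟨x, y, z, w⟩ hp
      simp only [quad, Finset.coe_filter, Finset.mem_univ, true_and, Set.mem_ofPred_eq] at hp
      simp only [T, Finset.coe_filter, Finset.mem_univ, true_and, Set.mem_ofPred_eq]
      obtain ⟨e1, e2⟩ := hp
      have hw : (w : ZMod q) = x + y - z := by rw [e1]; ring
      have ux : (x : ZMod q) * (x⁻¹ : (ZMod q)ˣ) = 1 := by simp
      have uy : (y : ZMod q) * (y⁻¹ : (ZMod q)ˣ) = 1 := by simp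
      have uz : (z : ZMod q) * (z⁻¹ : (ZMod q)ˣ) = 1 := by simp
      have uw : (w : ZMod q) * (w⁻¹ : (ZMod q)ˣ) = 1 := by simp
      generalize ((x⁻¹ : (ZMod q)ˣ) : ZMod q) = x' at *
      generalize ((y⁻¹ : (ZMod q)ˣ) : ZMod q) = y' at *
      generalize ((z⁻¹ : (ZMod q)ˣ) : ZMod q) = z' at *
      generalize ((w⁻¹ : (ZMod q)ˣ) : ZMod q) = w' at *
      generalize (x : ZMod q) = x at *
      generalize (y : ZMod q) = y at *
      generalize (z : ZMod q) = z at *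
      generalize (w : ZMod q) = w at *
      have e3 : (x + y) * (z * w) = (z + w) * (x * y) := by
        calc (x + y) * (z * w) = (x' + y') * (x * y * z * w) := by
              linear_combination (-y * z * w) * ux + (-x * z * w) * uy
          _ = (z' + w') * (x * y * z * w) := by rw [e2]
          _ = _ := by linear_combination (x * y * w) * uz + (x * y * z) * uw
      rw [← e1] at e3
      subst hw
      linear_combination e3
    · rintro ⟨x, y, z, w⟩ hp ⟨x2, y2, z2, w2⟩ hp2 heq
      simp only [quad, Finset.coe_filter, Finset.mem_univ, true_and, Set.mem_ofPred_eq] at hp hp2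
      simp only [Prod.mk.injEq, Units.val_inj] at heq
      obtain ⟨rfl, rfl, rfl⟩ := heq
      have : (w : ZMod q) = w2 := by
        have := hp.1.symm.trans hp2.1
        exact add_left_cancel this
      rw [Units.val_inj] at this
      rw [this]
  have hB : (Finset.univ.filter fun s : ZMod q => s.val ∈ bigG q).card ≤ (bigG q).card := by
    refine Finset.card_le_card_of_injOn (fun s => s.val) ?_ ((ZMod.val_injective q).injOn)
    intro s hs; simpa using hs
  set S : Finset (ZMod q) := Finset.univ.filter fun s : ZMod q => s.val ∈ bigG q with hS
  have h2 : T ⊆ (Finset.univ : Finset (ZMod q)ˣ).biUnion fun x => 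
      (((Finset.univ ×ˢ S).image fun p : ZMod q × ZMod q => (x, p.2 - x, p.1)) ∪
      ((Finset.univ ×ˢ S).image fun p : ZMod q × ZMod q => (x, p.1, p.2 + x))) ∪
      ((Finset.univ ×ˢ S).image fun p : ZMod q × ZMod q => (x, p.2 + p.1, p.1)) := by
    rintro ⟨x, y, z⟩ hp
    simp only [T, Finset.mem_filter, Finset.mem_univ, true_and] at hp
    simp only [Finset.mem_biUnion, Finset.mem_univ, true_and, Finset.mem_union, Finset.mem_image, Finset.mem_product]
    refine ⟨x, ?_⟩
    rcases zmod_prod_zero _ _ _ hp with h | h | h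
    · exact Or.inl (Or.inl ⟨(z, x + y), by simpa [hS] using h, by simp⟩)
    · exact Or.inl (Or.inr ⟨(y, z - x), by simpa [hS] using h, by simp⟩)
    · exact Or.inr ⟨(z, y - z), by simpa [hS] using h, by simp⟩
  have h3 : (((Finset.univ : Finset (ZMod q)) ×ˢ S)).card ≤ q * (bigG q).card := by
    rw [Finset.card_product, Finset.card_univ, ZMod.card]
    exact Nat.mul_le_mul_left _ hB
  refine h1.trans ((Finset.card_le_card h2).trans (Finset.card_biUnion_le.trans ?_))
  calc _ ≤ ∑ x : (ZMod q)ˣ, 3 * (q * (bigG q).card) := by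
        refine Finset.sum_le_sum fun x _ => ?_
        refine (Finset.card_union_le _ _).trans ?_
        have a1 := Finset.card_union_le ((Finset.univ ×ˢ S).image fun p : ZMod q × ZMod q => (x, p.2 - (x : ZMod q), p.1)) ((Finset.univ ×ˢ S).image fun p : ZMod q × ZMod q => (x, p.1, p.2 + (x : ZMod q)))
        have a2 := (Finset.card_image_le (s := Finset.univ ×ˢ S) (f := fun p : ZMod q × ZMod q => (x, p.2 - (x : ZMod q), p.1))).trans h3
        have a3 := (Finset.card_image_le (s := Finset.univ ×ˢ S) (f := fun p : ZMod q × ZMod q => (x, p.1, p.2 + (x : ZMod q)))).trans h3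
        have a4 := (Finset.card_image_le (s := Finset.univ ×ˢ S) (f := fun p : ZMod q × ZMod q => (x, p.2 + p.1, p.1))).trans h3
        omega
    _ = _ := by
        rw [Finset.sum_const, smul_eq_mul, Finset.card_univ, ZMod.card_units_eq_totient]

lemma zmod_mul_fiber (q : ℕ) [NeZero q] (h : ℤ) (hh : h ≠ 0) (c : ZMod q) :
    (Finset.univ.filter fun t : ZMod q => (h : ZMod q) * t = c).card ≤ h.natAbs := by
  classical
  rcases (Finset.univ.filter fun t : ZMod q => (h : ZMod q) * t = c).eq_empty_or_nonempty with he | ⟨t0, ht0⟩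
  · rw [he]; simp
  · refine le_trans ?_ (IsAddCyclic.card_nsmul_eq_zero_le (α := ZMod q) (n := h.natAbs) (Int.natAbs_pos.mpr hh))
    refine Finset.card_le_card_of_injOn (fun t => t - t0) ?_ (sub_left_injective.injOn)
    intro t ht
    simp only [Finset.coe_filter, Finset.mem_univ, true_and, Set.mem_ofPred_eq, Finset.mem_filter] at ht ht0 ⊢
    have h0 : (h : ZMod q) * (t - t0) = 0 := by rw [mul_sub, ht, ht0, sub_self]
    rw [nsmul_eq_mul]
    rcases Int.natAbs_eq h with e | e
    · rw [e] at h0; simpa using h0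
    · rw [e] at h0; simpa using h0

lemma Klo_bound (q : ℕ) [NeZero q] (h k : ℤ) (hk : h ≠ 0 ∨ k ≠ 0) :
    ‖Klo q h k‖ ^ 4 ≤ (h.natAbs + k.natAbs : ℝ) * (3 * (q : ℝ) ^ 3 * (bigG q).card) := by
  classical
  have hq : 0 < q := Nat.pos_of_ne_zero (NeZero.ne q)
  have ht : 0 < (q.totient : ℝ) := by exact_mod_cast Nat.totient_pos.mpr hq
  let F : (ZMod q)ˣ → ZMod q × ZMod q := fun t => ((h : ZMod q) * t, (k : ZMod q) * ((t⁻¹ : (ZMod q)ˣ) : ZMod q))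
  have h1 : (q.totient : ℝ) * ‖Klo q h k‖ ^ 4 = ∑ t : (ZMod q)ˣ, ‖Klo q (F t).1 (F t).2‖ ^ 4 := by
    simp only [F, Klo_scale]
    rw [Finset.sum_const, Finset.card_univ, ZMod.card_units_eq_totient, nsmul_eq_mul]
  have hfib : ∀ p : ZMod q × ZMod q, (Finset.univ.filter fun t => F t = p).card ≤ h.natAbs + k.natAbs := by
    intro p
    rcases hk with hh | hh
    · refine le_trans ?_ ((zmod_mul_fiber q h hh p.1).trans (Nat.le_add_right _ _))
      refine Finset.card_le_card_of_injOn (fun t => (t : ZMod q)) ?_ (Units.val_injective.injOn)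
      intro t ht
      simp only [Finset.coe_filter, Finset.mem_univ, true_and, Set.mem_ofPred_eq] at ht ⊢
      rw [← ht]
    · refine le_trans ?_ ((zmod_mul_fiber q k hh p.2).trans (Nat.le_add_left _ _))
      refine Finset.card_le_card_of_injOn (fun t => ((t⁻¹ : (ZMod q)ˣ) : ZMod q)) ?_ ?_
      · intro t ht
        simp only [Finset.coe_filter, Finset.mem_univ, true_and, Set.mem_ofPred_eq] at ht ⊢
        rw [← ht]
      · exact (Units.val_injective.comp inv_injective).injOn
  have h2 : ∑ t : (ZMod q)ˣ, ‖Klo q (F t).1 (F t).2‖ ^ 4 ≤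
      (h.natAbs + k.natAbs : ℝ) * ∑ p : ZMod q × ZMod q, ‖Klo q p.1 p.2‖ ^ 4 := by
    rw [← Finset.sum_fiberwise (s := Finset.univ) (g := F), Finset.mul_sum]
    refine Finset.sum_le_sum fun p _ => ?_
    rw [Finset.sum_congr rfl (g := fun _ => ‖Klo q p.1 p.2‖ ^ 4) (by
      intro t ht; rw [(Finset.mem_filter.mp ht).2]), Finset.sum_const, nsmul_eq_mul]
    refine mul_le_mul_of_nonneg_right ?_ (by positivity)
    exact_mod_cast hfib p
  rw [Fintype.sum_prod_type, fourth_moment] at h2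
  have h3 : ((quad q).card : ℝ) ≤ q.totient * (3 * (q * (bigG q).card)) := by exact_mod_cast quad_card q
  have h4 : (q.totient : ℝ) * ‖Klo q h k‖ ^ 4 ≤ q.totient * ((h.natAbs + k.natAbs : ℝ) * (3 * (q : ℝ) ^ 3 * (bigG q).card)) := by
    rw [h1]
    refine h2.trans ?_
    calc _ ≤ (h.natAbs + k.natAbs : ℝ) * ((q : ℝ) ^ 2 * (q.totient * (3 * (q * (bigG q).card)))) := by gcongr
      _ = _ := by ring
  exact le_of_mul_le_mul_left h4 ht

lemma bigG_small (ε : ℝ) (hε : 0 < ε) : ∃ Q : ℕ, ∀ q : ℕ, Q ≤ q → ((bigG q).card : ℝ) ≤ ε * q := by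
  obtain ⟨Q, hQ⟩ := exists_nat_gt ((41 ^ 16) ^ 3 / ε ^ 12 : ℝ)
  refine ⟨Q + 1, fun q hq => ?_⟩
  have hq0 : (0:ℝ) < q := by exact_mod_cast (by omega : 0 < q)
  have hb := bigG_bound q (by omega)
  have h1 : ((41 ^ 16) ^ 3 : ℝ) ≤ ε ^ 12 * q := by
    rw [div_lt_iff₀ (by positivity)] at hQ
    have : (Q : ℝ) ≤ q := by exact_mod_cast (by omega)
    nlinarith [pow_pos hε 12]
  have h2 : ((bigG q).card : ℝ) ^ 12 ≤ (ε * q) ^ 12 := by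
    calc _ ≤ _ := hb
      _ ≤ ε ^ 12 * q * (q : ℝ) ^ 11 := by gcongr
      _ = _ := by ring
  exact le_of_pow_le_pow_left₀ (by norm_num) (by positivity) h2

lemma Klo_small (h k : ℤ) (hk : h ≠ 0 ∨ k ≠ 0) (ε : ℝ) (hε : 0 < ε) :
    ∃ Q : ℕ, ∀ q : ℕ, Q ≤ q → ∀ [NeZero q], ‖Klo q h k‖ ≤ ε * q := by
  have hpos : (0:ℝ) < (h.natAbs + k.natAbs : ℝ) := by
    have : 0 < h.natAbs + k.natAbs := by omega
    exact_mod_cast this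
  obtain ⟨Q, hQ⟩ := bigG_small (ε ^ 4 / ((h.natAbs + k.natAbs : ℝ) * 3)) (by positivity)
  refine ⟨Q, fun q hq _ => ?_⟩
  have h1 := Klo_bound q h k hk
  have h2 := hQ q hq
  refine le_of_pow_le_pow_left₀ (n := 4) (by norm_num) (by positivity) (h1.trans ?_)
  calc _ ≤ (h.natAbs + k.natAbs : ℝ) * (3 * (q : ℝ) ^ 3 * (ε ^ 4 / ((h.natAbs + k.natAbs : ℝ) * 3) * q)) := by gcongr
    _ = _ := by field_simp


lemma vol_circle : (volume : Measure UnitAddCircle).real univ = 1 := by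
  rw [Measure.real, UnitAddCircle.measure_univ]; simp

noncomputable def pt (q : ℕ) (x : ZMod q) : UnitAddCircle := ((((x.val : ℝ) / q : ℝ)) : UnitAddCircle)

lemma fourier_pt (q : ℕ) [NeZero q] (n : ℤ) (x : ZMod q) :
    (fourier n : C(UnitAddCircle, ℂ)) (pt q x) = ZMod.stdAddChar ((n : ZMod q) * x) := by
  have h1 : (n : ZMod q) * x = ((n * (x.val : ℤ) : ℤ) : ZMod q) := by
    push_cast; simp
  rw [h1, ZMod.stdAddChar_coe, pt, fourier_coe_apply]
  congr 1
  push_cast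
  ring

noncomputable def Lam (q : ℕ) [NeZero q] (f H : C(UnitAddCircle, ℂ)) : ℂ :=
  ∑ x : (ZMod q)ˣ, f (pt q x) * H (pt q ((x⁻¹ : (ZMod q)ˣ) : ZMod q))

noncomputable def Err (q : ℕ) [NeZero q] (f H : C(UnitAddCircle, ℂ)) : ℂ :=
  Lam q f H - q.totient * ((∫ t, f t) * (∫ t, H t))

def Good (f H : C(UnitAddCircle, ℂ)) : Prop :=
  ∀ ε : ℝ, 0 < ε → ∃ Q : ℕ, ∀ q : ℕ, Q ≤ q → ∀ [NeZero q], ‖Err q f H‖ ≤ ε * q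

lemma cint (f : C(UnitAddCircle, ℂ)) : Integrable (fun t => f t) :=
  f.continuous.integrable_of_hasCompactSupport (HasCompactSupport.of_compactSpace _)

lemma Err_add_left (q : ℕ) [NeZero q] (f g H : C(UnitAddCircle, ℂ)) :
    Err q (f + g) H = Err q f H + Err q g H := by
  have : ∫ t, (f + g) t = (∫ t, f t) + ∫ t, g t := integral_add (cint f) (cint g)
  unfold Err Lam
  rw [this]
  simp only [ContinuousMap.add_apply, add_mul, Finset.sum_add_distrib]
  ring

lemma Err_smul_left (q : ℕ) [NeZero q] (c : ℂ) (f H : C(UnitAddCircle, ℂ)) :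
    Err q (c • f) H = c * Err q f H := by
  have : ∫ t, (c • f) t = c * (∫ t, f t) := by
    simp only [ContinuousMap.smul_apply, smul_eq_mul]; exact integral_const_mul _ _
  unfold Err Lam
  rw [this]
  simp only [ContinuousMap.smul_apply, smul_eq_mul, mul_sub, Finset.mul_sum, mul_assoc]
  ring

lemma Err_symm (q : ℕ) [NeZero q] (f H : C(UnitAddCircle, ℂ)) : Err q f H = Err q H f := by
  unfold Err
  congr 1
  · unfold Lam
    refine Fintype.sum_equiv (Equiv.inv _) _ _ fun x => ?_
    simp [mul_comm]
  · ring

lemma Err_norm (q : ℕ) [NeZero q] (f H : C(UnitAddCircle, ℂ)) : ‖Err q f H‖ ≤ 2 * (‖f‖ * ‖H‖) * q := by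
  have hq : (q.totient : ℝ) ≤ q := by exact_mod_cast Nat.totient_le q
  have h1 : ‖Lam q f H‖ ≤ q.totient * (‖f‖ * ‖H‖) := by
    unfold Lam
    refine (norm_sum_le_of_le (f := fun _ => _) (n := fun _ => ‖f‖ * ‖H‖) _ fun x _ => ?_).trans ?_
    · rw [norm_mul]
      exact mul_le_mul (f.norm_coe_le_norm _) (H.norm_coe_le_norm _) (norm_nonneg _) (norm_nonneg _)
    · rw [Finset.sum_const, Finset.card_univ, ZMod.card_units_eq_totient, nsmul_eq_mul]
  have h2 : ∀ g : C(UnitAddCircle, ℂ), ‖∫ t, g t‖ ≤ ‖g‖ := by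
    intro g
    have := norm_integral_le_of_norm_le_const (μ := (volume : Measure UnitAddCircle)) (f := fun t => g t) (C := ‖g‖)
      (Eventually.of_forall fun t => g.norm_coe_le_norm t)
    rwa [vol_circle, mul_one] at this
  have h3 : ‖(q.totient : ℂ) * ((∫ t, f t) * (∫ t, H t))‖ ≤ q.totient * (‖f‖ * ‖H‖) := by
    rw [norm_mul, norm_mul, Complex.norm_natCast]
    have := mul_le_mul (h2 f) (h2 H) (norm_nonneg _) (norm_nonneg _)
    gcongr
  unfold Err
  refine (norm_sub_le _ _).trans ?_
  have : (q.totient : ℝ) * (‖f‖ * ‖H‖) ≤ q * (‖f‖ * ‖H‖) := by gcongr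
  linarith

lemma Good.symm {f H : C(UnitAddCircle, ℂ)} (h : Good f H) : Good H f := by
  intro ε hε
  obtain ⟨Q, hQ⟩ := h ε hε
  exact ⟨Q, fun q hq _ => by rw [Err_symm]; exact hQ q hq⟩

lemma int_fourier (n : ℤ) (hn : n ≠ 0) : ∫ t : UnitAddCircle, (fourier n : C(UnitAddCircle, ℂ)) t = 0 :=
  integral_eq_zero_of_add_right_eq_neg (fourier_add_half_inv_index hn (by norm_num))

lemma Good_fourier (h k : ℤ) : Good (fourier h) (fourier k) := by
  intro ε hε
  have hL : ∀ q : ℕ, ∀ [NeZero q], Lam q (fourier h) (fourier k) = Klo q h k := by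
    intro q _
    unfold Lam Klo
    refine Finset.sum_congr rfl fun x _ => ?_
    rw [fourier_pt, fourier_pt, ← AddChar.map_add_eq_mul]
  by_cases hk : h ≠ 0 ∨ k ≠ 0
  · obtain ⟨Q, hQ⟩ := Klo_small h k hk ε hε
    refine ⟨Q, fun q hq _ => ?_⟩
    have : (∫ t : UnitAddCircle, (fourier h : C(UnitAddCircle, ℂ)) t) * (∫ t : UnitAddCircle, (fourier k : C(UnitAddCircle, ℂ)) t) = 0 := by
      rcases hk with hk | hk
      · rw [int_fourier _ hk, zero_mul]
      · rw [int_fourier _ hk, mul_zero]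
    unfold Err
    rw [this, hL, mul_zero, sub_zero]
    exact hQ q hq
  · push Not at hk
    obtain ⟨rfl, rfl⟩ := hk
    refine ⟨0, fun q _ _ => ?_⟩
    have : Err q (fourier 0) (fourier 0) = 0 := by
      unfold Err Lam
      simp [ZMod.card_units_eq_totient, vol_circle]
    rw [this]; simp; positivity

lemma Good_left (H : C(UnitAddCircle, ℂ)) (hH : ∀ n : ℤ, Good (fourier n) H) (f : C(UnitAddCircle, ℂ)) :
    Good f H := by
  have hspan : ∀ g ∈ Submodule.span ℂ (range (fourier : ℤ → C(UnitAddCircle, ℂ))), Good g H := by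
    intro g hg
    induction hg using Submodule.span_induction with
    | mem x hx => obtain ⟨n, rfl⟩ := hx; exact hH n
    | zero =>
      intro ε hε
      refine ⟨0, fun q _ _ => ?_⟩
      have : Err q 0 H = 0 := by
        unfold Err Lam
        simp
      rw [this]; simp; positivity
    | add x y _ _ hx hy =>
      intro ε hε
      obtain ⟨Q1, h1⟩ := hx (ε / 2) (by positivity)
      obtain ⟨Q2, h2⟩ := hy (ε / 2) (by positivity)
      refine ⟨max Q1 Q2, fun q hq _ => ?_⟩
      rw [Err_add_left]
      refine (norm_add_le _ _).trans ?_
      have := h1 q (le_trans (le_max_left _ _) hq)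
      have := h2 q (le_trans (le_max_right _ _) hq)
      linarith
    | smul c x _ hx =>
      intro ε hε
      obtain ⟨Q1, h1⟩ := hx (ε / (‖c‖ + 1)) (by positivity)
      refine ⟨Q1, fun q hq _ => ?_⟩
      rw [Err_smul_left, norm_mul]
      have := h1 q hq
      calc ‖c‖ * ‖Err q x H‖ ≤ (‖c‖ + 1) * (ε / (‖c‖ + 1) * q) := by gcongr; linarith
        _ = ε * q := by field_simp
  intro ε hε
  have hf : f ∈ closure (Submodule.span ℂ (range (fourier : ℤ → C(UnitAddCircle, ℂ))) : Set C(UnitAddCircle, ℂ)) := by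
    have := span_fourier_closure_eq_top (T := 1)
    rw [← Submodule.topologicalClosure_coe, this]; trivial
  obtain ⟨g, hg, hd⟩ := Metric.mem_closure_iff.mp hf (ε / (4 * (‖H‖ + 1))) (by positivity)
  obtain ⟨Q, hQ⟩ := hspan g hg (ε / 2) (by positivity)
  refine ⟨Q, fun q hq _ => ?_⟩
  have h1 : Err q f H = Err q g H + Err q (f - g) H := by
    rw [← Err_add_left]; congr 1; abel
  rw [h1]
  refine (norm_add_le _ _).trans ?_
  have h2 := hQ q hq
  have h3 := Err_norm q (f - g) H
  rw [dist_eq_norm] at hd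
  have h4 : 2 * (‖f - g‖ * ‖H‖) ≤ ε / 2 := by
    have : ‖f - g‖ * ‖H‖ ≤ ε / (4 * (‖H‖ + 1)) * (‖H‖ + 1) := by gcongr; linarith
    have e : ε / (4 * (‖H‖ + 1)) * (‖H‖ + 1) = ε / 4 := by field_simp
    linarith
  have h5 : 2 * (‖f - g‖ * ‖H‖) * q ≤ ε / 2 * q := by gcongr
  linarith

lemma Good_all (f H : C(UnitAddCircle, ℂ)) : Good f H :=
  Good_left H (fun n => (Good_left (fourier n) (fun m => Good_fourier m n) H).symm) f

lemma real_equi (f H : C(UnitAddCircle, ℝ)) (ε : ℝ) (hε : 0 < ε) :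
    ∃ Q : ℕ, ∀ q : ℕ, Q ≤ q → ∀ [NeZero q],
      |∑ x : (ZMod q)ˣ, f (pt q x) * H (pt q ((x⁻¹ : (ZMod q)ˣ) : ZMod q)) -
        q.totient * ((∫ t, f t) * (∫ t, H t))| ≤ ε * q := by
  let c : C(UnitAddCircle, ℝ) → C(UnitAddCircle, ℂ) := fun f => ⟨fun t => (f t : ℂ), by fun_prop⟩
  obtain ⟨Q, hQ⟩ := Good_all (c f) (c H) ε hε
  refine ⟨Q, fun q hq _ => ?_⟩
  have h := hQ q hq
  have e : Err q (c f) (c H) = ((∑ x : (ZMod q)ˣ, f (pt q x) * H (pt q ((x⁻¹ : (ZMod q)ˣ) : ZMod q)) -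
        q.totient * ((∫ t, f t) * (∫ t, H t)) : ℝ) : ℂ) := by
    unfold Err Lam
    simp only [c, ContinuousMap.coe_mk]
    rw [integral_complex_ofReal, integral_complex_ofReal]
    push_cast
    rfl
  rw [e, Complex.norm_real] at h
  exact h

lemma ball_equi (H : C(UnitAddCircle, ℝ)) (hH : ∀ t, 0 ≤ H t) (c : UnitAddCircle) (r : ℝ) (hr : 0 ≤ r) 
    (ε : ℝ) (hε : 0 < ε) :
    ∃ Q : ℕ, ∀ q : ℕ, Q ≤ q → ∀ [NeZero q],
      ∑ x ∈ (Finset.univ : Finset (ZMod q)ˣ).filter (fun x : (ZMod q)ˣ => ‖pt q (x : ZMod q) - c‖ ≤ r), H (pt q ((x⁻¹ : (ZMod q)ˣ) : ZMod q)) ≤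
        q.totient * (2 * r * (∫ t, H t)) + ε * q := by
  set I := ∫ t, H t with hI
  have hI0 : 0 ≤ I := integral_nonneg hH
  obtain ⟨δ, hδ, hδ2⟩ : ∃ δ : ℝ, 0 < δ ∧ 2 * δ * I ≤ ε / 2 := by
    refine ⟨ε / (4 * (I + 1)), by positivity, ?_⟩
    have : 2 * (ε / (4 * (I + 1))) * I ≤ 2 * (ε / (4 * (I + 1))) * (I + 1) := by gcongr; linarith
    refine this.trans (le_of_eq ?_)
    field_simp; norm_num
  let f : C(UnitAddCircle, ℝ) := ⟨fun t => max 0 (min 1 (1 - (‖t - c‖ - r) / δ)), by fun_prop⟩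
  have hf0 : ∀ t, 0 ≤ f t := fun t => le_max_left _ _
  have hf1 : ∀ t, ‖t - c‖ ≤ r → 1 ≤ f t := by
    intro t ht
    refine le_max_of_le_right (le_min le_rfl ?_)
    have : (‖t - c‖ - r) / δ ≤ 0 := div_nonpos_of_nonpos_of_nonneg (by linarith) hδ.le
    linarith
  have hfint : ∫ t, f t ≤ 2 * r + 2 * δ := by
    have h1 : ∀ t, f t ≤ (Metric.closedBall c (r + δ)).indicator (fun _ => (1:ℝ)) t := by
      intro t
      by_cases ht : t ∈ Metric.closedBall c (r + δ)
      · rw [indicator_of_mem ht]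
        exact max_le zero_le_one (min_le_left _ _)
      · rw [indicator_of_notMem ht]
        refine max_le le_rfl ((min_le_right _ _).trans ?_)
        rw [Metric.mem_closedBall, dist_eq_norm, not_le] at ht
        have : 1 ≤ (‖t - c‖ - r) / δ := by rw [le_div_iff₀ hδ]; linarith
        linarith
    have h2 : ∫ t, f t ≤ ∫ t, (Metric.closedBall c (r + δ)).indicator (fun _ => (1:ℝ)) t := by
      refine integral_mono ?_ ?_ h1
      · exact f.continuous.integrable_of_hasCompactSupport (HasCompactSupport.of_compactSpace _)
      · exact (integrable_const _).indicator measurableSet_closedBall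
    rw [integral_indicator measurableSet_closedBall] at h2
    simp only [integral_const, smul_eq_mul, mul_one, Measure.real, Measure.restrict_apply_univ] at h2
    rw [AddCircle.volume_closedBall, ENNReal.toReal_ofReal (le_min (by norm_num) (by positivity))] at h2
    have := min_le_right 1 (2 * (r + δ))
    linarith
  obtain ⟨Q, hQ⟩ := real_equi f H (ε / 2) (by positivity)
  refine ⟨Q, fun q hq _ => ?_⟩
  have h := (abs_le.mp (hQ q hq)).2
  have h3 : ∑ x ∈ (Finset.univ : Finset (ZMod q)ˣ).filter (fun x : (ZMod q)ˣ => ‖pt q (x : ZMod q) - c‖ ≤ r), H (pt q ((x⁻¹ : (ZMod q)ˣ) : ZMod q)) ≤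
      ∑ x : (ZMod q)ˣ, f (pt q x) * H (pt q ((x⁻¹ : (ZMod q)ˣ) : ZMod q)) := by
    rw [Finset.sum_filter]
    refine Finset.sum_le_sum fun x _ => ?_
    split_ifs with hx
    · exact le_mul_of_one_le_left (hH _) (hf1 _ hx)
    · exact mul_nonneg (hf0 _) (hH _)
  have hq : (q.totient : ℝ) ≤ q := by exact_mod_cast Nat.totient_le q
  have h4 : (q.totient : ℝ) * ((∫ t, f t) * I) ≤ q.totient * (2 * r * I) + ε / 2 * q := by
    calc _ ≤ (q.totient : ℝ) * ((2 * r + 2 * δ) * I) := by gcongr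
      _ = q.totient * (2 * r * I) + q.totient * (2 * δ * I) := by ring
      _ ≤ q.totient * (2 * r * I) + q * (ε / 2) := by gcongr
      _ = _ := by ring
  linarith

lemma norm_coe_le_abs (y : ℝ) : ‖(y : UnitAddCircle)‖ ≤ |y| := by
  rw [UnitAddCircle.norm_eq]
  simpa using round_le y 0

lemma disc_pointwise (H : C(UnitAddCircle, ℝ)) (hH : ∀ t, 0 ≤ H t) (s : ℝ) (hs0 : 0 ≤ s) (hs1 : s ≤ 1)
    (ε : ℝ) (hε : 0 < ε) :
    ∃ Q : ℕ, ∀ q : ℕ, Q ≤ q → ∀ [NeZero q],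
      |∑ x ∈ (Finset.univ : Finset (ZMod q)ˣ).filter (fun x : (ZMod q)ˣ => ((x : ZMod q).val : ℝ) ≤ s * q), H (pt q ((x⁻¹ : (ZMod q)ˣ) : ZMod q)) -
        q.totient * (s * (∫ t, H t))| ≤ ε * q := by
  obtain ⟨Q1, h1⟩ := ball_equi H hH ((s / 2 : ℝ) : UnitAddCircle) (s / 2) (by positivity) (ε / 2) (by positivity)
  obtain ⟨Q2, h2⟩ := ball_equi H hH (((s + 1) / 2 : ℝ) : UnitAddCircle) ((1 - s) / 2) (by linarith) (ε / 2) (by positivity)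
  obtain ⟨Q3, h3⟩ := real_equi 1 H (ε / 2) (by positivity)
  refine ⟨max Q1 (max Q2 Q3), fun q hq _ => ?_⟩
  simp only [max_le_iff] at hq
  have h1 := h1 q hq.1
  have h2 := h2 q hq.2.1
  have h3 := (abs_le.mp (h3 q hq.2.2)).1
  have hq0 : (0:ℝ) < q := by exact_mod_cast Nat.pos_of_ne_zero (NeZero.ne q)
  simp only [ContinuousMap.one_apply, one_mul, integral_const, smul_eq_mul, mul_one] at h3
  rw [vol_circle, one_mul] at h3
  rw [← Finset.sum_filter_add_sum_filter_not Finset.univ (fun x : (ZMod q)ˣ => ((x : ZMod q).val : ℝ) ≤ s * q)] at h3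
  set A := ∑ x ∈ (Finset.univ : Finset (ZMod q)ˣ).filter (fun x : (ZMod q)ˣ => ((x : ZMod q).val : ℝ) ≤ s * q), H (pt q ((x⁻¹ : (ZMod q)ˣ) : ZMod q)) with hA
  set B := ∑ x ∈ (Finset.univ : Finset (ZMod q)ˣ).filter (fun x : (ZMod q)ˣ => ¬ ((x : ZMod q).val : ℝ) ≤ s * q), H (pt q ((x⁻¹ : (ZMod q)ˣ) : ZMod q)) with hB
  have hA' : A ≤ _ := (Finset.sum_le_sum_of_subset_of_nonneg (by
    intro x hx
    simp only [Finset.mem_filter, Finset.mem_univ, true_and] at hx ⊢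
    rw [pt, ← AddCircle.coe_sub]
    refine (norm_coe_le_abs _).trans ?_
    have : ((x : ZMod q).val : ℝ) / q ≤ s := by rwa [div_le_iff₀ hq0]
    have : 0 ≤ ((x : ZMod q).val : ℝ) / q := by positivity
    rw [abs_le]; constructor <;> linarith) (fun x _ _ => hH _)).trans h1
  have hB' : B ≤ _ := (Finset.sum_le_sum_of_subset_of_nonneg (by
    intro x hx
    simp only [Finset.mem_filter, Finset.mem_univ, true_and, not_le] at hx ⊢
    rw [pt, ← AddCircle.coe_sub]
    refine (norm_coe_le_abs _).trans ?_
    have : s < ((x : ZMod q).val : ℝ) / q := by rwa [lt_div_iff₀ hq0]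
    have : ((x : ZMod q).val : ℝ) / q ≤ 1 := by
      rw [div_le_one hq0]; exact_mod_cast (ZMod.val_lt _).le
    rw [abs_le]; constructor <;> linarith) (fun x _ _ => hH _)).trans h2
  have e1 : (q.totient : ℝ) * (2 * (s / 2) * ∫ t, H t) = q.totient * (s * ∫ t, H t) := by ring
  have e2 : (q.totient : ℝ) * (2 * ((1 - s) / 2) * ∫ t, H t) = q.totient * (∫ t, H t) - q.totient * (s * ∫ t, H t) := by ring
  rw [e1] at hA'
  rw [e2] at hB'
  rw [abs_le]; constructor <;> linarith


lemma disc_uniform (H : C(UnitAddCircle, ℝ)) (hH : ∀ t, 0 ≤ H t) (ε : ℝ) (hε : 0 < ε) :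
    ∃ Q : ℕ, ∀ q : ℕ, Q ≤ q → ∀ [NeZero q], ∀ s : ℝ, 0 ≤ s → s ≤ 1 →
      |∑ x ∈ (Finset.univ : Finset (ZMod q)ˣ).filter (fun x : (ZMod q)ˣ => ((x : ZMod q).val : ℝ) ≤ s * q), H (pt q ((x⁻¹ : (ZMod q)ˣ) : ZMod q)) -
        q.totient * (s * (∫ t, H t))| ≤ ε * q := by
  set I := ∫ t, H t with hI
  have hI0 : 0 ≤ I := integral_nonneg hH
  obtain ⟨n, hn⟩ := exists_nat_gt (2 * I / ε)
  have hn0 : (0:ℝ) < n := lt_of_le_of_lt (by positivity) hn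
  have hnI : I / n ≤ ε / 2 := by
    rw [div_lt_iff₀ hε] at hn
    rw [div_le_iff₀ hn0]; linarith
  have key : ∀ i : ℕ, ∃ Q : ℕ, i ≤ n → ∀ q : ℕ, Q ≤ q → ∀ [NeZero q], 
      |∑ x ∈ (Finset.univ : Finset (ZMod q)ˣ).filter (fun x : (ZMod q)ˣ => ((x : ZMod q).val : ℝ) ≤ (i / n : ℝ) * q), H (pt q ((x⁻¹ : (ZMod q)ˣ) : ZMod q)) -
        q.totient * ((i / n : ℝ) * I)| ≤ ε / 2 * q := by
    intro i
    by_cases hi : i ≤ n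
    · obtain ⟨Q, hQ⟩ := disc_pointwise H hH (i / n : ℝ) (by positivity) 
        (by rw [div_le_one hn0]; exact_mod_cast hi) (ε / 2) (by positivity)
      exact ⟨Q, fun _ => hQ⟩
    · exact ⟨0, fun h => absurd h hi⟩
  choose Qf hQf using key
  refine ⟨(Finset.range (n + 1)).sup Qf, fun q hq _ s hs0 hs1 => ?_⟩
  have hle : ∀ i ≤ n, Qf i ≤ q := fun i hi =>
    (Finset.le_sup (f := Qf) (Finset.mem_range.mpr (by omega))).trans hq
  have hi1 : ⌊s * n⌋₊ ≤ n := by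
    refine Nat.floor_le_of_le ?_
    nlinarith
  have hi2 : ⌈s * n⌉₊ ≤ n := by
    refine Nat.ceil_le.mpr ?_
    nlinarith
  have h1 := (abs_le.mp (hQf _ hi1 q (hle _ hi1))).1
  have h2 := (abs_le.mp (hQf _ hi2 q (hle _ hi2))).2
  have a1 : (⌊s * n⌋₊ : ℝ) / n ≤ s := by
    rw [div_le_iff₀ hn0]; exact Nat.floor_le (by positivity)
  have a2 : s ≤ (⌈s * n⌉₊ : ℝ) / n := by
    rw [le_div_iff₀ hn0]; exact Nat.le_ceil _
  have a3 : s ≤ (⌊s * n⌋₊ : ℝ) / n + 1 / n := by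
    rw [← add_div, le_div_iff₀ hn0]; exact (Nat.lt_floor_add_one _).le
  have a4 : (⌈s * n⌉₊ : ℝ) / n ≤ s + 1 / n := by
    rw [div_le_iff₀ hn0, add_mul, one_div_mul_cancel hn0.ne']; exact (Nat.ceil_lt_add_one (by positivity)).le
  have mono : ∀ u v : ℝ, u ≤ v → 
      ∑ x ∈ (Finset.univ : Finset (ZMod q)ˣ).filter (fun x : (ZMod q)ˣ => ((x : ZMod q).val : ℝ) ≤ u * q), H (pt q ((x⁻¹ : (ZMod q)ˣ) : ZMod q)) ≤
      ∑ x ∈ (Finset.univ : Finset (ZMod q)ˣ).filter (fun x : (ZMod q)ˣ => ((x : ZMod q).val : ℝ) ≤ v * q), H (pt q ((x⁻¹ : (ZMod q)ˣ) : ZMod q)) := by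
    intro u v huv
    refine Finset.sum_le_sum_of_subset_of_nonneg (fun x hx => ?_) (fun x _ _ => hH _)
    simp only [Finset.mem_filter, Finset.mem_univ, true_and] at hx ⊢
    exact hx.trans (by gcongr)
  have m1 := mono _ _ a1
  have m2 := mono _ _ a2
  have hq : (q.totient : ℝ) ≤ q := by exact_mod_cast Nat.totient_le q
  have b0 : (q.totient : ℝ) * (I / n) ≤ ε / 2 * q := by
    calc (q.totient : ℝ) * (I / n) ≤ q * (ε / 2) := by gcongr
      _ = _ := by ring
  have b1 : (q.totient : ℝ) * (s * I) ≤ q.totient * ((⌊s * n⌋₊ : ℝ) / n * I) + q.totient * (I / n) := by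
    calc (q.totient : ℝ) * (s * I) ≤ q.totient * (((⌊s * n⌋₊ : ℝ) / n + 1 / n) * I) := by gcongr
      _ = _ := by ring
  have b2 : (q.totient : ℝ) * ((⌈s * n⌉₊ : ℝ) / n * I) ≤ q.totient * (s * I) + q.totient * (I / n) := by
    calc _ ≤ (q.totient : ℝ) * ((s + 1 / n) * I) := by gcongr
      _ = _ := by ring
  rw [abs_le]; constructor <;> linarith

/-- representative of the inverse of `x` mod `q` -/
def invm (q x : ℕ) : ℕ := ((x : ZMod q)⁻¹).val

noncomputable def hd (x : ℝ) : ℝ := 1 / (Real.log 2 * (1 + x))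

noncomputable def Hs (v : ℝ) : ℝ := hd v + hd (1 - v)

lemma log2_pos : 0 < Real.log 2 := Real.log_pos (by norm_num)

lemma hd_pos {x : ℝ} (hx : 0 ≤ x) : 0 < hd x := by
  unfold hd; have := log2_pos; positivity

lemma hd_le {x : ℝ} (hx : 0 ≤ x) : hd x ≤ 2 := by
  unfold hd
  have h := Real.log_two_gt_d9
  rw [div_le_iff₀ (by positivity)]
  nlinarith

lemma hd_cont : ContinuousOn hd (Icc 0 1) := by
  unfold hd
  refine ContinuousOn.div continuousOn_const (by fun_prop) fun x hx => ?_
  have := log2_pos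
  have := hx.1
  positivity

lemma hd_int : ∫ x in (0:ℝ)..1, hd x = 1 := by
  unfold hd
  have h : ∀ x : ℝ, 1 / (Real.log 2 * (1 + x)) = (1 / Real.log 2) * (1 + x)⁻¹ := by
    intro x; rw [one_div, mul_inv, one_div]
  simp_rw [h]
  rw [intervalIntegral.integral_const_mul, intervalIntegral.integral_comp_add_left (fun x => x⁻¹), integral_inv]
  · have := log2_pos
    norm_num
  · simp [uIcc_of_le]

lemma Hs_cont : ContinuousOn Hs (Icc 0 1) := by
  unfold Hs
  refine hd_cont.add (hd_cont.comp (by fun_prop) fun x hx => ?_)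
  constructor <;> linarith [hx.1, hx.2]

lemma Hs_int : ∫ x in (0:ℝ)..1, Hs x = 2 := by
  unfold Hs
  rw [intervalIntegral.integral_add, intervalIntegral.integral_comp_sub_left (fun x => hd x)]
  · simp only [sub_self, sub_zero, hd_int]; norm_num
  · exact ContinuousOn.intervalIntegrable (by rw [uIcc_of_le zero_le_one]; exact hd_cont)
  · refine ContinuousOn.intervalIntegrable ?_
    rw [uIcc_of_le zero_le_one]
    exact hd_cont.comp (by fun_prop) fun x hx => by constructor <;> linarith [hx.1, hx.2]

noncomputable def Hc : C(UnitAddCircle, ℝ) := ⟨AddCircle.liftIco 1 0 Hs, by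
  apply AddCircle.liftIco_continuous
  · simp [Hs]; ring
  · simpa using Hs_cont⟩

lemma Hc_coe (v : ℝ) (h0 : 0 ≤ v) (h1 : v < 1) : Hc (v : UnitAddCircle) = Hs v := by
  have := AddCircle.liftIco_coe_apply (p := 1) (a := 0) (f := Hs) (x := v) ⟨h0, by simpa using h1⟩
  exact this

lemma Hs_nonneg {v : ℝ} (h0 : 0 ≤ v) (h1 : v ≤ 1) : 0 ≤ Hs v :=
  add_nonneg (hd_pos h0).le (hd_pos (by linarith)).le

lemma Hs_le {v : ℝ} (h0 : 0 ≤ v) (h1 : v ≤ 1) : Hs v ≤ 4 := by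
  have := hd_le h0
  have := hd_le (x := 1 - v) (by linarith)
  unfold Hs; linarith

lemma Hc_nonneg (t : UnitAddCircle) : 0 ≤ Hc t := by
  obtain ⟨v, hv, rfl⟩ : ∃ v ∈ Ico (0:ℝ) (0+1), (v : UnitAddCircle) = t := by
    have := AddCircle.coe_image_Ico_eq (1:ℝ) 0
    have h2 : t ∈ (univ : Set UnitAddCircle) := trivial
    rw [← this] at h2
    exact h2
  rw [Hc_coe v hv.1 (by linarith [hv.2])]
  exact Hs_nonneg hv.1 (by linarith [hv.2])

lemma Hc_int : ∫ t, Hc t = 2 := by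
  rw [← UnitAddCircle.intervalIntegral_preimage 0, ← Hs_int, zero_add]
  refine intervalIntegral.integral_congr_ae ?_
  have : ∀ᵐ x : ℝ, x ≠ 1 := by simp [ae_iff]
  filter_upwards [this] with x hx1 hx
  rw [uIoc_of_le zero_le_one] at hx
  exact Hc_coe x hx.1.le (lt_of_le_of_ne hx.2 hx1)

lemma disc_nat (ε : ℝ) (hε : 0 < ε) :
    ∃ Q : ℕ, ∀ q : ℕ, Q ≤ q → ∀ s : ℝ, 0 ≤ s → s ≤ 1 →
      |∑ x ∈ (Finset.range q).filter (fun x : ℕ => x.Coprime q ∧ (x : ℝ) ≤ s * q), Hs ((invm q x : ℝ) / q) -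
        2 * q.totient * s| ≤ ε * q := by
  obtain ⟨Q, hQ⟩ := disc_uniform Hc Hc_nonneg ε hε
  refine ⟨max Q 1, fun q hq s hs0 hs1 => ?_⟩
  simp only [max_le_iff] at hq
  have : NeZero q := ⟨by omega⟩
  have h := hQ q hq.1 s hs0 hs1
  rw [Hc_int] at h
  have e : ∑ x ∈ (Finset.univ : Finset (ZMod q)ˣ).filter (fun x : (ZMod q)ˣ => ((x : ZMod q).val : ℝ) ≤ s * q), Hc (pt q ((x⁻¹ : (ZMod q)ˣ) : ZMod q)) 
     = ∑ x ∈ (Finset.range q).filter (fun x : ℕ => x.Coprime q ∧ (x : ℝ) ≤ s * q), Hs ((invm q x : ℝ) / q) := by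
    have hq0 : (0:ℝ) < q := by exact_mod_cast Nat.pos_of_ne_zero (NeZero.ne q)
    refine Finset.sum_bij (fun x _ => (x : ZMod q).val) ?_ ?_ ?_ ?_
    · intro x hx
      simp only [Finset.mem_filter, Finset.mem_univ, true_and, Finset.mem_range] at hx ⊢
      exact ⟨ZMod.val_lt _, ZMod.val_coe_unit_coprime x, hx⟩
    · intro x _ y _ hxy
      exact Units.ext (ZMod.val_injective q hxy)
    · intro y hy
      simp only [Finset.mem_filter, Finset.mem_univ, true_and, Finset.mem_range] at hy
      refine ⟨ZMod.unitOfCoprime y hy.2.1, ?_, ?_⟩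
      · simp only [Finset.mem_filter, Finset.mem_univ, true_and, ZMod.coe_unitOfCoprime]
        rw [ZMod.val_cast_of_lt hy.1]; exact hy.2.2
      · simp [ZMod.val_cast_of_lt hy.1]
    · intro x _
      rw [pt, Hc_coe]
      · simp [invm]
      · positivity
      · rw [div_lt_one hq0]; exact_mod_cast ZMod.val_lt _
  rw [e] at h
  convert h using 3
  ring


lemma weight_piece {ι : Type*} [DecidableEq ι] (T : Finset ι) (p w : ι → ℝ) (hw : ∀ i ∈ T, 0 ≤ w i) (κ η : ℝ) (hκ : 0 ≤ κ) 
    (a b : ℝ) (hd : ∀ t ∈ Icc a b, |∑ i ∈ T.filter (fun i => p i ≤ t), w i - κ * t| ≤ η)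
    (f : ℝ → ℝ) (hf : AntitoneOn f (Icc a b)) (M : ℝ) (hf0 : ∀ t ∈ Icc a b, 0 ≤ f t) (hfM : ∀ t ∈ Icc a b, f t ≤ M)
    (u v : ℝ) (hau : a ≤ u) (huv : u ≤ v) (hvb : v ≤ b) :
    |∑ i ∈ T.filter (fun i => u < p i ∧ p i ≤ v), w i * f (p i) - κ * ∫ t in u..v, f t| ≤
      2 * η * M + (f u - f v) * (κ * (v - u)) := by
  have hu : u ∈ Icc a b := ⟨hau, huv.trans hvb⟩
  have hv : v ∈ Icc a b := ⟨hau.trans huv, hvb⟩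
  have h1 := abs_le.mp (hd u hu)
  have h2 := abs_le.mp (hd v hv)
  have hη : 0 ≤ η := by linarith [abs_nonneg (∑ i ∈ T.filter (fun i => p i ≤ u), w i - κ * u), hd u hu]
  set W := ∑ i ∈ T.filter (fun i => u < p i ∧ p i ≤ v), w i with hW
  have hsplit : ∑ i ∈ T.filter (fun i => p i ≤ v), w i = ∑ i ∈ T.filter (fun i => p i ≤ u), w i + W := by
    rw [hW, ← Finset.sum_union]
    · congr 1
      ext i
      simp only [Finset.mem_filter, Finset.mem_union]
      constructor
      · rintro ⟨h, h'⟩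
        rcases le_or_gt (p i) u with h3 | h3
        · exact Or.inl ⟨h, h3⟩
        · exact Or.inr ⟨h, h3, h'⟩
      · rintro (⟨h, h'⟩ | ⟨h, h', h''⟩)
        · exact ⟨h, h'.trans huv⟩
        · exact ⟨h, h''⟩
    · rw [Finset.disjoint_left]
      intro i hi hi'
      simp only [Finset.mem_filter] at hi hi'
      linarith [hi.2, hi'.2.1]
  have hmem : ∀ i ∈ T.filter (fun i => u < p i ∧ p i ≤ v), p i ∈ Icc a b ∧ i ∈ T ∧ u < p i ∧ p i ≤ v := by
    intro i hi
    simp only [Finset.mem_filter] at hi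
    exact ⟨⟨by linarith [hi.2.1], by linarith [hi.2.2]⟩, hi⟩
  have s1 : ∑ i ∈ T.filter (fun i => u < p i ∧ p i ≤ v), w i * f (p i) ≤ W * f u := by
    rw [hW, Finset.sum_mul]
    refine Finset.sum_le_sum fun i hi => ?_
    obtain ⟨h3, h4, h5, h6⟩ := hmem i hi
    exact mul_le_mul_of_nonneg_left (hf hu h3 h5.le) (hw i h4)
  have s2 : W * f v ≤ ∑ i ∈ T.filter (fun i => u < p i ∧ p i ≤ v), w i * f (p i) := by
    rw [hW, Finset.sum_mul]
    refine Finset.sum_le_sum fun i hi => ?_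
    obtain ⟨h3, h4, h5, h6⟩ := hmem i hi
    exact mul_le_mul_of_nonneg_left (hf h3 hv h6) (hw i h4)
  have hfi : IntervalIntegrable f volume u v := by
    apply AntitoneOn.intervalIntegrable
    rw [uIcc_of_le huv]
    exact hf.mono (Icc_subset_Icc hau hvb)
  have i1 : ∫ t in u..v, f t ≤ f u * (v - u) := by
    have := intervalIntegral.integral_mono_on huv hfi (intervalIntegrable_const (c := f u)) (fun x hx => hf hu ⟨by linarith [hx.1], by linarith [hx.2]⟩ hx.1)
    rw [intervalIntegral.integral_const, smul_eq_mul] at this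
    linarith
  have i2 : f v * (v - u) ≤ ∫ t in u..v, f t := by
    have := intervalIntegral.integral_mono_on huv (intervalIntegrable_const (c := f v)) hfi (fun x hx => hf ⟨by linarith [hx.1], by linarith [hx.2]⟩ hv hx.2)
    rw [intervalIntegral.integral_const, smul_eq_mul] at this
    linarith
  have j1 := mul_le_mul_of_nonneg_left i1 hκ
  have j2 := mul_le_mul_of_nonneg_left i2 hκ
  have w1 : W ≤ κ * (v - u) + 2 * η := by linarith
  have w2 : κ * (v - u) - 2 * η ≤ W := by linarith
  have k1 := mul_le_mul_of_nonneg_right w1 (hf0 u hu)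
  have k2 := mul_le_mul_of_nonneg_right w2 (hf0 v hv)
  have k3 := mul_le_mul_of_nonneg_left (hfM u hu) hη
  have k4 := mul_le_mul_of_nonneg_left (hfM v hv) hη
  rw [abs_le]; constructor <;> nlinarith

lemma weight_lemma {ι : Type*} [DecidableEq ι] (T : Finset ι) (p w : ι → ℝ) (hw : ∀ i ∈ T, 0 ≤ w i) (κ η : ℝ) (hκ : 0 ≤ κ) 
    (a b : ℝ) (hab : a ≤ b) (hd : ∀ t ∈ Icc a b, |∑ i ∈ T.filter (fun i => p i ≤ t), w i - κ * t| ≤ η)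
    (f : ℝ → ℝ) (hf : AntitoneOn f (Icc a b)) (M : ℝ) (hf0 : ∀ t ∈ Icc a b, 0 ≤ f t) (hfM : ∀ t ∈ Icc a b, f t ≤ M)
    (n : ℕ) (hn : 0 < n) :
    |∑ i ∈ T.filter (fun i => a < p i ∧ p i ≤ b), w i * f (p i) - κ * ∫ t in a..b, f t| ≤
      2 * n * η * M + κ * M * ((b - a) / n) := by
  set δ := (b - a) / n with hδ
  have hn' : (0:ℝ) < n := by exact_mod_cast hn
  have hδ0 : 0 ≤ δ := div_nonneg (by linarith) hn'.le
  have hnδ : n * δ = b - a := by rw [hδ]; field_simp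
  have key : ∀ k : ℕ, k ≤ n → 
    |∑ i ∈ T.filter (fun i => a < p i ∧ p i ≤ a + k * δ), w i * f (p i) - κ * ∫ t in a..(a + k * δ), f t| ≤
      2 * k * η * M + (f a - f (a + k * δ)) * (κ * δ) := by
    intro k
    induction k with
    | zero => 
      intro _
      have : T.filter (fun i => a < p i ∧ p i ≤ a + (0:ℕ) * δ) = ∅ := by
        rw [Finset.filter_eq_empty_iff]
        rintro i _ ⟨h, h'⟩
        simp at h'; linarith
      rw [this]; simp
    | succ k ih =>
      intro hk
      have ih := ih (by omega)
      have hkn : ((k:ℝ) + 1) ≤ n := by exact_mod_cast hk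
      have hk1 : ((k:ℝ) + 1) * δ ≤ b - a := by rw [← hnδ]; gcongr
      have hk0 : 0 ≤ (k:ℝ) * δ := by positivity
      have e1 : a + ((k+1 : ℕ) : ℝ) * δ = a + k * δ + δ := by push_cast; ring
      have hp := weight_piece T p w hw κ η hκ a b hd f hf M hf0 hfM (a + k * δ) (a + ((k+1 : ℕ) : ℝ) * δ) (by linarith) 
        (by rw [e1]; linarith) (by push_cast; linarith)
      have hintv : ∀ u v, a ≤ u → u ≤ v → v ≤ b → IntervalIntegrable f volume u v := by
        intro u v h1 h2 h3
        apply AntitoneOn.intervalIntegrable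
        rw [uIcc_of_le h2]
        exact hf.mono (Icc_subset_Icc h1 h3)
      have hI : ∫ t in a..(a + ((k+1 : ℕ) : ℝ) * δ), f t = (∫ t in a..(a + k * δ), f t) + ∫ t in (a + k * δ)..(a + ((k+1 : ℕ) : ℝ) * δ), f t := by
        rw [intervalIntegral.integral_add_adjacent_intervals]
        · exact hintv _ _ le_rfl (by linarith) (by linarith)
        · exact hintv _ _ (by linarith) (by rw [e1]; linarith) (by push_cast; linarith)
      have hS : ∑ i ∈ T.filter (fun i => a < p i ∧ p i ≤ a + ((k+1 : ℕ) : ℝ) * δ), w i * f (p i) =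
          ∑ i ∈ T.filter (fun i => a < p i ∧ p i ≤ a + k * δ), w i * f (p i) + 
          ∑ i ∈ T.filter (fun i => a + k * δ < p i ∧ p i ≤ a + ((k+1 : ℕ) : ℝ) * δ), w i * f (p i) := by
        rw [← Finset.sum_union]
        · congr 1
          ext i
          simp only [Finset.mem_filter, Finset.mem_union]
          constructor
          · rintro ⟨h, h', h''⟩
            rcases le_or_gt (p i) (a + k * δ) with h3 | h3
            · exact Or.inl ⟨h, h', h3⟩
            · exact Or.inr ⟨h, h3, h''⟩
          · rintro (⟨h, h', h''⟩ | ⟨h, h', h''⟩)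
            · exact ⟨h, h', by linarith⟩
            · exact ⟨h, by linarith, h''⟩
        · rw [Finset.disjoint_left]
          intro i hi hi'
          simp only [Finset.mem_filter] at hi hi'
          linarith [hi.2.2, hi'.2.1]
      rw [hI, hS]
      have e2 : a + ((k+1 : ℕ) : ℝ) * δ - (a + k * δ) = δ := by rw [e1]; ring
      rw [e2] at hp
      have tri := abs_add_le (∑ i ∈ T.filter (fun i => a < p i ∧ p i ≤ a + k * δ), w i * f (p i) - κ * ∫ t in a..(a + k * δ), f t)
        (∑ i ∈ T.filter (fun i => a + k * δ < p i ∧ p i ≤ a + ((k+1 : ℕ) : ℝ) * δ), w i * f (p i) - κ * ∫ t in (a + k * δ)..(a + ((k+1 : ℕ) : ℝ) * δ), f t)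
      have e3 : ∀ A B C D : ℝ, A + B - κ * (C + D) = A - κ * C + (B - κ * D) := by intros; ring
      rw [e3]
      refine tri.trans ((add_le_add ih hp).trans (le_of_eq ?_))
      push_cast
      ring
  have h := key n le_rfl
  rw [hnδ, show a + (b - a) = b by ring] at h
  refine h.trans ?_
  have h1 := hf0 b ⟨hab, le_rfl⟩
  have h2 := hfM a ⟨le_rfl, hab⟩
  have : (f a - f b) * (κ * δ) ≤ M * (κ * δ) := by gcongr; linarith
  linarith

/-- Inner sum asymptotics with weight `1/(1+u)`. -/
lemma inner_asym (ε : ℝ) (hε : 0 < ε) :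
    ∃ Q : ℕ, ∀ q : ℕ, Q ≤ q → ∀ s t : ℝ, 0 ≤ s → s ≤ t → t ≤ 1 →
      |∑ x ∈ (Finset.range q).filter (fun x : ℕ => x.Coprime q ∧ s < (x : ℝ) / q ∧ (x : ℝ) / q ≤ t), 
          Hs ((invm q x : ℝ) / q) * (1 / (1 + (x : ℝ) / q)) -
        2 * q.totient * ∫ u in s..t, 1 / (1 + u)| ≤ ε * q := by
  obtain ⟨n, hn⟩ := exists_nat_gt (4 / ε)
  have hn0 : (0:ℝ) < n := lt_of_le_of_lt (by positivity) hn
  have hnε : 2 / (n:ℝ) ≤ ε / 2 := by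
    rw [div_lt_iff₀ hε] at hn
    rw [div_le_iff₀ hn0]; linarith
  obtain ⟨Q, hQ⟩ := disc_nat (ε / (4 * n)) (by positivity)
  refine ⟨max Q 1, fun q hq s t hs hst ht => ?_⟩
  simp only [max_le_iff] at hq
  have hq0 : (0:ℝ) < q := by exact_mod_cast (show 0 < q by omega)
  have : NeZero q := ⟨by omega⟩
  have hinv : ∀ x, (0:ℝ) ≤ (invm q x : ℝ) / q ∧ (invm q x : ℝ) / q ≤ 1 := by
    intro x
    refine ⟨by positivity, ?_⟩
    rw [div_le_one hq0]; exact_mod_cast (ZMod.val_lt _).le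
  have h := weight_lemma ((Finset.range q).filter (fun x : ℕ => x.Coprime q)) (fun x => (x:ℝ) / q) 
    (fun x => Hs ((invm q x : ℝ) / q)) (fun x _ => Hs_nonneg (hinv x).1 (hinv x).2) (2 * q.totient) (ε / (4 * n) * q)
    (by positivity) s t hst ?_ (fun u => 1 / (1 + u)) ?_ 1 ?_ ?_ n (by exact_mod_cast hn0)
  · rw [Finset.filter_filter] at h
    refine h.trans ?_
    have hφ : (q.totient : ℝ) ≤ q := by exact_mod_cast Nat.totient_le q
    have h1 : 2 * (n:ℝ) * (ε / (4 * n) * q) * 1 = ε / 2 * q := by field_simp; norm_num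
    have h2 : 2 * (q.totient : ℝ) * 1 * ((t - s) / n) ≤ ε / 2 * q := by
      calc 2 * (q.totient : ℝ) * 1 * ((t - s) / n) ≤ 2 * q * 1 * (1 / n) := by gcongr; linarith
        _ = 2 / n * q := by ring
        _ ≤ _ := by gcongr
    linarith
  · intro u hu
    have := hQ q hq.1 u (by linarith [hu.1]) (by linarith [hu.2])
    rw [Finset.filter_filter]
    simp only [div_le_iff₀ hq0]
    exact this
  · intro u hu v hv huv
    have := hu.1
    simp only
    gcongr
    linarith
  · intro u hu
    have := hu.1
    have : 0 ≤ u := by linarith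
    positivity
  · intro u hu
    have := hu.1
    rw [div_le_one (by linarith)]; linarith


noncomputable def fmu : ArithmeticFunction ℝ := ⟨fun d => (ArithmeticFunction.moebius d : ℝ) / d, by simp⟩

lemma fmu_zeta (n : ℕ) (hn : 0 < n) : (fmu * (ArithmeticFunction.zeta : ArithmeticFunction ℝ)) n = (n.totient : ℝ) / n := by
  rw [ArithmeticFunction.coe_mul_zeta_apply]
  have h := (ArithmeticFunction.sum_eq_iff_sum_mul_moebius_eq (R := ℝ) (f := fun n => (n.totient : ℝ)) (g := fun n => (n:ℝ))).mp
    (fun n _ => by exact_mod_cast Nat.sum_totient n) n hn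
  rw [← h, Finset.sum_div, Nat.sum_divisorsAntidiagonal (f := fun a b => (ArithmeticFunction.moebius a : ℝ) * (b : ℝ) / n)]
  refine Finset.sum_congr rfl fun d hd => ?_
  have hdn := Nat.dvd_of_mem_divisors hd
  have hd0 : (d:ℝ) ≠ 0 := by
    have := Nat.pos_of_mem_divisors hd
    positivity
  have hn0 : (n:ℝ) ≠ 0 := by positivity
  rw [Nat.cast_div hdn hd0]
  simp only [fmu, ArithmeticFunction.coe_mk]
  field_simp

noncomputable def kap : ℝ := ∑' d : ℕ, fmu d * (1 / d)

lemma fmu_abs (d : ℕ) : |fmu d| ≤ 1 / d := by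
  simp only [fmu, ArithmeticFunction.coe_mk]
  rw [abs_div, Nat.abs_cast]
  gcongr
  exact_mod_cast ArithmeticFunction.abs_moebius_le_one

lemma totient_mean_nat : Tendsto (fun N : ℕ => (∑ q ∈ Finset.Ioc 0 N, (q.totient : ℝ) / q) / N) atTop (𝓝 kap) := by
  have h1 : ∀ N : ℕ, (∑ q ∈ Finset.Ioc 0 N, (q.totient : ℝ) / q) / N = ∑' d : ℕ, fmu d * (((N / d : ℕ) : ℝ) / N) := by
    intro N
    have : ∑ q ∈ Finset.Ioc 0 N, (q.totient : ℝ) / q = ∑ q ∈ Finset.Ioc 0 N, (fmu * (ArithmeticFunction.zeta : ArithmeticFunction ℝ)) q :=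
      Finset.sum_congr rfl fun q hq => (fmu_zeta q (Finset.mem_Ioc.mp hq).1).symm
    rw [this, ArithmeticFunction.sum_Ioc_mul_zeta_eq_sum, Finset.sum_div, tsum_eq_sum (s := Finset.Ioc 0 N)]
    · refine Finset.sum_congr rfl fun q hq => by ring
    · intro d hd
      simp only [Finset.mem_Ioc, not_and_or, not_lt, not_le] at hd
      rcases hd with hd | hd
      · simp [show d = 0 by omega]
      · simp [Nat.div_eq_of_lt hd]
  simp_rw [h1]
  refine tendsto_tsum_of_dominated_convergence (bound := fun d : ℕ => 1 / (d:ℝ) ^ 2) ?_ ?_ ?_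
  · exact Real.summable_one_div_nat_pow.mpr (by norm_num)
  · intro d
    refine Tendsto.const_mul _ ?_
    have := (tendsto_nat_floor_mul_div_atTop (R := ℝ) (a := 1 / (d:ℝ)) (by positivity)).comp tendsto_natCast_atTop_atTop
    refine this.congr fun N => ?_
    simp only [Function.comp]
    rw [one_div_mul_eq_div, Nat.floor_div_eq_div]
  · refine Eventually.of_forall fun N d => ?_
    rw [Real.norm_eq_abs, abs_mul, sq]
    have : |(((N / d : ℕ) : ℝ) / N)| ≤ 1 / d := by
      rw [abs_of_nonneg (by positivity)]
      rcases Nat.eq_zero_or_pos N with rfl | hN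
      · simp
      have hN' : (0:ℝ) < N := by positivity
      rw [div_le_iff₀ hN', one_div_mul_eq_div]
      exact Nat.cast_div_le
    calc _ ≤ 1 / (d:ℝ) * (1 / d) := by
          gcongr
          exact fmu_abs d
      _ = _ := by rw [div_mul_div_comm, one_mul]

lemma kap_nonneg : 0 ≤ kap := ge_of_tendsto' totient_mean_nat fun N => by positivity

lemma totient_mean (ε : ℝ) (hε : 0 < ε) : ∃ X0 : ℝ, ∀ X : ℝ, X0 ≤ X → 
    |∑ q ∈ Finset.Ioc 0 ⌊X⌋₊, (q.totient : ℝ) / q - kap * X| ≤ ε * X := by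
  have h := (totient_mean_nat.comp (tendsto_nat_floor_atTop (α := ℝ))).mul (tendsto_nat_floor_div_atTop (R := ℝ))
  rw [mul_one] at h
  have := (Metric.tendsto_nhds.mp h) ε hε
  obtain ⟨X0, hX0⟩ := eventually_atTop.mp this
  refine ⟨max X0 1, fun X hX => ?_⟩
  simp only [max_le_iff] at hX
  have h2 := hX0 X hX.1
  have hX1 : (0:ℝ) < X := by linarith [hX.2]
  have hfl : (0:ℝ) < ⌊X⌋₊ := by exact_mod_cast Nat.floor_pos.mpr hX.2
  simp only [Function.comp] at h2
  rw [div_mul_div_cancel₀ hfl.ne', Real.dist_eq] at h2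
  have e : ∑ q ∈ Finset.Ioc 0 ⌊X⌋₊, (q.totient : ℝ) / q - kap * X = ((∑ q ∈ Finset.Ioc 0 ⌊X⌋₊, (q.totient : ℝ) / q) / X - kap) * X := by
    field_simp
  rw [e, abs_mul, abs_of_pos hX1]
  gcongr


noncomputable def Af (l r s : ℝ) : ℝ := Real.log (1 + min r s) - Real.log (1 + min l s)

noncomputable def Bf (l r y : ℝ) : ℝ := 2 * Af l r (1 / y) / y

lemma Af_eq (l r s : ℝ) (hl : 0 ≤ l) (hr : 0 ≤ r) (hs : 0 ≤ s) : 
    Af l r s = ∫ u in (min l s)..(min r s), 1 / (1 + u) := by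
  have h1 : 0 ≤ min l s := le_min hl hs
  have h2 : 0 ≤ min r s := le_min hr hs
  simp_rw [one_div]
  rw [intervalIntegral.integral_comp_add_left (fun x => x⁻¹), integral_inv]
  · rw [Real.log_div (by linarith) (by linarith)]; rfl
  · rw [mem_uIcc]; push Not; constructor <;> intros <;> linarith

lemma Af_nonneg (l r s : ℝ) (hl : 0 ≤ l) (hlr : l ≤ r) (hs : 0 ≤ s) : 0 ≤ Af l r s := by
  have h1 : 0 ≤ min l s := le_min hl hs
  have : min l s ≤ min r s := min_le_min_right _ hlr
  unfold Af
  rw [sub_nonneg]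
  apply Real.log_le_log <;> linarith

lemma Af_le (l r s : ℝ) (hl : 0 ≤ l) (hlr : l ≤ r) (hr : r ≤ 1) (hs : 0 ≤ s) : Af l r s ≤ 1 := by
  have h1 : 0 ≤ min l s := le_min hl hs
  have h2 : 0 ≤ min r s := le_min (hl.trans hlr) hs
  have h3 : min r s ≤ 1 := (min_le_left _ _).trans hr
  unfold Af
  have h4 : 0 ≤ Real.log (1 + min l s) := Real.log_nonneg (by linarith)
  have := Real.log_le_sub_one_of_pos (x := 1 + min r s) (by linarith)
  linarith

lemma Af_mono (l r s t : ℝ) (hl : 0 ≤ l) (hlr : l ≤ r) (hs : 0 ≤ s) (hst : s ≤ t) : Af l r s ≤ Af l r t := by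
  rcases le_total s l with h | h
  · have : Af l r s = 0 := by
      unfold Af; rw [min_eq_right h, min_eq_right (h.trans hlr), sub_self]
    rw [this]; exact Af_nonneg l r t hl hlr (hs.trans hst)
  · unfold Af
    rw [min_eq_left h, min_eq_left (h.trans hst)]
    have h1 : 0 ≤ min r s := le_min (hl.trans hlr) hs
    have := Real.log_le_log (x := 1 + min r s) (y := 1 + min r t) (by linarith) (by gcongr)
    linarith

lemma Bf_anti (l r a b : ℝ) (hl : 0 ≤ l) (hlr : l ≤ r) (ha : 0 < a) : AntitoneOn (Bf l r) (Icc a b) := by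
  intro y hy z hz hyz
  have hy0 : 0 < y := by linarith [hy.1]
  have hz0 : 0 < z := by linarith
  have h1 : (1:ℝ) / z ≤ 1 / y := one_div_le_one_div_of_le hy0 hyz
  unfold Bf
  have := Af_mono l r (1/z) (1/y) hl hlr (by positivity) h1
  have h0 := Af_nonneg l r (1/y) hl hlr (by positivity)
  gcongr

lemma Bf_nonneg (l r y : ℝ) (hl : 0 ≤ l) (hlr : l ≤ r) (hy : 0 ≤ y) : 0 ≤ Bf l r y := by
  unfold Bf
  have h0 := Af_nonneg l r (1/y) hl hlr (by positivity)
  positivity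

lemma Bf_le (l r y : ℝ) (hl : 0 ≤ l) (hlr : l ≤ r) (hr : r ≤ 1) (hy : 1 ≤ y) : Bf l r y ≤ 2 := by
  unfold Bf
  have h0 := Af_le l r (1/y) hl hlr hr (by positivity)
  rw [div_le_iff₀ (by linarith)]
  linarith

open Classical in
noncomputable def QQ (a b R : ℝ) : Finset ℕ :=
  (Finset.range (⌈b * R⌉₊ + 1)).filter (fun q : ℕ => a < (q : ℝ) / R ∧ (q : ℝ) / R < b)

open Classical in
noncomputable def XX (q : ℕ) (R : ℝ) (J : Set ℝ) : Finset ℕ :=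
  (Finset.range q).filter (fun x : ℕ => x.Coprime q ∧ (x : ℝ) ≤ R ∧ (x : ℝ) / q ∈ J)

noncomputable def wt (q x : ℕ) : ℝ := Hs ((invm q x : ℝ) / q) * (1 / (1 + (x : ℝ) / q)) / (q : ℝ) ^ 2

lemma mem_QQ {a b R : ℝ} (hR : 0 < R) (q : ℕ) : q ∈ QQ a b R ↔ a < (q : ℝ) / R ∧ (q : ℝ) / R < b := by
  unfold QQ
  rw [Finset.mem_filter, Finset.mem_range, and_iff_right_iff_imp]
  rintro ⟨_, h⟩
  rw [div_lt_iff₀ hR] at h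
  have := h.trans_le (Nat.le_ceil _)
  have : q < ⌈b * R⌉₊ := by exact_mod_cast this
  omega

lemma mem_XX {q : ℕ} {R : ℝ} {J : Set ℝ} {x : ℕ} : x ∈ XX q R J ↔ x < q ∧ x.Coprime q ∧ (x : ℝ) ≤ R ∧ (x : ℝ) / q ∈ J := by
  simp [XX]

lemma inv_unit (q x : ℕ) (hq : 0 < q) : (0:ℝ) ≤ (invm q x : ℝ) / q ∧ (invm q x : ℝ) / q ≤ 1 := by
  have : NeZero q := ⟨by omega⟩
  have hq0 : (0:ℝ) < q := by exact_mod_cast hq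
  refine ⟨by positivity, ?_⟩
  rw [div_le_one hq0]; exact_mod_cast (ZMod.val_lt _).le

lemma inner_J (J : Set ℝ) (l r : ℝ) (hl : 0 ≤ l) (hlr : l ≤ r) (hr : r ≤ 1)
    (hJ1 : ∀ u ∈ Ioo (0:ℝ) 1, l < u → u < r → u ∈ J) (hJ2 : ∀ u ∈ J, l ≤ u ∧ u ≤ r) (ε : ℝ) (hε : 0 < ε) :
    ∃ Q : ℕ, ∀ q : ℕ, Q ≤ q → ∀ R : ℝ, 0 < R → R < q → 
      |∑ x ∈ XX q R J, Hs ((invm q x : ℝ) / q) * (1 / (1 + (x : ℝ) / q)) - 2 * q.totient * Af l r (R / q)| ≤ ε * q + 8 := by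
  obtain ⟨Q, hQ⟩ := inner_asym ε hε
  refine ⟨max Q 2, fun q hq R hR hRq => ?_⟩
  simp only [max_le_iff] at hq
  have hq0 : (0:ℝ) < q := by linarith
  have hs0 : 0 < R / q := by positivity
  have hs1 : R / q < 1 := by rwa [div_lt_one hq0]
  have h := hQ q hq.1 (min l (R/q)) (min r (R/q)) (le_min hl hs0.le) (min_le_min_right _ hlr) ((min_le_left _ _).trans hr)
  rw [← Af_eq l r _ hl (hl.trans hlr) hs0.le] at h
  set f : ℕ → ℝ := fun x => Hs ((invm q x : ℝ) / q) * (1 / (1 + (x : ℝ) / q)) with hf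
  have hf0 : ∀ x, 0 ≤ f x := fun x => 
    mul_nonneg (Hs_nonneg (inv_unit q x (by omega)).1 (inv_unit q x (by omega)).2) (by positivity)
  have hf4 : ∀ x, f x ≤ 4 := fun x => by
    have h1 := Hs_le (inv_unit q x (by omega)).1 (inv_unit q x (by omega)).2
    have h2 : 1 / (1 + (x : ℝ) / q) ≤ 1 := by
      rw [div_le_one (by positivity)]; linarith [show 0 ≤ (x:ℝ)/q by positivity]
    calc f x ≤ 4 * 1 := by
          apply mul_le_mul h1 h2 (by positivity) (by norm_num)
      _ = 4 := by norm_num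
  set Y := (Finset.range q).filter (fun x : ℕ => x.Coprime q ∧ min l (R/q) < (x : ℝ) / q ∧ (x : ℝ) / q ≤ min r (R/q)) with hY
  set Z : Finset ℕ := {⌊l * q⌋₊, ⌊r * q⌋₊} with hZ
  have hZs : ∑ x ∈ Z, f x ≤ 8 := by
    have h1 : ∑ x ∈ Z, f x ≤ Z.card • (4:ℝ) := Finset.sum_le_card_nsmul _ _ _ fun x _ => hf4 x
    have h2 : (Z.card : ℝ) ≤ 2 := by exact_mod_cast Finset.card_le_two
    rw [nsmul_eq_mul] at h1
    linarith
  have hpos : ∀ x : ℕ, x.Coprime q → x < q → (x:ℝ) / q ∈ Ioo (0:ℝ) 1 := by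
    intro x hx hxq
    have : x ≠ 0 := by
      rintro rfl
      simp at hx; omega
    have : (0:ℝ) < x := by positivity
    refine ⟨by positivity, ?_⟩
    rw [div_lt_one hq0]; exact_mod_cast hxq
  have hXY : XX q R J ⊆ Y ∪ Z := by
    intro x hx
    rw [mem_XX] at hx
    obtain ⟨h1, h2, h3, h4⟩ := hx
    have h5 := hJ2 _ h4
    rcases h5.1.lt_or_eq with h6 | h6
    · refine Finset.mem_union_left _ (Finset.mem_filter.mpr ⟨Finset.mem_range.mpr h1, h2, (min_le_left _ _).trans_lt h6, le_min h5.2 ?_⟩)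
      gcongr
    · refine Finset.mem_union_right _ ?_
      rw [hZ, h6, div_mul_cancel₀ _ hq0.ne', Nat.floor_natCast]
      simp
  have hYX : Y ⊆ XX q R J ∪ Z := by
    intro x hx
    simp only [hY, Finset.mem_filter, Finset.mem_range] at hx
    obtain ⟨h1, h2, h3, h4⟩ := hx
    rw [le_min_iff] at h4
    rw [min_lt_iff] at h3
    have h3' : l < (x:ℝ) / q := by
      rcases h3 with h | h
      · exact h
      · linarith [h4.2]
    rcases h4.1.lt_or_eq with h6 | h6
    · refine Finset.mem_union_left _ (mem_XX.mpr ⟨h1, h2, ?_, hJ1 _ (hpos x h2 h1) h3' h6⟩)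
      have := h4.2
      rwa [div_le_div_iff_of_pos_right hq0] at this
    · refine Finset.mem_union_right _ ?_
      rw [hZ, ← h6, div_mul_cancel₀ _ hq0.ne', Nat.floor_natCast]
      simp
  have cmp : ∀ A B : Finset ℕ, A ⊆ B ∪ Z → ∑ x ∈ A, f x ≤ ∑ x ∈ B, f x + 8 := by
    intro A B hAB
    have h1 : ∑ x ∈ A, f x ≤ ∑ x ∈ B ∪ Z, f x := Finset.sum_le_sum_of_subset_of_nonneg hAB fun x _ _ => hf0 x
    have h2 := Finset.sum_union_inter (s₁ := B) (s₂ := Z) (f := f)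
    have h3 : 0 ≤ ∑ x ∈ B ∩ Z, f x := Finset.sum_nonneg fun x _ => hf0 x
    linarith
  have c1 := cmp _ _ hXY
  have c2 := cmp _ _ hYX
  have h := abs_le.mp h
  rw [abs_le]
  constructor <;> linarith [h.1, h.2]

lemma QQ_card (a b R : ℝ) (hb : 1 < b) (hR : 1 ≤ R) : ((QQ a b R).card : ℝ) ≤ 3 * b * R := by
  have h1 : (QQ a b R).card ≤ ⌈b * R⌉₊ + 1 := by
    unfold QQ
    exact (Finset.card_filter_le _ _).trans (by simp)
  have h2 : (⌈b * R⌉₊ : ℝ) < b * R + 1 := Nat.ceil_lt_add_one (by positivity)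
  have h3 : ((QQ a b R).card : ℝ) ≤ ⌈b * R⌉₊ + 1 := by exact_mod_cast h1
  nlinarith

lemma G1 (a b : ℝ) (ha : 1 < a) (hab : a < b) (J : Set ℝ) (l r : ℝ) (hl : 0 ≤ l) (hlr : l ≤ r) (hr : r ≤ 1)
    (hJ1 : ∀ u ∈ Ioo (0:ℝ) 1, l < u → u < r → u ∈ J) (hJ2 : ∀ u ∈ J, l ≤ u ∧ u ≤ r) :
    Tendsto (fun R : ℝ => ∑ q ∈ QQ a b R, ∑ x ∈ XX q R J, wt q x - 
      ∑ q ∈ QQ a b R, (q.totient : ℝ) / q / R * Bf l r (q / R)) atTop (𝓝 0) := by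
  rw [Metric.tendsto_nhds]
  intro ε hε
  have hb : 0 < b := by linarith
  obtain ⟨Q, hQ⟩ := inner_J J l r hl hlr hr hJ1 hJ2 (ε / (12 * b)) (by positivity)
  filter_upwards [eventually_ge_atTop (max 1 Q : ℝ), eventually_ge_atTop (96 * b / ε)] with R hR1 hR2
  rw [max_le_iff] at hR1
  have hR0 : (0:ℝ) < R := by linarith [hR1.1]
  rw [Real.dist_eq, sub_zero, ← Finset.sum_sub_distrib]
  have hterm : ∀ q ∈ QQ a b R, |∑ x ∈ XX q R J, wt q x - (q.totient : ℝ) / q / R * Bf l r (q / R)| ≤ 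
      ε / (12 * b) / R + 8 / R ^ 2 := by
    intro q hq
    rw [mem_QQ hR0] at hq
    have hqR : R < q := by
      have := ha.trans hq.1
      rwa [one_lt_div hR0] at this
    have hq0 : (0:ℝ) < q := by linarith
    have hQq : Q ≤ q := by
      have : (Q:ℝ) ≤ q := by linarith [hR1.2]
      exact_mod_cast this
    have h := hQ q hQq R hR0 hqR
    have e : ∑ x ∈ XX q R J, wt q x - (q.totient : ℝ) / q / R * Bf l r (q / R) = 
      (∑ x ∈ XX q R J, Hs ((invm q x : ℝ) / q) * (1 / (1 + (x : ℝ) / q)) - 2 * q.totient * Af l r (R / q)) / (q:ℝ)^2 := by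
      rw [sub_div, Finset.sum_div]
      congr 1
      unfold Bf
      rw [one_div_div]
      field_simp
    rw [e, abs_div, abs_of_pos (show (0:ℝ) < (q:ℝ)^2 by positivity), div_le_iff₀ (by positivity)]
    refine h.trans ?_
    have e1 : ε / (12 * b) * q ≤ ε / (12 * b) / R * (q:ℝ) ^ 2 := by
      rw [div_mul_eq_mul_div _ R, le_div_iff₀ hR0, sq, ← mul_assoc]
      gcongr
    have e2 : (8:ℝ) ≤ 8 / R ^ 2 * (q:ℝ) ^ 2 := by
      rw [div_mul_eq_mul_div, le_div_iff₀ (by positivity)]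
      gcongr
    linarith
  refine (Finset.abs_sum_le_sum_abs _ _).trans_lt ?_
  refine (Finset.sum_le_card_nsmul _ _ _ hterm).trans_lt ?_
  rw [nsmul_eq_mul]
  have hc := QQ_card a b R (by linarith) hR1.1
  calc _ ≤ (3 * b * R) * (ε / (12 * b) / R + 8 / R ^ 2) := by gcongr
    _ = ε / 4 + 24 * b / R := by field_simp; ring
    _ ≤ ε / 4 + ε / 4 := by
        refine add_le_add le_rfl ?_
        rw [div_le_iff₀ hR0]
        rw [div_le_iff₀ hε] at hR2
        linarith
    _ < ε := by linarith

lemma G2 (a b : ℝ) (ha : 1 < a) (hab : a < b) (l r : ℝ) (hl : 0 ≤ l) (hlr : l ≤ r) (hr : r ≤ 1) :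
    Tendsto (fun R : ℝ => ∑ q ∈ (Finset.Ioc 0 ⌊b * R⌋₊).filter (fun q : ℕ => a < (q : ℝ) / R ∧ (q : ℝ) / R ≤ b), 
      (q.totient : ℝ) / q / R * Bf l r (q / R)) atTop (𝓝 (kap * ∫ y in a..b, Bf l r y)) := by
  rw [Metric.tendsto_nhds]
  intro ε hε
  have hb : 0 < b := by linarith
  have hk := kap_nonneg
  obtain ⟨n, hn⟩ := exists_nat_gt (4 * (kap * 2 * (b - a)) / ε)
  have hn0 : (0:ℝ) < n := lt_of_le_of_lt (div_nonneg (mul_nonneg (by norm_num) (mul_nonneg (by positivity) (by linarith))) hε.le) hn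
  obtain ⟨X0, hX0⟩ := totient_mean (ε / (16 * n * b)) (by positivity)
  filter_upwards [eventually_ge_atTop (max 1 X0 : ℝ)] with R hR1
  rw [max_le_iff] at hR1
  have hR0 : (0:ℝ) < R := by linarith [hR1.1]
  have h := weight_lemma (Finset.Ioc 0 ⌊b * R⌋₊) (fun q : ℕ => (q:ℝ) / R) (fun q : ℕ => (q.totient : ℝ) / q / R)
    (fun q _ => by positivity) kap (ε / (16 * n)) hk a b hab.le ?_ (Bf l r) (Bf_anti l r a b hl hlr (by linarith)) 2
    (fun t ht => Bf_nonneg l r t hl hlr (by linarith [ht.1])) (fun t ht => Bf_le l r t hl hlr hr (by linarith [ht.1])) n (by exact_mod_cast hn0)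
  · rw [Real.dist_eq]
    refine h.trans_lt ?_
    have e1 : 2 * (n:ℝ) * (ε / (16 * n)) * 2 = ε / 4 := by field_simp; norm_num
    have e2 : kap * 2 * ((b - a) / n) ≤ ε / 4 := by
      rw [← mul_div_assoc, div_le_iff₀ hn0]
      rw [div_lt_iff₀ hε] at hn
      linarith
    linarith
  · intro t ht
    have ht0 : 0 < t := by linarith [ht.1]
    have h1 := hX0 (t * R) (by nlinarith [ht.1, hR1.2])
    have e : (Finset.Ioc 0 ⌊b * R⌋₊).filter (fun q : ℕ => (q:ℝ) / R ≤ t) = Finset.Ioc 0 ⌊t * R⌋₊ := by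
      ext q
      simp only [Finset.mem_filter, Finset.mem_Ioc]
      rw [div_le_iff₀ hR0, Nat.le_floor_iff (by positivity), Nat.le_floor_iff (by positivity)]
      constructor
      · rintro ⟨⟨h, _⟩, h'⟩; exact ⟨h, h'⟩
      · rintro ⟨h, h'⟩; exact ⟨⟨h, h'.trans (by gcongr; exact ht.2)⟩, h'⟩
    rw [e, ← Finset.sum_div]
    have e2 : (∑ i ∈ Finset.Ioc 0 ⌊t * R⌋₊, (i.totient : ℝ) / i) / R - kap * t = 
      (∑ i ∈ Finset.Ioc 0 ⌊t * R⌋₊, (i.totient : ℝ) / i - kap * (t * R)) / R := by field_simp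
    rw [e2, abs_div, abs_of_pos hR0, div_le_iff₀ hR0]
    refine h1.trans ?_
    calc ε / (16 * n * b) * (t * R) ≤ ε / (16 * n * b) * (b * R) := by gcongr; exact ht.2
      _ = _ := by field_simp

lemma G3 (a b : ℝ) (ha : 1 < a) (hab : a < b) (l r : ℝ) (hl : 0 ≤ l) (hlr : l ≤ r) (hr : r ≤ 1) (R : ℝ) (hR : 1 ≤ R) :
    |∑ q ∈ QQ a b R, (q.totient : ℝ) / q / R * Bf l r (q / R) - 
    ∑ q ∈ (Finset.Ioc 0 ⌊b * R⌋₊).filter (fun q : ℕ => a < (q : ℝ) / R ∧ (q : ℝ) / R ≤ b), 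
      (q.totient : ℝ) / q / R * Bf l r (q / R)| ≤ 2 / R := by
  have hR0 : 0 < R := by linarith
  have hb : 0 < b := by linarith
  set T := (Finset.Ioc 0 ⌊b * R⌋₊).filter (fun q : ℕ => a < (q : ℝ) / R ∧ (q : ℝ) / R ≤ b)
  set f : ℕ → ℝ := fun q => (q.totient : ℝ) / q / R * Bf l r (q / R) with hf
  have hf0 : ∀ q ∈ T, 0 ≤ f q := by
    intro q _
    have := Bf_nonneg l r (q / R) hl hlr (by positivity)
    simp only [hf]; positivity
  have hf1 : ∀ q ∈ T, f q ≤ 2 / R := by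
    intro q hq
    have hq := (Finset.mem_filter.mp hq).2.1
    have h1 := Bf_le l r (q / R) hl hlr hr (by linarith)
    have h0 := Bf_nonneg l r (q / R) hl hlr (by positivity)
    have h2 : (q.totient : ℝ) / q ≤ 1 := div_le_one_of_le₀ (by exact_mod_cast Nat.totient_le q) (by positivity)
    calc f q ≤ 1 / R * 2 := by simp only [hf]; gcongr
      _ = _ := by ring
  have hsub : QQ a b R ⊆ T := by
    intro q hq
    rw [mem_QQ hR0] at hq
    refine Finset.mem_filter.mpr ⟨?_, hq.1, hq.2.le⟩
    rw [Finset.mem_Ioc, Nat.le_floor_iff (by positivity), ← div_le_iff₀ hR0]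
    refine ⟨?_, hq.2.le⟩
    rcases Nat.eq_zero_or_pos q with rfl | h
    · simp at hq; linarith [hq.1]
    · exact h
  have hdiff : T \ QQ a b R ⊆ {⌊b * R⌋₊} := by
    intro q hq
    rw [Finset.mem_sdiff, mem_QQ hR0] at hq
    have h1 := (Finset.mem_filter.mp hq.1).2
    have h2 : (q:ℝ) / R = b := by
      by_contra hne
      exact hq.2 ⟨h1.1, lt_of_le_of_ne h1.2 hne⟩
    rw [Finset.mem_singleton, ← h2, div_mul_cancel₀ _ hR0.ne', Nat.floor_natCast]
  have hs := Finset.sum_sdiff (f := f) hsub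
  have h0 : 0 ≤ ∑ q ∈ T \ QQ a b R, f q := Finset.sum_nonneg fun q hq => hf0 q (Finset.mem_sdiff.mp hq).1
  have h1 : ∑ q ∈ T \ QQ a b R, f q ≤ 2 / R := by
    have hh : ∑ q ∈ T \ QQ a b R, f q ≤ (T \ QQ a b R).card • (2 / R) := Finset.sum_le_card_nsmul _ _ _ fun q hq => hf1 q (Finset.mem_sdiff.mp hq).1
    have hc : ((T \ QQ a b R).card : ℝ) ≤ 1 := by exact_mod_cast (Finset.card_le_card hdiff).trans (by simp)
    rw [nsmul_eq_mul] at hh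
    refine hh.trans ?_
    calc _ ≤ 1 * (2 / R) := by gcongr
      _ = _ := one_mul _
  rw [abs_le]; constructor <;> linarith

lemma main_sum (a b : ℝ) (ha : 1 < a) (hab : a < b) (J : Set ℝ) (l r : ℝ) (hl : 0 ≤ l) (hlr : l ≤ r) (hr : r ≤ 1)
    (hJ1 : ∀ u ∈ Ioo (0:ℝ) 1, l < u → u < r → u ∈ J) (hJ2 : ∀ u ∈ J, l ≤ u ∧ u ≤ r) :
    Tendsto (fun R : ℝ => ∑ q ∈ QQ a b R, ∑ x ∈ XX q R J, wt q x) atTop (𝓝 (kap * ∫ y in a..b, Bf l r y)) := by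
  have h3 : Tendsto (fun R : ℝ => ∑ q ∈ QQ a b R, (q.totient : ℝ) / q / R * Bf l r (q / R) - 
    ∑ q ∈ (Finset.Ioc 0 ⌊b * R⌋₊).filter (fun q : ℕ => a < (q : ℝ) / R ∧ (q : ℝ) / R ≤ b), 
      (q.totient : ℝ) / q / R * Bf l r (q / R)) atTop (𝓝 0) := by
    refine squeeze_zero_norm' ?_ (tendsto_const_nhds.div_atTop tendsto_id (a := (2:ℝ)))
    filter_upwards [eventually_ge_atTop 1] with R hR
    exact G3 a b ha hab l r hl hlr hr R hR
  have := ((G1 a b ha hab J l r hl hlr hr hJ1 hJ2).add h3).add (G2 a b ha hab l r hl hlr hr)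
  rw [add_zero, zero_add] at this
  refine this.congr fun R => ?_
  ring


/-- irrationals of the unit interval -/
def IU : Set ℝ := {α | α ∈ Ioo (0:ℝ) 1 ∧ Irrational α}

lemma irr_inv {x : ℝ} (hx : Irrational x) : Irrational (1 / x) := by
  rw [one_div]; exact hx.inv

lemma gauss_IU {x : ℝ} (hx : x ∈ IU) : gaussMap x ∈ IU := by
  have h := irr_inv hx.2
  have h2 : Irrational (gaussMap x) := by
    unfold gaussMap
    rw [Int.fract]
    exact h.sub_intCast _
  refine ⟨⟨lt_of_le_of_ne (Int.fract_nonneg _) (Ne.symm h2.ne_zero), Int.fract_lt_one _⟩, h2⟩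

lemma iter_IU {α : ℝ} (h : α ∈ IU) (n : ℕ) : gaussMap^[n] α ∈ IU := by
  induction n with
  | zero => exact h
  | succ n ih => rw [Function.iterate_succ_apply']; exact gauss_IU ih

lemma gauss_of (a : ℕ) (t : ℝ) (h0 : 0 ≤ t) (h1 : t < 1) : gaussMap (1 / (a + t)) = t := by
  unfold gaussMap
  rw [one_div_one_div, Int.fract_natCast_add, Int.fract_eq_self.mpr ⟨h0, h1⟩]

lemma floor_of (a : ℕ) (t : ℝ) (h0 : 0 ≤ t) (h1 : t < 1) : ⌊1 / (1 / ((a:ℝ) + t))⌋₊ = a := by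
  rw [one_div_one_div, Nat.floor_eq_iff (by positivity)]
  constructor <;> linarith

lemma gauss_rec {x : ℝ} (hx : x ∈ IU) : x * ((⌊1 / x⌋₊ : ℝ) + gaussMap x) = 1 := by
  have h0 : 0 < x := hx.1.1
  have h1 : (0:ℝ) ≤ 1 / x := by positivity
  have h2 : ((⌊1 / x⌋₊ : ℕ) : ℝ) = (⌊1 / x⌋ : ℝ) := by
    exact natCast_floor_eq_intCast_floor h1
  unfold gaussMap
  rw [h2, Int.floor_add_fract]
  field_simp

lemma pq_succ (α : ℝ) (n : ℕ) : pq α (n + 1) = ⌊1 / gaussMap^[n] α⌋₊ := by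
  simp [pq]

lemma pq_pos {α : ℝ} (h : α ∈ IU) (n : ℕ) : 1 ≤ pq α n := by
  unfold pq
  have := iter_IU h (n - 1)
  rw [Nat.one_le_floor_iff, le_div_iff₀ this.1.1]
  linarith [this.1.2]

lemma pq_rec {α : ℝ} (h : α ∈ IU) (n : ℕ) : gaussMap^[n] α * ((pq α (n + 1) : ℝ) + gaussMap^[n+1] α) = 1 := by
  rw [pq_succ, Function.iterate_succ_apply']
  exact gauss_rec (iter_IU h n)

lemma qden_rec (b : ℕ → ℕ) (n : ℕ) : qden b (n + 2) = b (n + 2) * qden b (n + 1) + qden b n := rfl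
lemma pnum_rec (b : ℕ → ℕ) (n : ℕ) : pnum b (n + 2) = b (n + 2) * pnum b (n + 1) + pnum b n := rfl

lemma cf_id {α : ℝ} (h : α ∈ IU) (n : ℕ) : 
    α * ((qden (pq α) (n+1) : ℝ) + qden (pq α) n * gaussMap^[n+1] α) = pnum (pq α) (n+1) + pnum (pq α) n * gaussMap^[n+1] α := by
  induction n with
  | zero =>
    have := pq_rec h 0
    simp only [qden, pnum, Function.iterate_zero, id] at this ⊢
    push_cast
    linarith
  | succ n ih =>
    have hr := pq_rec h (n+1)
    have hT := (iter_IU h (n+1)).1.1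
    rw [qden_rec, pnum_rec]
    push_cast
    set T := gaussMap^[n+1] α
    set T' := gaussMap^[n+1+1] α
    have e : (pq α (n + 1 + 1) : ℝ) + T' = 1 / T := by
      field_simp
      linarith
    have e2 : (pq α (n + 2) : ℝ) = 1 / T - T' := by
      rw [← e]; ring
    rw [e2]
    field_simp
    linear_combination ih

lemma cf_det (b : ℕ → ℕ) (n : ℕ) : (pnum b (n+1) : ℤ) * qden b n - pnum b n * qden b (n+1) = (-1) ^ n := by
  induction n with
  | zero => simp [pnum, qden]
  | succ n ih =>
    rw [qden_rec, pnum_rec, pow_succ]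
    push_cast
    linear_combination (-1) * ih

lemma qden_pos {b : ℕ → ℕ} (hb : ∀ n, 1 ≤ b n) (n : ℕ) : 0 < qden b n := by
  induction n using Nat.strong_induction_on with
  | _ n ih =>
    match n with
    | 0 => simp [qden]
    | 1 => exact hb 1
    | n + 2 => rw [qden_rec]; have := ih n (by omega); omega

lemma qden_mono {b : ℕ → ℕ} (hb : ∀ n, 1 ≤ b n) : Monotone (qden b) := by
  refine monotone_nat_of_le_succ fun n => ?_
  match n with
  | 0 => exact hb 1
  | n + 1 =>
    rw [qden_rec]
    have := hb (n + 2)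
    nlinarith [Nat.zero_le (qden b (n+1))]

lemma qden_lt {b : ℕ → ℕ} (hb : ∀ n, 1 ≤ b n) (n : ℕ) : qden b (n+1) < qden b (n+2) := by
  rw [qden_rec]
  have h1 := hb (n + 2)
  have h2 := qden_pos hb n
  nlinarith [Nat.zero_le (qden b (n+1))]

lemma qden_ge {b : ℕ → ℕ} (hb : ∀ n, 1 ≤ b n) (n : ℕ) : n ≤ qden b n := by
  match n with
  | 0 => omega
  | n + 1 =>
    induction n with
    | zero => exact hb 1
    | succ n ih => have := qden_lt hb n; show n + 2 ≤ qden b (n+2); omega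

lemma pnum_le {b : ℕ → ℕ} (hb : ∀ n, 1 ≤ b n) (n : ℕ) : pnum b n ≤ qden b n := by
  induction n using Nat.strong_induction_on with
  | _ n ih =>
    match n with
    | 0 => simp [qden, pnum]
    | 1 => exact hb 1
    | n + 2 =>
      rw [qden_rec, pnum_rec]
      have h1 := ih n (by omega)
      have h2 := ih (n+1) (by omega)
      gcongr

lemma qden_coprime (b : ℕ → ℕ) (n : ℕ) : (qden b n).Coprime (qden b (n+1)) := by
  rw [← Nat.isCoprime_iff_coprime]
  have h := cf_det b n
  rcases neg_one_pow_eq_or ℤ n with h1 | h1 <;> rw [h1] at h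
  · exact ⟨pnum b (n+1), -pnum b n, by linarith⟩
  · exact ⟨-pnum b (n+1), pnum b n, by linarith⟩

/-- structure lemma: realisation of a given pair of consecutive denominators -/
lemma realize (x : ℕ) : ∀ (q : ℕ) (p p' : ℤ) (t α : ℝ), 1 ≤ x → x < q → 0 ≤ p' → p' ≤ x → 0 ≤ p → p ≤ q → 
    (p * x - p' * q = 1 ∨ p * x - p' * q = -1) → 0 < t → t < 1 → α = (p + p' * t) / (q + x * t) →
    ∃ n, qden (pq α) (n+1) = q ∧ qden (pq α) n = x ∧ gaussMap^[n+1] α = t := by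
  induction x using Nat.strong_induction_on with
  | _ x ih =>
  intro q p p' t α hx hxq hp'0 hp'x hp0 hpq hdet ht0 ht1 hα
  rcases Nat.eq_or_lt_of_le hx with hx1 | hx1
  · subst hx1
    have hp' : p' = 0 ∨ p' = 1 := by push_cast at hp'x; omega
    rcases hp' with rfl | rfl
    · have hp : p = 1 := by push_cast at hdet; omega
      subst hp
      have hα' : α = 1 / ((q:ℝ) + t) := by rw [hα]; push_cast; simp
      refine ⟨0, ?_, ?_, ?_⟩
      · show pq α 1 = q
        rw [pq_succ, Function.iterate_zero, id, hα', floor_of q t ht0.le ht1]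
      · rfl
      · rw [Function.iterate_one, hα', gauss_of q t ht0.le ht1]
    · have hp : p = q - 1 := by push_cast at hdet; omega
      subst hp
      have hq1 : ((q - 1 : ℕ) : ℝ) = (q:ℝ) - 1 := by rw [Nat.cast_sub (by omega)]; simp
      have hq2 : (2:ℝ) ≤ q := by exact_mod_cast hxq
      set s : ℝ := 1 / (((q - 1 : ℕ) : ℝ) + t) with hs
      have hs0 : 0 < s := by rw [hs, hq1]; apply one_div_pos.mpr; linarith
      have hs1 : s < 1 := by rw [hs, hq1, div_lt_one (by linarith)]; linarith
      have hα' : α = 1 / (((1:ℕ):ℝ) + s) := by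
        rw [hα, hs, hq1]
        have : (q:ℝ) - 1 + t ≠ 0 := by linarith
        have h2 : (q:ℝ) + t ≠ 0 := by linarith
        push_cast
        rw [one_add_div this]
        rw [one_div_div]
        congr 1 <;> ring
      have g1 : gaussMap α = s := by rw [hα', gauss_of 1 s hs0.le hs1]
      have p1 : pq α 1 = 1 := by
        rw [pq_succ, Function.iterate_zero, id, hα', floor_of 1 s hs0.le hs1]
      have p2 : pq α 2 = q - 1 := by
        rw [pq_succ, Function.iterate_one, g1, hs, floor_of (q-1) t ht0.le ht1]
      refine ⟨1, ?_, ?_, ?_⟩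
      · show pq α 2 * pq α 1 + 1 = q
        rw [p1, p2]; omega
      · exact p1
      · show gaussMap (gaussMap α) = t
        rw [g1, hs, gauss_of (q-1) t ht0.le ht1]
  · set a := q / x with ha
    set r := q % x with hr
    have hqar : q = a * x + r := by rw [ha, hr, mul_comm]; exact (Nat.div_add_mod q x).symm
    have hrx : r < x := Nat.mod_lt _ (by omega)
    have hqz : (q:ℤ) = a * x + r := by exact_mod_cast hqar
    have hr1 : 1 ≤ r := by
      by_contra h
      have h0 : r = 0 := by omega
      rw [hqz, h0] at hdet
      have hdvd : (x:ℤ) ∣ 1 := by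
        rcases hdet with h | h
        · exact ⟨p - p' * a, by rw [← h]; push_cast; ring⟩
        · exact ⟨-(p - p' * a), by push_cast at h; linear_combination h⟩
      have := Int.le_of_dvd one_pos hdvd
      omega
    have ha1 : 1 ≤ a := (Nat.one_le_div_iff (by omega)).mpr hxq.le
    have hp'1 : 1 ≤ p' := by
      by_contra h
      have h0 : p' = 0 := by omega
      rw [h0] at hdet
      have hdvd : (x:ℤ) ∣ 1 := by
        rcases hdet with h | h
        · exact ⟨p, by linarith⟩
        · exact ⟨-p, by linarith⟩
      have := Int.le_of_dvd one_pos hdvd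
      omega
    have hr1' : (1:ℤ) ≤ r := by exact_mod_cast hr1
    have hx2' : (2:ℤ) ≤ x := by exact_mod_cast hx1
    have hdet' : p' * r - (p - a * p') * x = 1 ∨ p' * r - (p - a * p') * x = -1 := by
      rw [hqz] at hdet
      rcases hdet with h | h
      · right; linear_combination -h
      · left; linear_combination -h
    have hp'' : 0 ≤ p - a * p' := by
      by_contra h
      have h1 : p - a * p' ≤ -1 := by omega
      have : (p - a * p') * x ≤ -1 * x := by gcongr
      have : 1 ≤ p' * r := by nlinarith
      omega
    have hp''r : p - a * p' ≤ r := by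
      by_contra h
      have h1 : (r:ℤ) + 1 ≤ p - a * p' := by omega
      have h2 : ((r:ℤ) + 1) * x ≤ (p - a * p') * x := by gcongr
      have h3 : p' * r ≤ x * r := by gcongr
      have h4 : ((r:ℤ) + 1) * x = x * r + x := by ring
      omega
    have ha1' : (1:ℝ) ≤ a := by exact_mod_cast ha1
    have hx0 : (0:ℝ) < x := by positivity
    have hr0 : (0:ℝ) < r := by positivity
    obtain ⟨n, h1, h2, h3⟩ := ih r hrx x p' (p - a * p') (1 / (a + t)) α hr1 hrx hp'' hp''r hp'0 hp'x hdet'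
      (by positivity) (by rw [div_lt_one (by positivity)]; linarith) (by
        rw [hα]
        have hqr : (q:ℝ) = a * x + r := by exact_mod_cast hqar
        rw [hqr]
        push_cast
        have : (a:ℝ) + t ≠ 0 := by positivity
        rw [div_eq_div_iff (by positivity) (by positivity)]
        field_simp
        ring)
    have p2 : pq α (n+2) = a := by
      rw [pq_succ, h3, floor_of a t ht0.le ht1]
    refine ⟨n+1, ?_, h1, ?_⟩
    · rw [qden_rec, p2, h1, h2, hqar]
    · rw [Function.iterate_succ_apply', h3, gauss_of a t ht0.le ht1]


def SS (x q : ℕ) : Set ℝ := {α | α ∈ IU ∧ ∃ n, qden (pq α) (n+1) = q ∧ qden (pq α) n = x}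

lemma irr_of_moebius {α t : ℝ} (hα : Irrational α) (p p' : ℤ) (q x : ℕ) (h : α = (p + p' * t) / (q + x * t)) : Irrational t := by
  rintro ⟨c, rfl⟩
  apply hα
  exact ⟨(p + p' * c) / (q + x * c), by rw [h]; push_cast; rfl⟩

lemma invm_spec (q x : ℕ) (hq : 2 ≤ q) (hc : x.Coprime q) : 
    1 ≤ invm q x ∧ invm q x < q ∧ (q:ℤ) ∣ (invm q x : ℤ) * x - 1 := by
  have : NeZero q := ⟨by omega⟩
  have : Fact (1 < q) := ⟨by omega⟩
  have h1 : ((invm q x : ℕ) : ZMod q) * x = 1 := by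
    rw [invm, ZMod.natCast_zmod_val, mul_comm, ZMod.coe_mul_inv_eq_one _ hc]
  refine ⟨?_, ZMod.val_lt _, ?_⟩
  · by_contra h
    have h0 : invm q x = 0 := by omega
    rw [h0] at h1
    simp at h1
  · rw [← ZMod.intCast_zmod_eq_zero_iff_dvd]
    push_cast
    rw [h1, sub_self]

lemma mem_left_interval {α t Q X : ℝ} (p p' : ℝ) (hQ : 0 < Q) (hX : 0 < X) (ht0 : 0 < t) (ht1 : t < 1) 
    (hdet : p * X - p' * Q = 1) (h : α * (Q + X * t) = p + p' * t) : 
    α ∈ Ioo (p / Q - 1 / (Q * (Q + X))) (p / Q) := by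
  have hα : α = p / Q - t / (Q * (Q + X * t)) := by
    have : Q + X * t ≠ 0 := by positivity
    have hp' : p' = (p * X - 1) / Q := by field_simp; linarith
    rw [hp'] at h
    field_simp at h ⊢
    linarith
  have h1 : t / (Q * (Q + X * t)) < 1 / (Q * (Q + X)) := by
    rw [div_lt_div_iff₀ (by positivity) (by positivity)]
    nlinarith [mul_pos hQ hQ]
  have h2 : 0 < t / (Q * (Q + X * t)) := by positivity
  rw [hα]; constructor <;> linarith

lemma mem_right_interval {α t Q X : ℝ} (p p' : ℝ) (hQ : 0 < Q) (hX : 0 < X) (ht0 : 0 < t) (ht1 : t < 1) 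
    (hdet : p * X - p' * Q = -1) (h : α * (Q + X * t) = p + p' * t) : 
    α ∈ Ioo (p / Q) (p / Q + 1 / (Q * (Q + X))) := by
  have := mem_left_interval (α := -α) (-p) (-p') hQ hX ht0 ht1 (by linarith) (by linarith)
  rw [neg_div] at this
  constructor <;> linarith [this.1, this.2]

lemma solve_left {α Q X : ℝ} (p p' : ℝ) (hQ : 0 < Q) (hX : 0 < X) 
    (hdet : p * X - p' * Q = 1) (h : α ∈ Ioo (p / Q - 1 / (Q * (Q + X))) (p / Q)) : 
    ∃ t, 0 < t ∧ t < 1 ∧ α = (p + p' * t) / (Q + X * t) := by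
  have h1 : α * Q < p := by have := h.2; rwa [lt_div_iff₀ hQ] at this
  have h2 : p + p' < α * (Q + X) := by
    have h3 := h.1
    have e : p / Q - 1 / (Q * (Q + X)) = (p + p') / (Q + X) := by
      field_simp
      linarith
    rw [e, div_lt_iff₀ (by positivity)] at h3
    exact h3
  have h3 : 0 < α * X - p' := by nlinarith
  refine ⟨(p - α * Q) / (α * X - p'), div_pos (by linarith) h3, by rw [div_lt_one h3]; linarith, ?_⟩
  have h4 : α * X - p' ≠ 0 := h3.ne'
  have h5 : Q + X * ((p - α * Q) / (α * X - p')) = 1 / (α * X - p') := by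
    rw [eq_div_iff h4, add_mul, mul_assoc, div_mul_cancel₀ _ h4]
    linear_combination hdet
  have h6 : p + p' * ((p - α * Q) / (α * X - p')) = α * (1 / (α * X - p')) := by
    rw [mul_one_div, eq_div_iff h4, add_mul, mul_assoc, div_mul_cancel₀ _ h4]
    linear_combination α * hdet
  rw [h5, h6, mul_div_assoc, div_self (by positivity), mul_one]

lemma solve_right {α Q X : ℝ} (p p' : ℝ) (hQ : 0 < Q) (hX : 0 < X) 
    (hdet : p * X - p' * Q = -1) (h : α ∈ Ioo (p / Q) (p / Q + 1 / (Q * (Q + X)))) : 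
    ∃ t, 0 < t ∧ t < 1 ∧ α = (p + p' * t) / (Q + X * t) := by
  obtain ⟨t, h0, h1, h2⟩ := solve_left (α := -α) (-p) (-p') hQ hX (by linarith) 
    ⟨by rw [neg_div]; linarith [h.2], by rw [neg_div]; linarith [h.1]⟩
  refine ⟨t, h0, h1, ?_⟩
  rw [← neg_neg α, h2, ← neg_div]
  congr 1; ring

lemma SS_eq (x q : ℕ) (hx : 1 ≤ x) (hxq : x < q) (hc : x.Coprime q) : 
    SS x q = (Ioo ((invm q x : ℝ) / q - 1 / (q * (q + x))) ((invm q x : ℝ) / q) ∩ {α | Irrational α}) ∪ 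
      (Ioo (1 - (invm q x : ℝ) / q) (1 - (invm q x : ℝ) / q + 1 / (q * (q + x))) ∩ {α | Irrational α}) := by
  obtain ⟨hv1, hvq, hvd⟩ := invm_spec q x (by omega) hc
  set v := invm q x
  have hQ : (0:ℝ) < q := by exact_mod_cast (show 0 < q by omega)
  have hX : (0:ℝ) < x := by positivity
  have e1v : 1 - (v:ℝ) / q = ((q:ℝ) - v) / q := by field_simp
  have hv1' : (1:ℝ) ≤ v := by exact_mod_cast hv1
  have hvq' : (v:ℝ) + 1 ≤ q := by exact_mod_cast hvq
  have hsmall : 1 / ((q:ℝ) * (q + x)) ≤ 1 / q := by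
    apply one_div_le_one_div_of_le hQ
    nlinarith [show (1:ℝ) ≤ q by linarith]
  have hvq1 : 1 / (q:ℝ) ≤ v / q := by gcongr
  have hvq2 : (v:ℝ) / q < 1 := by rw [div_lt_one hQ]; linarith
  obtain ⟨k, hk⟩ := hvd
  have hq0z : (0:ℤ) < q := by omega
  ext α
  constructor
  · rintro ⟨hα, n, hn1, hn2⟩
    have hid := cf_id hα n
    have hdet := cf_det (pq α) n
    have ht := iter_IU hα (n+1)
    have hple := pnum_le (fun n => pq_pos hα n) (n+1)
    rw [hn1, hn2] at hid hdet
    rw [hn1] at hple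
    set p := pnum (pq α) (n+1)
    set p' := pnum (pq α) n
    rcases neg_one_pow_eq_or ℤ n with h1 | h1 <;> rw [h1] at hdet
    · left
      refine ⟨?_, hα.2⟩
      have hdvd : (q:ℤ) ∣ (p:ℤ) - v := by
        have : IsCoprime (q:ℤ) x := (Nat.isCoprime_iff_coprime.mpr hc).symm
        refine this.dvd_of_dvd_mul_right (y := (p:ℤ) - v) ⟨p' - k, ?_⟩
        linear_combination hdet - hk
      have hpv : p = v := by
        obtain ⟨j, hj⟩ := hdvd
        have hp0 : 0 < p := by
          rcases Nat.eq_zero_or_pos p with h | h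
          · rw [h] at hdet
            have h2 : (0:ℤ) ≤ (p':ℤ) * q := by positivity
            push_cast at hdet; omega
          · exact h
        have hj1 : j < 1 := by
          by_contra hh
          have : (q:ℤ) * 1 ≤ q * j := by gcongr; omega
          omega
        have hj2 : -1 < j := by
          by_contra hh
          have : (q:ℤ) * j ≤ q * (-1) := by gcongr; omega
          omega
        have : j = 0 := by omega
        rw [this] at hj; omega
      rw [hpv] at hid hdet
      exact mem_left_interval (v:ℝ) (p':ℝ) hQ hX ht.1.1 ht.1.2 (by exact_mod_cast hdet) hid
    · right
      refine ⟨?_, hα.2⟩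
      have hdvd : (q:ℤ) ∣ (p:ℤ) + v := by
        have : IsCoprime (q:ℤ) x := (Nat.isCoprime_iff_coprime.mpr hc).symm
        refine this.dvd_of_dvd_mul_right (y := (p:ℤ) + v) ⟨p' + k, ?_⟩
        linear_combination hdet + hk
      have hpv : (p:ℤ) = q - v := by
        obtain ⟨j, hj⟩ := hdvd
        have hj1 : j < 2 := by
          by_contra hh
          have : (q:ℤ) * 2 ≤ q * j := by gcongr; omega
          omega
        have hj2 : 0 < j := by
          by_contra hh
          have : (q:ℤ) * j ≤ q * 0 := by gcongr; omega
          omega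
        have : j = 1 := by omega
        rw [this] at hj; omega
      have hpv' : (p:ℝ) = (q:ℝ) - v := by exact_mod_cast hpv
      have hdet' : (p:ℝ) * x - p' * q = -1 := by exact_mod_cast hdet
      rw [hpv'] at hid hdet'
      rw [e1v]
      exact mem_right_interval ((q:ℝ) - v) (p':ℝ) hQ hX ht.1.1 ht.1.2 hdet' hid
  · have hk0 : 0 ≤ k := by
      by_contra hh
      have h1 : (q:ℤ) * k ≤ q * (-1) := by gcongr; omega
      have h2 : (0:ℤ) ≤ (v:ℤ) * x := by positivity
      omega
    have hkx : k < x := by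
      by_contra hh
      have h1 : (q:ℤ) * x ≤ q * k := by gcongr; omega
      have h2 : (v:ℤ) * x ≤ q * x := by gcongr
      omega
    rintro (⟨hI, hirr⟩ | ⟨hI, hirr⟩)
    · have hdet : (v:ℝ) * x - (k:ℝ) * q = 1 := by
        have : (v:ℤ) * x - k * q = 1 := by linear_combination hk
        exact_mod_cast this
      obtain ⟨t, ht0, ht1, htα⟩ := solve_left (v:ℝ) (k:ℝ) hQ hX hdet hI
      refine ⟨⟨⟨by linarith [hI.1], by linarith [hI.2]⟩, hirr⟩, ?_⟩
      obtain ⟨n, h1, h2, h3⟩ := realize x q v k t α hx hxq hk0 hkx.le (by positivity) (by exact_mod_cast hvq.le)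
        (Or.inl (by linear_combination hk)) ht0 ht1 (by exact_mod_cast htα)
      exact ⟨n, h1, h2⟩
    · have hdet : ((q:ℝ) - v) * x - ((x:ℝ) - k) * q = -1 := by
        have : ((q:ℤ) - v) * x - ((x:ℤ) - k) * q = -1 := by linear_combination -hk
        exact_mod_cast this
      rw [e1v] at hI
      obtain ⟨t, ht0, ht1, htα⟩ := solve_right ((q:ℝ) - v) ((x:ℝ) - k) hQ hX hdet hI
      rw [← e1v] at hI
      refine ⟨⟨⟨by linarith [hI.1], by linarith [hI.2]⟩, hirr⟩, ?_⟩
      obtain ⟨n, h1, h2, h3⟩ := realize x q ((q:ℤ) - v) ((x:ℤ) - k) t α hx hxq (by omega) (by omega) (by omega) (by omega)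
        (Or.inr (by linear_combination -hk)) ht0 ht1 (by push_cast; exact htα)
      exact ⟨n, h1, h2⟩


lemma gauss_ac : gaussMeasure ≪ (volume : Measure ℝ) :=
  (withDensity_absolutelyContinuous _ _).trans Measure.restrict_le_self.absolutelyContinuous

lemma hd_intble {c d : ℝ} (hc : 0 ≤ c) (hcd : c ≤ d) (hd1 : d ≤ 1) : IntervalIntegrable hd volume c d := by
  apply ContinuousOn.intervalIntegrable
  rw [uIcc_of_le hcd]
  exact hd_cont.mono (Icc_subset_Icc hc hd1)

lemma gauss_Ioo {c d : ℝ} (hc : 0 ≤ c) (hcd : c ≤ d) (hd1 : d ≤ 1) : 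
    gaussMeasure (Ioo c d) = ENNReal.ofReal (∫ x in c..d, hd x) := by
  unfold gaussMeasure
  rw [withDensity_apply _ measurableSet_Ioo, Measure.restrict_restrict measurableSet_Ioo,
    inter_eq_left.mpr (Ioo_subset_Ioo hc hd1), intervalIntegral.integral_of_le hcd,
    integral_Ioc_eq_integral_Ioo]
  change ∫⁻ x in Ioo c d, ENNReal.ofReal (hd x) = _
  rw [ofReal_integral_eq_lintegral_ofReal]
  · have := (hd_intble hc hcd hd1)
    rw [intervalIntegrable_iff_integrableOn_Ioo_of_le hcd] at this
    exact this
  · filter_upwards [ae_restrict_mem measurableSet_Ioo] with x hx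
    exact (hd_pos (by linarith [hx.1])).le

lemma gauss_irr (s : Set ℝ) : gaussMeasure (s ∩ {α | Irrational α}) = gaussMeasure s := by
  apply measure_inter_conull
  apply gauss_ac
  have : ({α : ℝ | Irrational α})ᶜ = range ((↑) : ℚ → ℝ) := by
    ext x; simp [Irrational]
  rw [this]
  exact (countable_range _).measure_zero _

lemma gauss_IU_meas : gaussMeasure IU = 1 := by
  have : IU = Ioo (0:ℝ) 1 ∩ {α | Irrational α} := rfl
  rw [this, gauss_irr, gauss_Ioo le_rfl zero_le_one le_rfl, hd_int, ENNReal.ofReal_one]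

lemma gauss_prob : IsProbabilityMeasure gaussMeasure := by
  constructor
  have : gaussMeasure univ = gaussMeasure (Ioo 0 1) := by
    unfold gaussMeasure
    rw [withDensity_apply _ MeasurableSet.univ, withDensity_apply _ measurableSet_Ioo]
    rw [Measure.restrict_restrict measurableSet_Ioo, Measure.restrict_univ, inter_self]
  rw [this, gauss_Ioo le_rfl zero_le_one le_rfl, hd_int, ENNReal.ofReal_one]

lemma meas_irr : MeasurableSet {α : ℝ | Irrational α} := by
  have : {α : ℝ | Irrational α} = (range ((↑) : ℚ → ℝ))ᶜ := by
    ext x; simp [Irrational]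
  rw [this]
  exact (countable_range _).measurableSet.compl

lemma hd_lip {x y : ℝ} (hx : 0 ≤ x) (hy : 0 ≤ y) : |hd x - hd y| ≤ 2 * |x - y| := by
  have hl : (1:ℝ)/2 ≤ Real.log 2 := by linarith [Real.log_two_gt_d9]
  unfold hd
  have h1 : 1 / (Real.log 2 * (1 + x)) - 1 / (Real.log 2 * (1 + y)) = (1 / (Real.log 2 * ((1+x)*(1+y)))) * (y - x) := by
    have := log2_pos
    field_simp
    ring
  rw [h1, abs_mul, abs_sub_comm y x]
  apply mul_le_mul_of_nonneg_right _ (abs_nonneg _)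
  rw [abs_of_nonneg (by positivity), div_le_iff₀ (by positivity)]
  nlinarith [mul_nonneg hx hy]

lemma gauss_Ioo_approx {c d w : ℝ} (hc : 0 ≤ c) (hcd : c ≤ d) (hd1 : d ≤ 1) (hw : w ∈ Icc c d) :
    |gaussMeasure.real (Ioo c d ∩ {α | Irrational α}) - hd w * (d - c)| ≤ 2 * (d - c)^2 := by
  rw [Measure.real, gauss_irr, gauss_Ioo hc hcd hd1, ENNReal.toReal_ofReal]
  · have : hd w * (d - c) = ∫ x in c..d, hd w := by simp [mul_comm]
    rw [this, ← intervalIntegral.integral_sub (hd_intble hc hcd hd1) (by simp)]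
    have := intervalIntegral.norm_integral_le_of_norm_le_const (a := c) (b := d) 
      (f := fun x => hd x - hd w) (C := 2 * (d - c)) ?_
    · rw [Real.norm_eq_abs, abs_of_nonneg (sub_nonneg.2 hcd)] at this
      linarith
    · intro x hx
      rw [uIoc_of_le hcd] at hx
      rw [Real.norm_eq_abs]
      refine (hd_lip (by linarith [hx.1]) (by linarith [hw.1])).trans ?_
      have : |x - w| ≤ d - c := by
        rw [abs_le]; constructor <;> linarith [hx.1, hx.2, hw.1, hw.2]
      linarith
  · apply intervalIntegral.integral_nonneg hcd
    intro u hu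
    exact (hd_pos (by linarith [hu.1])).le

lemma SS_meas (x q : ℕ) (hx : 1 ≤ x) (hxq : x < q) (hc : x.Coprime q) : MeasurableSet (SS x q) := by
  rw [SS_eq x q hx hxq hc]
  exact (measurableSet_Ioo.inter meas_irr).union (measurableSet_Ioo.inter meas_irr)

lemma SS_gauss (x q : ℕ) (hx : 1 ≤ x) (hxq : x < q) (hc : x.Coprime q) : 
    |gaussMeasure.real (SS x q) - wt q x| ≤ 4 / (q:ℝ)^4 := by
  have := gauss_prob
  rw [SS_eq x q hx hxq hc]
  obtain ⟨hv1, hvq, hvd⟩ := invm_spec q x (by omega) hc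
  unfold wt Hs
  set v := invm q x
  have hv1' : (1:ℝ) ≤ v := by exact_mod_cast hv1
  have hvq' : (v:ℝ) + 1 ≤ q := by exact_mod_cast hvq
  have hx' : (1:ℝ) ≤ x := by exact_mod_cast hx
  have hq' : (1:ℝ) < q := by linarith
  have hq0 : (0:ℝ) < q := by linarith
  set e : ℝ := 1 / (q * (q + x)) with he
  have he0 : 0 < e := by positivity
  have heq : e ≤ 1 / (q:ℝ) := by
    rw [he]; apply one_div_le_one_div_of_le hq0; nlinarith
  have heq2 : e ≤ 1 / (q:ℝ)^2 := by
    rw [he]; apply one_div_le_one_div_of_le (by positivity); nlinarith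
  have h1v : 1 / (q:ℝ) ≤ v / q := by gcongr
  have h2v : (v:ℝ) / q + 1 / q ≤ 1 := by rw [← add_div, div_le_one hq0]; exact hvq'
  rw [measureReal_union]
  · have h1 := gauss_Ioo_approx (c := v / q - e) (d := v / q) (w := v/q) (by linarith) (by linarith) 
      (by linarith [show 0 < 1 / (q:ℝ) by positivity]) ⟨by linarith, le_rfl⟩
    have h2 := gauss_Ioo_approx (c := 1 - v / q) (d := 1 - v / q + e) (w := 1 - v/q) (by linarith [show 0 < 1 / (q:ℝ) by positivity]) (by linarith) 
      (by linarith) ⟨le_rfl, by linarith⟩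
    have h3 : (hd (v / q) + hd (1 - v / q)) * (1 / (1 + (x:ℝ) / q)) / (q:ℝ) ^ 2 = hd (v/q) * e + hd (1 - v/q) * e := by
      rw [he]; field_simp
    rw [h3]
    rw [show (v:ℝ) / q - (v/q - e) = e by ring] at h1
    rw [show 1 - (v:ℝ) / q + e - (1 - v/q) = e by ring] at h2
    have h4 : e ^ 2 ≤ 1 / (q:ℝ)^4 := by
      calc e^2 ≤ (1 / (q:ℝ)^2)^2 := by gcongr
        _ = _ := by rw [div_pow, one_pow, ← pow_mul]
    rw [abs_le] at *
    have : 4 / (q:ℝ)^4 = 4 * (1 / (q:ℝ)^4) := by ring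
    constructor <;> linarith [h1.1, h1.2, h2.1, h2.2]
  · rw [Set.disjoint_left]
    rintro α ⟨⟨h1, h2⟩, -⟩ ⟨⟨h3, h4⟩, -⟩
    rcases le_or_gt (2 * v) q with h | h
    · have h' : 2 * (v:ℝ) ≤ q := by exact_mod_cast h
      have : 2 * (v / q : ℝ) ≤ 1 := by rw [← mul_div_assoc, div_le_one hq0]; exact h'
      linarith
    · have h' : (q:ℝ) + 1 ≤ 2 * v := by exact_mod_cast h
      have : 1 + 1 / (q:ℝ) ≤ 2 * (v / q) := by 
        rw [← mul_div_assoc, le_div_iff₀ hq0]; field_simp; exact h'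
      have : 2 * e ≤ 1 / q := by
        rw [he, mul_one_div, div_le_div_iff₀ (by positivity) hq0]; nlinarith
      linarith
  · exact measurableSet_Ioo.inter meas_irr

lemma wt_bd (q x : ℕ) (hq : 0 < q) : 0 ≤ wt q x ∧ wt q x ≤ 4 / (q:ℝ)^2 := by
  obtain ⟨h1, h2⟩ := inv_unit q x hq
  have h3 := Hs_nonneg (v := (invm q x : ℝ) / q) (by assumption) (by assumption)
  have h4 := Hs_le (v := (invm q x : ℝ) / q) (by assumption) (by assumption)
  unfold wt
  have h5 : 1 / (1 + (x:ℝ) / q) ≤ 1 := by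
    rw [div_le_one (by positivity)]; linarith [show 0 ≤ (x:ℝ)/q by positivity]
  have h6 : 0 ≤ 1 / (1 + (x:ℝ) / q) := by positivity
  constructor
  · positivity
  · gcongr; nlinarith

lemma SS_gauss_le (x q : ℕ) (hx : 1 ≤ x) (hxq : x < q) (hc : x.Coprime q) : 
    gaussMeasure.real (SS x q) ≤ 8 / (q:ℝ)^2 := by
  have h := (abs_le.1 (SS_gauss x q hx hxq hc)).2
  have h2 := (wt_bd q x (by omega)).2
  have hq : (1:ℝ) ≤ q := by exact_mod_cast (by omega : 1 ≤ q)
  have : 4 / (q:ℝ)^4 ≤ 4 / (q:ℝ)^2 := by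
    gcongr; norm_num
  have h8 : 8 / (q:ℝ)^2 = 4 / (q:ℝ)^2 + 4 / (q:ℝ)^2 := by ring
  linarith


lemma nIndex_spec {α R : ℝ} (h : α ∈ IU) (hR : 1 ≤ R) : 
    ∃ m, nIndex α R = m + 1 ∧ (qden (pq α) m : ℝ) ≤ R ∧ R < (qden (pq α) (m+1) : ℝ) := by
  have hne : {n : ℕ | R < (qden (pq α) n : ℝ)}.Nonempty := by
    obtain ⟨n, hn⟩ := exists_nat_gt R
    refine ⟨n, hn.trans_le ?_⟩
    exact_mod_cast qden_ge (pq_pos h) n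
  have h1 : R < (qden (pq α) (nIndex α R) : ℝ) := Nat.sInf_mem hne
  have h0 : nIndex α R ≠ 0 := by
    intro h0
    rw [h0] at h1
    simp [qden] at h1
    linarith
  obtain ⟨m, hm⟩ := Nat.exists_eq_succ_of_ne_zero h0
  refine ⟨m, hm, ?_, by rw [hm] at h1; exact h1⟩
  by_contra hlt
  push Not at hlt
  have : nIndex α R ≤ m := Nat.sInf_le hlt
  omega

lemma nIndex_unique {α R : ℝ} (h : α ∈ IU) (hR : 1 ≤ R) {m : ℕ} (h1 : (qden (pq α) m : ℝ) ≤ R) 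
    (h2 : R < (qden (pq α) (m+1) : ℝ)) : nIndex α R = m + 1 := by
  obtain ⟨k, hk, hk1, hk2⟩ := nIndex_spec h hR
  have hm := qden_mono (pq_pos h)
  rw [hk]
  rcases lt_trichotomy k m with hlt | heq | hgt
  · have : qden (pq α) (k+1) ≤ qden (pq α) m := hm hlt
    have : (qden (pq α) (k+1) : ℝ) ≤ qden (pq α) m := by exact_mod_cast this
    linarith
  · rw [heq]
  · have : qden (pq α) (m+1) ≤ qden (pq α) k := hm hgt
    have : (qden (pq α) (m+1) : ℝ) ≤ qden (pq α) k := by exact_mod_cast this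
    linarith

def EE (a b R : ℝ) (J : Set ℝ) : Set ℝ := {α | α ∈ IU ∧ a < (qden (pq α) (nIndex α R) : ℝ) / R ∧ 
  (qden (pq α) (nIndex α R) : ℝ) / R < b ∧ 
  (qden (pq α) (nIndex α R - 1) : ℝ) / (qden (pq α) (nIndex α R) : ℝ) ∈ J}

lemma XX_props {a b R : ℝ} {J : Set ℝ} (ha : 1 ≤ a) (hR : 1 ≤ R) {q x : ℕ} (hq : q ∈ QQ a b R) (hx : x ∈ XX q R J) :
    1 ≤ x ∧ x < q ∧ x.Coprime q ∧ (x:ℝ) ≤ R ∧ R < q := by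
  rw [mem_QQ (by linarith)] at hq
  rw [mem_XX] at hx
  have hqR : R < q := by
    have := hq.1
    rw [lt_div_iff₀ (by linarith)] at this
    nlinarith
  refine ⟨?_, hx.1, hx.2.1, hx.2.2.1, hqR⟩
  rcases Nat.eq_zero_or_pos x with h0 | h0
  · subst h0
    have : q = 1 := by simpa using hx.2.1
    rw [this] at hqR
    norm_num at hqR
    linarith
  · exact h0

lemma SS_index {α R : ℝ} (hR : 1 ≤ R) {x q : ℕ} (h : α ∈ SS x q) (h1 : (x:ℝ) ≤ R) (h2 : R < q) : 
    qden (pq α) (nIndex α R) = q ∧ qden (pq α) (nIndex α R - 1) = x := by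
  obtain ⟨hα, n, hn1, hn2⟩ := h
  have := nIndex_unique hα hR (m := n) (by rw [hn2]; exact h1) (by rw [hn1]; exact h2)
  rw [this]
  exact ⟨hn1, hn2⟩

lemma EE_eq {a b R : ℝ} (J : Set ℝ) (ha : 1 ≤ a) (hR : 1 ≤ R) : 
    EE a b R J = ⋃ p ∈ (QQ a b R).sigma (fun q => XX q R J), SS p.2 p.1 := by
  ext α
  simp only [mem_iUnion, Finset.mem_sigma, exists_prop]
  constructor
  · rintro ⟨hα, h1, h2, h3⟩
    obtain ⟨m, hm, hm1, hm2⟩ := nIndex_spec hα hR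
    rw [hm] at h1 h2 h3
    refine ⟨⟨qden (pq α) (m+1), qden (pq α) m⟩, ⟨?_, ?_⟩, hα, m, rfl, rfl⟩
    · rw [mem_QQ (by linarith)]; exact ⟨h1, h2⟩
    · rw [mem_XX]
      refine ⟨?_, qden_coprime _ _, hm1, h3⟩
      have : (qden (pq α) m : ℝ) < qden (pq α) (m+1) := by linarith
      exact_mod_cast this
  · rintro ⟨⟨q, x⟩, ⟨hq, hx⟩, hS⟩
    obtain ⟨_, _, _, h4, h5⟩ := XX_props ha hR hq hx
    obtain ⟨h6, h7⟩ := SS_index hR hS h4 h5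
    rw [mem_QQ (by linarith)] at hq
    rw [mem_XX] at hx
    refine ⟨hS.1, ?_, ?_, ?_⟩
    · rw [h6]; exact hq.1
    · rw [h6]; exact hq.2
    · rw [h6, h7]; exact hx.2.2.2

lemma EE_meas {a b R : ℝ} (J : Set ℝ) (ha : 1 ≤ a) (hR : 1 ≤ R) : MeasurableSet (EE a b R J) := by
  rw [EE_eq J ha hR]
  apply Finset.measurableSet_biUnion
  rintro ⟨q, x⟩ hp
  rw [Finset.mem_sigma] at hp
  obtain ⟨h1, h2, h3, h4, h5⟩ := XX_props ha hR hp.1 hp.2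
  exact SS_meas x q h1 h2 h3

lemma EE_gauss {a b R : ℝ} (J : Set ℝ) (ha : 1 ≤ a) (hR : 1 ≤ R) : 
    gaussMeasure.real (EE a b R J) = ∑ q ∈ QQ a b R, ∑ x ∈ XX q R J, gaussMeasure.real (SS x q) := by
  have := gauss_prob
  rw [EE_eq J ha hR, measureReal_biUnion_finset, Finset.sum_sigma]
  · rintro ⟨q, x⟩ hp ⟨q', x'⟩ hp' hne
    simp only [Finset.coe_sigma, Set.mem_sigma_iff, Finset.mem_coe] at hp hp'
    obtain ⟨_, _, _, h4, h5⟩ := XX_props ha hR hp.1 hp.2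
    obtain ⟨_, _, _, h4', h5'⟩ := XX_props ha hR hp'.1 hp'.2
    rw [Function.onFun, Set.disjoint_left]
    intro α h h'
    apply hne
    obtain ⟨e1, e2⟩ := SS_index hR h h4 h5
    obtain ⟨e1', e2'⟩ := SS_index hR h' h4' h5'
    rw [e1] at e1'; rw [e2] at e2'
    simp only at e1' e2'
    rw [e1', e2']
  · rintro ⟨q, x⟩ hp
    rw [Finset.mem_sigma] at hp
    obtain ⟨h1, h2, h3, h4, h5⟩ := XX_props ha hR hp.1 hp.2
    exact SS_meas x q h1 h2 h3

lemma XX_card (q : ℕ) (R : ℝ) (J : Set ℝ) : (XX q R J).card ≤ q := by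
  have : XX q R J ⊆ Finset.range q := by
    intro x hx
    rw [mem_XX] at hx
    exact Finset.mem_range.2 hx.1
  simpa using Finset.card_le_card this

lemma EE_err {a b R : ℝ} (J : Set ℝ) (ha : 1 ≤ a) (hb : 1 < b) (hR : 1 ≤ R) : 
    |gaussMeasure.real (EE a b R J) - ∑ q ∈ QQ a b R, ∑ x ∈ XX q R J, wt q x| ≤ 12 * b / R := by
  rw [EE_gauss J ha hR, ← Finset.sum_sub_distrib]
  have hR0 : 0 < R := by linarith
  calc _ ≤ ∑ q ∈ QQ a b R, |∑ x ∈ XX q R J, gaussMeasure.real (SS x q) - ∑ x ∈ XX q R J, wt q x| := Finset.abs_sum_le_sum_abs _ _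
    _ ≤ ∑ q ∈ QQ a b R, 4 / R^2 := by
      apply Finset.sum_le_sum
      intro q hq
      rw [← Finset.sum_sub_distrib]
      have hqR : R < q := by
        rw [mem_QQ hR0] at hq
        have := hq.1
        rw [lt_div_iff₀ (by linarith)] at this
        nlinarith
      have hq0 : (0:ℝ) < q := by linarith
      calc _ ≤ ∑ x ∈ XX q R J, |gaussMeasure.real (SS x q) - wt q x| := Finset.abs_sum_le_sum_abs _ _
        _ ≤ ∑ x ∈ XX q R J, 4 / (q:ℝ)^4 := by
          apply Finset.sum_le_sum
          intro x hx
          obtain ⟨h1, h2, h3, h4, h5⟩ := XX_props ha hR hq hx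
          exact SS_gauss x q h1 h2 h3
        _ ≤ q * (4 / (q:ℝ)^4) := by
          rw [Finset.sum_const, nsmul_eq_mul]
          gcongr
          exact XX_card q R J
        _ = 4 / (q:ℝ)^3 := by field_simp
        _ ≤ 4 / R^3 := by gcongr
        _ ≤ 4 / R^2 := by gcongr <;> norm_num [hR]
    _ = (QQ a b R).card * (4 / R^2) := by rw [Finset.sum_const, nsmul_eq_mul]
    _ ≤ (3 * b * R) * (4 / R^2) := by
      gcongr
      exact QQ_card a b R hb hR
    _ = _ := by field_simp; ring

lemma EE_lim (a b : ℝ) (ha : 1 < a) (hab : a < b) (J : Set ℝ) (l r : ℝ) (hl : 0 ≤ l) (hlr : l ≤ r) (hr : r ≤ 1)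
    (hJ1 : ∀ u ∈ Ioo (0:ℝ) 1, l < u → u < r → u ∈ J) (hJ2 : ∀ u ∈ J, l ≤ u ∧ u ≤ r) : 
    Tendsto (fun R => gaussMeasure.real (EE a b R J)) atTop (𝓝 (kap * ∫ y in a..b, Bf l r y)) := by
  have h1 := main_sum a b ha hab J l r hl hlr hr hJ1 hJ2
  have h2 : Tendsto (fun R : ℝ => 12 * b / R) atTop (𝓝 0) := tendsto_const_nhds.div_atTop tendsto_id
  have h3 : Tendsto (fun R => gaussMeasure.real (EE a b R J) - ∑ q ∈ QQ a b R, ∑ x ∈ XX q R J, wt q x) atTop (𝓝 0) := by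
    apply squeeze_zero_norm' _ h2
    filter_upwards [eventually_ge_atTop 1] with R hR
    exact EE_err J ha.le (by linarith) hR
  simpa using h3.add h1

/-- the trivial upper bound -/
lemma EE_low {a R : ℝ} (ha : 1 ≤ a) (ha2 : a ≤ 2) (hR : 1 ≤ R) (J : Set ℝ) : 
    gaussMeasure.real (EE 1 a R J) ≤ 8 * (a - 1) + 8 / R := by
  have hR0 : 0 < R := by linarith
  rw [EE_gauss J le_rfl hR]
  calc _ ≤ ∑ q ∈ QQ 1 a R, 8 / R := by
        apply Finset.sum_le_sum
        intro q hq
        have hqR : R < q := by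
          rw [mem_QQ hR0] at hq
          have := hq.1
          rw [lt_div_iff₀ (by linarith)] at this
          nlinarith
        have hq0 : (0:ℝ) < q := by linarith
        calc _ ≤ ∑ x ∈ XX q R J, 8 / (q:ℝ)^2 := by
              apply Finset.sum_le_sum
              intro x hx
              obtain ⟨h1, h2, h3, h4, h5⟩ := XX_props le_rfl hR hq hx
              exact SS_gauss_le x q h1 h2 h3
          _ ≤ q * (8 / (q:ℝ)^2) := by
            rw [Finset.sum_const, nsmul_eq_mul]
            gcongr
            exact XX_card q R J
          _ = 8 / (q:ℝ) := by field_simp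
          _ ≤ 8 / R := by gcongr
    _ = (QQ 1 a R).card * (8 / R) := by rw [Finset.sum_const, nsmul_eq_mul]
    _ ≤ ((a - 1) * R + 1) * (8 / R) := by
      gcongr
      have : QQ 1 a R ⊆ Finset.Ioc ⌊R⌋₊ ⌊a * R⌋₊ := by
        intro q hq
        rw [mem_QQ hR0, lt_div_iff₀ hR0, div_lt_iff₀ hR0] at hq
        rw [Finset.mem_Ioc, Nat.floor_lt hR0.le, Nat.le_floor_iff (by positivity)]
        constructor <;> linarith [hq.1, hq.2]
      have h := Finset.card_le_card this
      rw [Nat.card_Ioc] at h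
      have h1 : ((QQ 1 a R).card : ℝ) ≤ ((⌊a * R⌋₊ - ⌊R⌋₊ : ℕ) : ℝ) := by exact_mod_cast h
      rw [Nat.cast_sub (Nat.floor_le_floor (by nlinarith))] at h1
      have h2 := Nat.floor_le (show 0 ≤ a * R by positivity)
      have h3 := Nat.lt_floor_add_one R
      linarith
    _ = _ := by field_simp


lemma gaussMap_meas : Measurable gaussMap := by
  unfold gaussMap
  exact (measurable_const.div measurable_id).fract

lemma pq_meas (n : ℕ) : Measurable (fun α => pq α n) := by
  unfold pq
  exact (measurable_const.div (gaussMap_meas.iterate (n-1))).nat_floor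

lemma qden_meas (n : ℕ) : Measurable (fun α => qden (pq α) n) := by
  induction n using Nat.strong_induction_on with
  | _ n ih =>
    match n with
    | 0 => exact measurable_const
    | 1 => exact pq_meas 1
    | n + 2 => exact ((pq_meas (n+2)).mul (ih (n+1) (by omega))).add (ih n (by omega))

def TT (M : ℕ) (R : ℝ) : Set ℝ := {α | R < (qden (pq α) M : ℝ)}

lemma TT_lim (M : ℕ) : Tendsto (fun R : ℝ => gaussMeasure.real (TT M R)) atTop (𝓝 0) := by
  have := gauss_prob
  have h := tendsto_measure_iInter_atTop (μ := gaussMeasure) (s := TT M) ?_ ?_ ?_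
  · have h0 : ⋂ R, TT M R = ∅ := by
      ext α
      simp only [mem_iInter, mem_empty_iff_false, iff_false, not_forall]
      exact ⟨qden (pq α) M, by simp [TT]⟩
    rw [h0, measure_empty] at h
    have := (ENNReal.tendsto_toReal ENNReal.zero_ne_top).comp h
    rw [ENNReal.toReal_zero] at this
    exact this
  · intro R
    apply MeasurableSet.nullMeasurableSet
    exact measurableSet_lt measurable_const (measurable_from_nat.comp (qden_meas M))
  · intro R R' h α hα
    exact lt_of_le_of_lt h hα
  · exact ⟨0, measure_ne_top _ _⟩

lemma rev_iter {b : ℕ → ℕ} (hb : ∀ n, 1 ≤ b n) (k m : ℕ) (hm : 1 ≤ m) : 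
    gaussMap^[k] ((qden b (m + k) : ℝ) / qden b (m + k + 1)) = (qden b m : ℝ) / qden b (m+1) := by
  induction k with
  | zero => rfl
  | succ k ih =>
    rw [Function.iterate_succ_apply, ← ih]
    congr 1
    have hlt := qden_lt hb (m + k - 1)
    rw [show m + k - 1 + 1 = m + k by omega, show m + k - 1 + 2 = m + k + 1 by omega] at hlt
    have h0 := qden_pos hb (m + k)
    have hlt' : (qden b (m+k) : ℝ) < qden b (m+k+1) := by exact_mod_cast hlt
    have h0' : (0:ℝ) < qden b (m+k) := by exact_mod_cast h0
    have h1' : (0:ℝ) < qden b (m+k+1) := by linarith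
    have : (qden b (m + (k+1)) : ℝ) / qden b (m + (k+1) + 1) = 1 / ((b (m+k+2) : ℕ) + (qden b (m + k) : ℝ) / qden b (m + k + 1)) := by
      rw [show m + (k+1) + 1 = (m + k) + 2 by ring, qden_rec, show m + (k+1) = m + k + 1 by ring]
      push_cast
      field_simp
    rw [this, gauss_of _ _ (by positivity) (by rw [div_lt_one h1']; exact hlt')]

lemma rev_pq {b : ℕ → ℕ} (hb : ∀ n, 1 ≤ b n) (k m : ℕ) (hm : 2 ≤ m) : 
    pq ((qden b (m + k) : ℝ) / qden b (m + k + 1)) (k+1) = b (m+1) := by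
  rw [pq_succ, rev_iter hb k m (by omega)]
  obtain ⟨m, rfl⟩ := Nat.exists_eq_add_of_le' hm
  have hlt := qden_lt hb m
  have h0 := qden_pos hb (m + 1)
  have hlt' : (qden b (m+1) : ℝ) < qden b (m+2) := by exact_mod_cast hlt
  have h0' : (0:ℝ) < qden b (m+1) := by exact_mod_cast h0
  have h1' : (0:ℝ) < qden b (m+2) := by linarith
  have : (qden b (m + 2) : ℝ) / qden b (m + 2 + 1) = 1 / ((b (m+3) : ℕ) + (qden b (m + 1) : ℝ) / qden b (m + 2)) := by
    rw [show m + 2 + 1 = (m + 1) + 2 by ring, qden_rec b (m+1)]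
    push_cast
    field_simp
  rw [this, floor_of _ _ (by positivity) (by rw [div_lt_one h1']; exact hlt')]

def JJ (N : ℕ) (c : Fin N → ℕ) : Set ℝ := {u | u ∈ Ioo (0:ℝ) 1 ∧ ∀ k : Fin N, pq u ((k:ℕ)+1) = c k}

def ER (N : ℕ) (c : Fin N → ℕ) (a b R : ℝ) : Set ℝ := {α : ℝ | α ∈ Ioo (0 : ℝ) 1 ∧ Irrational α ∧
              a < (qden (pq α) (nIndex α R) : ℝ) / R ∧
              (qden (pq α) (nIndex α R) : ℝ) / R < b ∧
              ∀ k : Fin N, pq α (nIndex α R - (k : ℕ)) = c k}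

lemma ER_agree (N : ℕ) (c : Fin N → ℕ) {a b R α : ℝ} (hR : 1 ≤ R) (hT : α ∉ TT (N+3) R) : 
    α ∈ ER N c a b R ↔ α ∈ EE a b R (JJ N c) := by
  have key : ∀ h : α ∈ IU, (∀ k : Fin N, pq α (nIndex α R - (k : ℕ)) = c k) ↔ 
    (qden (pq α) (nIndex α R - 1) : ℝ) / (qden (pq α) (nIndex α R) : ℝ) ∈ JJ N c := by
    intro h
    obtain ⟨m, hm, h1, h2⟩ := nIndex_spec h hR
    have hmN : N + 3 ≤ m := by
      by_contra hlt
      push Not at hlt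
      apply hT
      have : qden (pq α) (m+1) ≤ qden (pq α) (N+3) := qden_mono (pq_pos h) (by omega)
      have : (qden (pq α) (m+1) : ℝ) ≤ qden (pq α) (N+3) := by exact_mod_cast this
      exact h2.trans_le this
    rw [hm, Nat.add_sub_cancel]
    have h0 := qden_pos (pq_pos h) m
    have h0' : (0:ℝ) < qden (pq α) m := by exact_mod_cast h0
    have hI : (qden (pq α) m : ℝ) / (qden (pq α) (m+1) : ℝ) ∈ Ioo (0:ℝ) 1 := by
      constructor
      · apply div_pos h0'; linarith
      · rw [div_lt_one (by linarith)]; linarith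
    have hd : ∀ k : Fin N, pq ((qden (pq α) m : ℝ) / (qden (pq α) (m+1) : ℝ)) (k+1) = pq α (m + 1 - (k : ℕ)) := by
      intro k
      have := k.2
      have h3 := rev_pq (pq_pos h) k (m - k) (by omega)
      rw [show m - (k:ℕ) + k = m by omega, show m - (k:ℕ) + 1 = m + 1 - k by omega] at h3
      exact h3
    constructor
    · intro hk
      exact ⟨hI, fun k => by rw [hd k, hk k]⟩
    · intro hk k
      rw [← hd k]; exact hk.2 k
  constructor
  · rintro ⟨h1, h2, h3, h4, h5⟩
    exact ⟨⟨h1, h2⟩, h3, h4, (key ⟨h1, h2⟩).1 h5⟩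
  · rintro ⟨h1, h3, h4, h5⟩
    exact ⟨h1.1, h1.2, h3, h4, (key h1).2 h5⟩

lemma ER_lim (N : ℕ) (c : Fin N → ℕ) (a b L : ℝ) 
    (h : Tendsto (fun R => gaussMeasure.real (EE a b R (JJ N c))) atTop (𝓝 L)) :
    Tendsto (fun R => gaussMeasure (ER N c a b R)) atTop (𝓝 (ENNReal.ofReal L)) := by
  have := gauss_prob
  have hreal : Tendsto (fun R => gaussMeasure.real (ER N c a b R)) atTop (𝓝 L) := by
    have hT := TT_lim (N+3)
    have h1 := h.sub hT
    have h2 := h.add hT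
    rw [sub_zero] at h1
    rw [add_zero] at h2
    refine tendsto_of_tendsto_of_tendsto_of_le_of_le' h1 h2 ?_ ?_
    · filter_upwards [eventually_ge_atTop 1] with R hR
      have : EE a b R (JJ N c) ⊆ ER N c a b R ∪ TT (N+3) R := by
        intro α hα
        by_cases hT : α ∈ TT (N+3) R
        · exact Or.inr hT
        · exact Or.inl ((ER_agree N c hR hT).2 hα)
      have h3 := (measureReal_mono (μ := gaussMeasure) this).trans (measureReal_union_le _ _)
      linarith
    · filter_upwards [eventually_ge_atTop 1] with R hR
      have : ER N c a b R ⊆ EE a b R (JJ N c) ∪ TT (N+3) R := by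
        intro α hα
        by_cases hT : α ∈ TT (N+3) R
        · exact Or.inr hT
        · exact Or.inl ((ER_agree N c hR hT).1 hα)
      exact (measureReal_mono (μ := gaussMeasure) this).trans (measureReal_union_le _ _)
  have h4 := ENNReal.tendsto_ofReal hreal
  refine h4.congr fun R => ?_
  rw [Measure.real, ENNReal.ofReal_toReal (measure_ne_top _ _)]


lemma gauss_le_vol (s : Set ℝ) (hs : MeasurableSet s) : gaussMeasure s ≤ ENNReal.ofReal 2 * volume s := by
  unfold gaussMeasure
  rw [withDensity_apply _ hs]
  calc _ ≤ ∫⁻ x in s, ENNReal.ofReal 2 ∂(volume.restrict (Ioo (0:ℝ) 1)) := by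
        rw [Measure.restrict_restrict hs]
        apply setLIntegral_mono' (hs.inter measurableSet_Ioo)
        intro x hx
        apply ENNReal.ofReal_le_ofReal
        exact hd_le hx.2.1.le
    _ = ENNReal.ofReal 2 * volume.restrict (Ioo (0:ℝ) 1) s := by
      rw [setLIntegral_const]
    _ ≤ _ := by gcongr; exact Measure.restrict_le_self

def UT (b R : ℝ) : Set ℝ := {α | α ∈ IU ∧ b ≤ (qden (pq α) (nIndex α R) : ℝ) / R}

lemma approx_conv {α : ℝ} (h : α ∈ IU) (n : ℕ) : 
    |α - (pnum (pq α) n : ℝ) / qden (pq α) n| < 1 / (qden (pq α) n * qden (pq α) (n+1)) := by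
  have h1 := cf_id h n
  have h2 := cf_det (pq α) n
  have h0 : (0:ℝ) < qden (pq α) n := by exact_mod_cast qden_pos (pq_pos h) n
  have h0' : (0:ℝ) < qden (pq α) (n+1) := by exact_mod_cast qden_pos (pq_pos h) (n+1)
  have ht := (iter_IU h (n+1)).1
  have h2' : (pnum (pq α) (n+1) : ℝ) * qden (pq α) n - pnum (pq α) n * qden (pq α) (n+1) = (-1)^n := by exact_mod_cast h2
  generalize gaussMap^[n+1] α = t at *
  generalize (qden (pq α) n : ℝ) = x at *
  generalize (qden (pq α) (n+1) : ℝ) = q at *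
  generalize (pnum (pq α) n : ℝ) = p' at *
  generalize (pnum (pq α) (n+1) : ℝ) = p at *
  have hxt : 0 < x * t := mul_pos h0 ht.1
  have e : (α - p' / x) = (-1)^n * (1 / (x * (q + x * t))) := by
    have : x * (q + x * t) ≠ 0 := by positivity
    rw [← h2']
    field_simp
    linear_combination x * h1
  rw [e, abs_mul, abs_pow, abs_neg, abs_one, one_pow, one_mul, abs_of_pos (by positivity)]
  apply one_div_lt_one_div_of_lt (by positivity)
  nlinarith

lemma UT_bound {b R : ℝ} (hb : 1 ≤ b) (hR : 1 ≤ R) : gaussMeasure.real (UT b R) ≤ 8 / b := by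
  have := gauss_prob
  have hR0 : 0 < R := by linarith
  have hsub : UT b R ⊆ ⋃ x ∈ Finset.Icc 1 ⌊R⌋₊, ⋃ p ∈ Finset.range (x+1), 
      Ioo ((p:ℝ)/x - 1 / (x * (b * R))) ((p:ℝ)/x + 1 / (x * (b * R))) := by
    rintro α ⟨hα, h⟩
    obtain ⟨m, hm, h1, h2⟩ := nIndex_spec hα hR
    rw [hm, le_div_iff₀ hR0] at h
    have hx0 := qden_pos (pq_pos hα) m
    have hx0' : (0:ℝ) < qden (pq α) m := by exact_mod_cast hx0
    simp only [mem_iUnion, exists_prop]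
    refine ⟨qden (pq α) m, ?_, pnum (pq α) m, ?_, ?_⟩
    · rw [Finset.mem_Icc, Nat.le_floor_iff hR0.le]; exact ⟨hx0, h1⟩
    · rw [Finset.mem_range]; have := pnum_le (pq_pos hα) m; omega
    · have h3 := approx_conv hα m
      have h4 : 1 / ((qden (pq α) m : ℝ) * qden (pq α) (m+1)) ≤ 1 / ((qden (pq α) m : ℝ) * (b * R)) := by
        gcongr
      rw [abs_lt] at h3
      constructor <;> linarith [h3.1, h3.2]
  have hI : ∀ x ∈ Finset.Icc 1 ⌊R⌋₊, ∀ p : ℕ, gaussMeasure.real (Ioo ((p:ℝ)/x - 1 / (x * (b * R))) ((p:ℝ)/x + 1 / (x * (b * R)))) ≤ 4 / (x * (b * R)) := by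
    intro x hx p
    rw [Finset.mem_Icc] at hx
    have hx0 : (0:ℝ) < x := by exact_mod_cast hx.1
    have h := gauss_le_vol _ (measurableSet_Ioo (a := (p:ℝ)/x - 1 / (x * (b * R))) (b := (p:ℝ)/x + 1 / (x * (b * R))))
    rw [Real.volume_Ioo, ← ENNReal.ofReal_mul (by norm_num)] at h
    have h2 := ENNReal.toReal_mono ENNReal.ofReal_ne_top h
    have hp : 0 ≤ 1 / ((x:ℝ) * (b * R)) := by positivity
    rw [ENNReal.toReal_ofReal (by linarith)] at h2
    refine h2.trans (le_of_eq ?_)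
    ring
  calc gaussMeasure.real (UT b R) ≤ _ := measureReal_mono hsub (measure_ne_top _ _)
    _ ≤ ∑ x ∈ Finset.Icc 1 ⌊R⌋₊, gaussMeasure.real (⋃ p ∈ Finset.range (x+1), 
      Ioo ((p:ℝ)/x - 1 / (x * (b * R))) ((p:ℝ)/x + 1 / (x * (b * R)))) := measureReal_biUnion_finset_le _ _
    _ ≤ ∑ x ∈ Finset.Icc 1 ⌊R⌋₊, ∑ p ∈ Finset.range (x+1), 4 / (x * (b * R)) := by
      apply Finset.sum_le_sum
      intro x hx
      refine (measureReal_biUnion_finset_le _ _).trans ?_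
      apply Finset.sum_le_sum
      intro p hp
      exact hI x hx p
    _ ≤ ∑ x ∈ Finset.Icc 1 ⌊R⌋₊, 8 / (b * R) := by
      apply Finset.sum_le_sum
      intro x hx
      rw [Finset.mem_Icc] at hx
      have hx0 : (1:ℝ) ≤ x := by exact_mod_cast hx.1
      rw [Finset.sum_const, Finset.card_range, nsmul_eq_mul]
      push_cast
      rw [← mul_div_assoc, div_le_div_iff₀ (by positivity) (by positivity)]
      have : 0 < b * R := by positivity
      nlinarith
    _ = ⌊R⌋₊ * (8 / (b * R)) := by
      rw [Finset.sum_const, nsmul_eq_mul, Nat.card_Icc, Nat.add_sub_cancel]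
    _ ≤ R * (8 / (b * R)) := by
      gcongr
      exact Nat.floor_le hR0.le
    _ = 8 / b := by field_simp

/-- total mass lower bound -/
lemma EE_total {e b R : ℝ} (he : 0 < e) (he2 : e ≤ 1 / 2) (hb : 1 ≤ b) (hR : 1 ≤ R) : 
    1 - (16 * e + 8 / R) - 8 / b ≤ gaussMeasure.real (EE (1 + e) b R (Ioo 0 1)) := by
  have := gauss_prob
  have hR0 : 0 < R := by linarith
  have hsub : IU ⊆ EE (1 + e) b R (Ioo 0 1) ∪ (EE 1 (1 + 2 * e) R (Ioo 0 1) ∪ UT b R) := by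
    intro α hα
    obtain ⟨m, hm, h1, h2⟩ := nIndex_spec hα hR
    have h0 : (0:ℝ) < qden (pq α) m := by exact_mod_cast qden_pos (pq_pos hα) m
    have hI : (qden (pq α) (nIndex α R - 1) : ℝ) / (qden (pq α) (nIndex α R) : ℝ) ∈ Ioo (0:ℝ) 1 := by
      rw [hm, Nat.add_sub_cancel]
      constructor
      · apply div_pos h0; linarith
      · rw [div_lt_one (by linarith)]; linarith
    by_cases hb' : b ≤ (qden (pq α) (nIndex α R) : ℝ) / R
    · exact Or.inr (Or.inr ⟨hα, hb'⟩)
    · push Not at hb'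
      by_cases he' : 1 + e < (qden (pq α) (nIndex α R) : ℝ) / R
      · exact Or.inl ⟨hα, he', hb', hI⟩
      · push Not at he'
        refine Or.inr (Or.inl ⟨hα, ?_, by linarith, hI⟩)
        rw [hm, lt_div_iff₀ hR0]; linarith
  have h1 : gaussMeasure.real IU = 1 := by simp [Measure.real, gauss_IU_meas]
  have h2 := measureReal_mono (μ := gaussMeasure) hsub
  have h3 := measureReal_union_le (μ := gaussMeasure) (EE (1 + e) b R (Ioo 0 1)) (EE 1 (1 + 2 * e) R (Ioo 0 1) ∪ UT b R)
  have h4 := measureReal_union_le (μ := gaussMeasure) (EE 1 (1 + 2 * e) R (Ioo 0 1)) (UT b R)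
  have h5 := EE_low (a := 1 + 2 * e) (by linarith) (by linarith) hR (Ioo 0 1)
  have h6 := UT_bound hb hR
  linarith
 
lemma total_low {e b : ℝ} (he : 0 < e) (he2 : e ≤ 1 / 2) (hb : 2 ≤ b) : 
    1 - 16 * e - 8 / b ≤ kap * ∫ y in (1+e)..b, Bf 0 1 y := by
  have h := EE_lim (1 + e) b (by linarith) (by linarith) (Ioo 0 1) 0 1 le_rfl zero_le_one le_rfl 
    (fun u hu _ _ => hu) (fun u hu => ⟨hu.1.le, hu.2.le⟩)
  have h2 : Tendsto (fun R : ℝ => 1 - (16 * e + 8 / R) - 8 / b) atTop (𝓝 (1 - (16 * e + 0) - 8 / b)) :=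
    ((tendsto_const_nhds.sub (tendsto_const_nhds.add (tendsto_const_nhds.div_atTop tendsto_id))).sub tendsto_const_nhds)
  rw [add_zero] at h2
  apply le_of_tendsto_of_tendsto h2 h
  filter_upwards [eventually_ge_atTop 1] with R hR
  exact EE_total he he2 (by linarith) hR

lemma total_high {e b : ℝ} (he : 0 < e) (hb : 1 + e < b) : 
    kap * ∫ y in (1+e)..b, Bf 0 1 y ≤ 1 := by
  have := gauss_prob
  have h := EE_lim (1 + e) b (by linarith) (by linarith) (Ioo 0 1) 0 1 le_rfl zero_le_one le_rfl 
    (fun u hu _ _ => hu) (fun u hu => ⟨hu.1.le, hu.2.le⟩)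
  exact le_of_tendsto' h fun R => measureReal_le_one


lemma digits_conn (N : ℕ) : ∀ (c : ℕ → ℕ), (∀ k, 0 < c k) → ∀ u w v : ℝ, 0 ≤ u → u ≤ w → w ≤ v → v < 1 → 
    (∀ k < N, pq u (k+1) = c k) → (∀ k < N, pq v (k+1) = c k) → ∀ k < N, pq w (k+1) = c k := by
  induction N with
  | zero => intro c _ u w v _ _ _ _ _ _ k hk; omega
  | succ N ih =>
    intro c hc u w v hu huw hwv hv hdu hdv
    have h0u := hdu 0 (by omega)
    have h0v := hdv 0 (by omega)
    have hc0 := hc 0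
    rw [pq_succ, Function.iterate_zero, id] at h0u h0v
    have hu0 : 0 < u := by
      rcases hu.eq_or_lt with h | h
      · rw [← h] at h0u; simp at h0u; omega
      · exact h
    have hw0 : 0 < w := by linarith
    have hv0 : 0 < v := by linarith
    have h1 : 1 / w ≤ 1 / u := one_div_le_one_div_of_le hu0 huw
    have h2 : 1 / v ≤ 1 / w := one_div_le_one_div_of_le hw0 hwv
    have h0w : ⌊1 / w⌋₊ = c 0 := by
      apply le_antisymm
      · rw [← h0u]; exact Nat.floor_le_floor h1
      · rw [← h0v]; exact Nat.floor_le_floor h2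
    have hg : ∀ z : ℝ, 0 < z → ⌊1 / z⌋₊ = c 0 → gaussMap z = 1 / z - c 0 := by
      intro z hz hzc
      unfold gaussMap
      rw [Int.fract, ← hzc, natCast_floor_eq_intCast_floor (by positivity)]
    have hgu := hg u hu0 h0u
    have hgw := hg w hw0 h0w
    have hgv := hg v hv0 h0v
    have hsh : ∀ z : ℝ, ∀ k, pq z (k+1+1) = pq (gaussMap z) (k+1) := by
      intro z k
      rw [pq_succ, pq_succ, Function.iterate_succ_apply]
    intro k hk
    rcases k with _ | k
    · rw [pq_succ]; exact h0w
    · rw [hsh]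
      refine ih (fun k => c (k+1)) (fun k => hc _) (gaussMap v) (gaussMap w) (gaussMap u) 
        (Int.fract_nonneg _) (by linarith) (by linarith) (Int.fract_lt_one _) ?_ ?_ k (by omega)
      · intro j hj; rw [← hsh]; exact hdv (j+1) (by omega)
      · intro j hj; rw [← hsh]; exact hdu (j+1) (by omega)

lemma JJ_interval (N : ℕ) (c : Fin N → ℕ) (hc : ∀ k, 0 < c k) : ∃ l r : ℝ, 0 ≤ l ∧ l ≤ r ∧ r ≤ 1 ∧ 
    (∀ u ∈ Ioo (0:ℝ) 1, l < u → u < r → u ∈ JJ N c) ∧ (∀ u ∈ JJ N c, l ≤ u ∧ u ≤ r) := by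
  rcases (JJ N c).eq_empty_or_nonempty with h | h
  · refine ⟨0, 0, le_rfl, le_rfl, zero_le_one, ?_, ?_⟩
    · intro u _ h1 h2; linarith
    · rw [h]; intro u hu; exact absurd hu (by simp)
  · have hb : BddBelow (JJ N c) := ⟨0, fun u hu => hu.1.1.le⟩
    have ha : BddAbove (JJ N c) := ⟨1, fun u hu => hu.1.2.le⟩
    refine ⟨sInf (JJ N c), sSup (JJ N c), le_csInf h fun u hu => hu.1.1.le, csInf_le_csSup h hb ha, 
      csSup_le h fun u hu => hu.1.2.le, ?_, fun u hu => ⟨csInf_le hb hu, le_csSup ha hu⟩⟩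
    intro w hw h1 h2
    obtain ⟨u, hu, huw⟩ := exists_lt_of_csInf_lt h h1
    obtain ⟨v, hv, hwv⟩ := exists_lt_of_lt_csSup h h2
    refine ⟨hw, ?_⟩
    have := digits_conn N (fun k => if hk : k < N then c ⟨k, hk⟩ else 1) ?_ u w v hu.1.1.le huw.le hwv.le hv.1.2 ?_ ?_
    · intro k
      have h3 := this k k.2
      simpa using h3
    · intro k
      by_cases hk : k < N
      · simp only [hk, dite_true]; exact hc _
      · simp [hk]
    · intro k hk
      simp only [hk, dite_true]; exact hu.2 ⟨k, hk⟩
    · intro k hk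
      simp only [hk, dite_true]; exact hv.2 ⟨k, hk⟩


def DD : Set (ℝ × ℝ) := {p | 1 < p.1 ∧ 0 < p.2 ∧ p.2 < 1 / p.1}

noncomputable def dens : ℝ × ℝ → ENNReal := DD.indicator fun p => ENNReal.ofReal (kap * (2 / p.1 * (1 / (1 + p.2))))

noncomputable def nuM : Measure (ℝ × ℝ) := (volume : Measure (ℝ × ℝ)).withDensity dens

lemma DD_meas : MeasurableSet DD := by
  apply (measurableSet_lt measurable_const measurable_fst).inter
  apply (measurableSet_lt measurable_const measurable_snd).inter
  exact measurableSet_lt measurable_snd (measurable_const.div measurable_fst)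

lemma dens_meas : Measurable dens := by
  apply Measurable.indicator _ DD_meas
  fun_prop

lemma inner_int (S : Set ℝ) (hS : MeasurableSet S) (l r : ℝ) (hl : 0 ≤ l) (hlr : l ≤ r) 
    (hJ1 : ∀ u ∈ Ioo (0:ℝ) 1, l < u → u < r → u ∈ S) (hJ2 : ∀ u ∈ S, u ∈ Ioo (0:ℝ) 1 → l ≤ u ∧ u ≤ r) (y : ℝ) (hy : 1 < y) : 
    ∫⁻ u in S, dens (y, u) = ENNReal.ofReal (kap * Bf l r y) := by
  have hy0 : 0 < y := by linarith
  have hs0 : 0 < 1 / y := by positivity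
  have hs1 : 1 / y < 1 := by rw [div_lt_one hy0]; exact hy
  have e1 : ∀ u, dens (y, u) = (Ioo 0 (1/y)).indicator (fun u => ENNReal.ofReal (kap * (2 / y * (1 / (1 + u))))) u := by
    intro u
    unfold dens
    by_cases hu : u ∈ Ioo 0 (1/y)
    · rw [indicator_of_mem hu, indicator_of_mem]
      exact ⟨hy, hu.1, hu.2⟩
    · rw [indicator_of_notMem hu, indicator_of_notMem]
      rintro ⟨h1, h2, h3⟩
      exact hu ⟨h2, h3⟩
  simp_rw [e1]
  rw [lintegral_indicator measurableSet_Ioo, Measure.restrict_restrict measurableSet_Ioo]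
  set l' := min l (1/y) with hl'
  set r' := min r (1/y) with hr'
  have hl0 : 0 ≤ l' := le_min hl hs0.le
  have hlr' : l' ≤ r' := min_le_min_right _ hlr
  have s1 : Ioo l' r' ⊆ Ioo 0 (1/y) ∩ S := by
    rintro u ⟨h1, h2⟩
    have h3 : u < 1 / y := h2.trans_le (min_le_right _ _)
    have h4 : u < r := h2.trans_le (min_le_left _ _)
    have h5 : l < u := by
      rcases min_lt_iff.1 h1 with h | h
      · exact h
      · linarith
    have h6 : 0 < u := by linarith
    exact ⟨⟨h6, h3⟩, hJ1 u ⟨h6, by linarith⟩ h5 h4⟩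
  have s2 : Ioo 0 (1/y) ∩ S ⊆ Icc l' r' := by
    rintro u ⟨⟨h1, h2⟩, h3⟩
    obtain ⟨h4, h5⟩ := hJ2 u h3 ⟨h1, by linarith⟩
    exact ⟨(min_le_left _ _).trans h4, le_min h5 h2.le⟩
  have e2 : (Ioo 0 (1/y) ∩ S : Set ℝ) =ᵐ[volume] Ioo l' r' := by
    apply EventuallyLE.antisymm
    · exact (s2.eventuallyLE).trans Ioo_ae_eq_Icc.symm.le
    · exact s1.eventuallyLE
  rw [setLIntegral_congr e2]
  have hcont : ContinuousOn (fun u : ℝ => kap * (2 / y * (1 / (1 + u)))) (Icc l' r') := by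
    apply ContinuousOn.mul continuousOn_const
    apply ContinuousOn.mul continuousOn_const
    apply ContinuousOn.div continuousOn_const (by fun_prop)
    intro u hu
    have := hu.1
    linarith
  have hk := kap_nonneg
  rw [← ofReal_integral_eq_lintegral_ofReal]
  · congr 1
    rw [← integral_Ioc_eq_integral_Ioo, ← intervalIntegral.integral_of_le hlr', 
      intervalIntegral.integral_const_mul, intervalIntegral.integral_const_mul, 
      ← Af_eq l r (1/y) hl (hl.trans hlr) hs0.le]
    unfold Bf
    ring
  · exact (hcont.integrableOn_Icc).mono_set Ioo_subset_Icc_self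
  · filter_upwards [ae_restrict_mem measurableSet_Ioo] with u hu
    have : 0 < 1 + u := by linarith [hu.1]
    have := Af_nonneg
    positivity

lemma nu_rect (S : Set ℝ) (hS : MeasurableSet S) (l r : ℝ) (hl : 0 ≤ l) (hlr : l ≤ r) 
    (hJ1 : ∀ u ∈ Ioo (0:ℝ) 1, l < u → u < r → u ∈ S) (hJ2 : ∀ u ∈ S, u ∈ Ioo (0:ℝ) 1 → l ≤ u ∧ u ≤ r) 
    (a b : ℝ) (ha : 1 ≤ a) (hab : a ≤ b) : 
    nuM (Ioo a b ×ˢ S) = ENNReal.ofReal (kap * ∫ y in a..b, Bf l r y) := by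
  unfold nuM
  rw [withDensity_apply _ (measurableSet_Ioo.prod hS), Measure.volume_eq_prod, 
    ← Measure.prod_restrict, lintegral_prod _ dens_meas.aemeasurable]
  have : ∫⁻ y in Ioo a b, ∫⁻ u in S, dens (y, u) = ∫⁻ y in Ioo a b, ENNReal.ofReal (kap * Bf l r y) := by
    apply setLIntegral_congr_fun measurableSet_Ioo
    intro y hy
    exact inner_int S hS l r hl hlr hJ1 hJ2 y (by linarith [hy.1])
  rw [this, ← ofReal_integral_eq_lintegral_ofReal]
  · rw [← integral_Ioc_eq_integral_Ioo, ← intervalIntegral.integral_of_le hab, 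
      intervalIntegral.integral_const_mul]
  · apply Integrable.const_mul
    have h1 : IntegrableOn (Bf l r) (Icc a b) := (Bf_anti l r a b hl hlr (by linarith)).integrableOn_isCompact isCompact_Icc
    exact h1.mono_set Ioo_subset_Icc_self
  · filter_upwards [ae_restrict_mem measurableSet_Ioo] with y hy
    exact mul_nonneg kap_nonneg (Bf_nonneg l r y hl hlr (by linarith [hy.1]))

lemma nu_compl : nuM DDᶜ = 0 := by
  unfold nuM
  rw [withDensity_apply _ DD_meas.compl]
  rw [setLIntegral_congr_fun (g := fun _ => 0) DD_meas.compl]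
  · simp
  · intro p hp
    exact indicator_of_notMem hp _

lemma nu_total : nuM univ = 1 := by
  have h1 : nuM univ = nuM (Ioi 1 ×ˢ univ) := by
    apply le_antisymm
    · calc nuM univ ≤ nuM ((Ioi 1 ×ˢ univ) ∪ DDᶜ) := by
            apply measure_mono
            rintro p -
            by_cases hp : p ∈ DD
            · exact Or.inl ⟨hp.1, trivial⟩
            · exact Or.inr hp
        _ ≤ nuM (Ioi 1 ×ˢ univ) + nuM DDᶜ := measure_union_le _ _
        _ = _ := by rw [nu_compl, add_zero]
    · exact measure_mono (subset_univ _)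
  have hmono : Monotone (fun n : ℕ => (Ioo (1 + 1 / ((n:ℝ) + 3)) ((n:ℝ) + 3) ×ˢ univ : Set (ℝ × ℝ))) := by
    intro m n hmn
    have : (m:ℝ) ≤ n := by exact_mod_cast hmn
    apply Set.prod_mono_left
    apply Ioo_subset_Ioo
    · gcongr
    · gcongr
  have hun : ⋃ n : ℕ, (Ioo (1 + 1 / ((n:ℝ) + 3)) ((n:ℝ) + 3) ×ˢ univ : Set (ℝ × ℝ)) = Ioi 1 ×ˢ univ := by
    ext ⟨y, u⟩
    simp only [mem_iUnion, mem_prod, mem_univ, and_true, mem_Ioo, mem_Ioi]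
    constructor
    · rintro ⟨n, h1, h2⟩
      have : 0 < 1 / ((n:ℝ) + 3) := by positivity
      linarith
    · intro hy
      obtain ⟨n, hn⟩ := exists_nat_gt (max y (1 / (y - 1)))
      have h1 : y < n := (le_max_left _ _).trans_lt hn
      have h2 : 1 / (y - 1) < n := (le_max_right _ _).trans_lt hn
      refine ⟨n, ?_, by linarith⟩
      rw [div_lt_iff₀ (by linarith)] at h2
      have : 1 / ((n:ℝ) + 3) < y - 1 := by
        rw [div_lt_iff₀ (by positivity)]; nlinarith
      linarith
  have hlim := tendsto_measure_iUnion_atTop (μ := nuM) hmono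
  rw [hun, ← h1] at hlim
  have hval : ∀ n : ℕ, nuM (Ioo (1 + 1 / ((n:ℝ) + 3)) ((n:ℝ) + 3) ×ˢ univ) = 
      ENNReal.ofReal (kap * ∫ y in (1 + 1 / ((n:ℝ) + 3))..((n:ℝ) + 3), Bf 0 1 y) := by
    intro n
    have h3 : 0 < 1 / ((n:ℝ) + 3) := by positivity
    have h4 : 1 / ((n:ℝ) + 3) ≤ 1 := by rw [div_le_one (by positivity)]; linarith [show (0:ℝ) ≤ n by positivity]
    exact nu_rect univ MeasurableSet.univ 0 1 le_rfl zero_le_one (fun _ _ _ _ => trivial) 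
      (fun u _ hu => ⟨hu.1.le, hu.2.le⟩) _ _ (by linarith) (by linarith [show (0:ℝ) ≤ n by positivity])
  have hone : Tendsto (fun n : ℕ => kap * ∫ y in (1 + 1 / ((n:ℝ) + 3))..((n:ℝ) + 3), Bf 0 1 y) atTop (𝓝 1) := by
    have ht : Tendsto (fun n : ℕ => 1 / ((n:ℝ) + 3)) atTop (𝓝 0) := 
      tendsto_const_nhds.div_atTop (tendsto_atTop_add_const_right _ _ tendsto_natCast_atTop_atTop)
    have hlow : Tendsto (fun n : ℕ => 1 - 24 * (1 / ((n:ℝ) + 3))) atTop (𝓝 1) := by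
      have := (ht.const_mul 24).const_sub 1
      simpa using this
    refine tendsto_of_tendsto_of_tendsto_of_le_of_le hlow tendsto_const_nhds ?_ ?_
    · intro n
      have h3 : 0 < 1 / ((n:ℝ) + 3) := by positivity
      have hn : (0:ℝ) ≤ n := by positivity
      have h4 : 1 / ((n:ℝ) + 3) ≤ 1 / 2 := by
        apply one_div_le_one_div_of_le <;> linarith
      have := total_low h3 h4 (b := n + 3) (by linarith)
      have h8 : 8 / ((n:ℝ) + 3) = 8 * (1 / ((n:ℝ) + 3)) := by ring
      simp only
      linarith
    · intro n
      have h3 : 0 < 1 / ((n:ℝ) + 3) := by positivity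
      have hn : (0:ℝ) ≤ n := by positivity
      have h4 : 1 / ((n:ℝ) + 3) ≤ 1 / 2 := by
        apply one_div_le_one_div_of_le <;> linarith
      exact total_high h3 (by linarith)
  have h5 := ENNReal.tendsto_ofReal hone
  rw [ENNReal.ofReal_one] at h5
  refine tendsto_nhds_unique (hlim.congr ?_) h5
  intro n
  exact hval n

noncomputable def phiM (N : ℕ) : ℝ × ℝ → ℝ × (Fin N → ℕ) := fun p => (p.1, fun k => pq p.2 ((k:ℕ)+1))

lemma phiM_meas (N : ℕ) : Measurable (phiM N) := by
  apply measurable_fst.prodMk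
  rw [measurable_pi_iff]
  intro k
  exact (pq_meas _).comp measurable_snd

/-- For every `N ≥ 0` there is a probability measure `P_N` on
`(1,∞) × ℕ₊^N` such that for all `1 < a < b` and positive integers `c₀, …, c_{N−1}`, the
Gauss measure of `{α ∈ (0,1) irrational : a < q_{n_R}(α)/R < b, a_{n_R−k}(α) = c_k, 0 ≤ k < N}`
tends to `P_N ((a,b) × {(c₀,…,c_{N−1})})` as `R → ∞`. -/
theorem statement0 (N : ℕ) :
    ∃ P : Measure (ℝ × (Fin N → ℕ)), IsProbabilityMeasure P ∧
      P {x : ℝ × (Fin N → ℕ) | ¬ (1 < x.1 ∧ ∀ k, 0 < x.2 k)} = 0 ∧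
      ∀ a b : ℝ, 1 < a → a < b → ∀ c : Fin N → ℕ, (∀ k, 0 < c k) →
        Filter.Tendsto
          (fun R : ℝ =>
            gaussMeasure {α : ℝ | α ∈ Ioo (0 : ℝ) 1 ∧ Irrational α ∧
              a < (qden (pq α) (nIndex α R) : ℝ) / R ∧
              (qden (pq α) (nIndex α R) : ℝ) / R < b ∧
              ∀ k : Fin N, pq α (nIndex α R - (k : ℕ)) = c k})
          Filter.atTop (nhds (P (Ioo a b ×ˢ ({c} : Set (Fin N → ℕ))))) := by
  refine ⟨nuM.map (phiM N), ?_, ?_, ?_⟩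
  · constructor
    rw [Measure.map_apply (phiM_meas N) MeasurableSet.univ, preimage_univ, nu_total]
  · have hmeas : MeasurableSet {x : ℝ × (Fin N → ℕ) | ¬ (1 < x.1 ∧ ∀ k, 0 < x.2 k)} := by
      apply MeasurableSet.compl
      apply (measurableSet_lt measurable_const measurable_fst).inter
      have : {x : ℝ × (Fin N → ℕ) | ∀ k, 0 < x.2 k} = ⋂ k, {x : ℝ × (Fin N → ℕ) | 0 < x.2 k} := by
        ext x; simp
      change MeasurableSet {x : ℝ × (Fin N → ℕ) | ∀ k, 0 < x.2 k}
      rw [this]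
      refine MeasurableSet.iInter fun k => ?_
      exact measurableSet_lt measurable_const ((measurable_pi_apply k).comp measurable_snd)
    rw [Measure.map_apply (phiM_meas N) hmeas]
    have hQ : nuM (univ ×ˢ ({α : ℝ | Irrational α})ᶜ) = 0 := by
      apply withDensity_absolutelyContinuous
      rw [Measure.volume_eq_prod, Measure.prod_prod]
      have : ({α : ℝ | Irrational α})ᶜ = range ((↑) : ℚ → ℝ) := by
        ext x; simp [Irrational]
      rw [this, (countable_range _).measure_zero, mul_zero]
    refine measure_mono_null ?_ (measure_union_null nu_compl hQ)
    intro p hp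
    by_cases hD : p ∈ DD
    · right
      refine ⟨trivial, fun hirr => hp ⟨hD.1, fun k => ?_⟩⟩
      have h1 : 1 / p.1 < 1 := by rw [div_lt_one (by linarith [hD.1])]; exact hD.1
      exact pq_pos (α := p.2) ⟨⟨hD.2.1, hD.2.2.trans h1⟩, hirr⟩ _
    · exact Or.inl hD
  · intro a b ha hab c hc
    obtain ⟨l, r, hl, hlr, hr, hJ1, hJ2⟩ := JJ_interval N c hc
    have hS : MeasurableSet {u : ℝ | ∀ k : Fin N, pq u ((k:ℕ)+1) = c k} := by
      have : {u : ℝ | ∀ k : Fin N, pq u ((k:ℕ)+1) = c k} = ⋂ k : Fin N, {u : ℝ | pq u ((k:ℕ)+1) = c k} := by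
        ext x; simp
      rw [this]
      exact MeasurableSet.iInter fun k => measurableSet_eq_fun (pq_meas _) measurable_const
    have hP : nuM.map (phiM N) (Ioo a b ×ˢ ({c} : Set (Fin N → ℕ))) = ENNReal.ofReal (kap * ∫ y in a..b, Bf l r y) := by
      rw [Measure.map_apply (phiM_meas N) (measurableSet_Ioo.prod (measurableSet_singleton c))]
      have : phiM N ⁻¹' (Ioo a b ×ˢ {c}) = Ioo a b ×ˢ {u : ℝ | ∀ k : Fin N, pq u ((k:ℕ)+1) = c k} := by
        ext p
        simp [phiM, funext_iff]
      rw [this]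
      exact nu_rect _ hS l r hl hlr (fun u hu h1 h2 => (hJ1 u hu h1 h2).2) (fun u hu hu' => hJ2 u ⟨hu', hu⟩) a b ha.le hab.le
    rw [hP]
    exact ER_lim N c a b _ (EE_lim a b ha hab (JJ N c) l r hl hlr hr hJ1 hJ2)
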